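/- Let Ω, ω, u, λ, ū be as in the context, and let φ be the first Neumann eigenfunction of −(ωφ')' = μωφ on (0,1) (φ ∈ C¹([0,1]), φ'(0) = φ'(1) = 0, ωφ' differentiable on (0,1) with (ωφ')' = −μωφ there, μ the smallest positive eigenvalue), normalized so that φ(0) = lim_{x→0+} ū(x). Then |ū(x) − φ(x)| ≤ C ε · sup_Ω |u| for all x ∈ (0,1), with C depending only on n. -/

import Mathlib

open MeasureTheory Set Filter Topology RealInnerProductSpace

noncomputable section

/-- The point `(x, y) ∈ ℝ × ℝ^m ≅ ℝ^{m+1}`. -/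
def mkPt (m : ℕ) (x : ℝ) (y : EuclideanSpace ℝ (Fin m)) : EuclideanSpace ℝ (Fin (m+1)) :=
  (EuclideanSpace.equiv (Fin (m+1)) ℝ).symm (Fin.cons x ((EuclideanSpace.equiv (Fin m) ℝ) y))

/-- The cross-section `Ω(s) = {y : (s, y) ∈ Ω}`. -/
def cross {m : ℕ} (Ω : Set (EuclideanSpace ℝ (Fin (m+1)))) (s : ℝ) :
    Set (EuclideanSpace ℝ (Fin m)) := {y | mkPt m s y ∈ Ω}

/-- `ω(s)`: the (n-1)-dimensional volume of the cross-section `Ω(s)`. -/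
def ωvol {m : ℕ} (Ω : Set (EuclideanSpace ℝ (Fin (m+1)))) (s : ℝ) : ℝ :=
  (volume (cross Ω s)).toReal

/-- The Laplacian, as the sum of the pure second derivatives along the standard basis. -/
def lap {k : ℕ} (u : EuclideanSpace ℝ (Fin k) → ℝ) (p : EuclideanSpace ℝ (Fin k)) : ℝ :=
  ∑ i, fderiv ℝ (fun q => fderiv ℝ u q (EuclideanSpace.single i 1)) p (EuclideanSpace.single i 1)

/-- The cross-sectional average `ū(x)` of `u`. -/
def ubarFn {m : ℕ} (Ω : Set (EuclideanSpace ℝ (Fin (m+1))))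
    (u : EuclideanSpace ℝ (Fin (m+1)) → ℝ) (x : ℝ) : ℝ :=
  (∫ y in cross Ω x, u (mkPt m x y)) / ωvol Ω x

/-- `(φ, φd)` is a (nonzero, C¹ on [0,1]) solution of the Neumann problem
`-(ω φ')' = μ ω φ` on (0,1), with `φ'(0) = φ'(1) = 0`. -/
def NeumannSol (ω : ℝ → ℝ) (μ : ℝ) (φ φd : ℝ → ℝ) : Prop :=
  (∀ x ∈ Icc (0:ℝ) 1, HasDerivWithinAt φ (φd x) (Icc 0 1) x) ∧
  ContinuousOn φd (Icc 0 1) ∧ φd 0 = 0 ∧ φd 1 = 0 ∧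
  (∃ x ∈ Icc (0:ℝ) 1, φ x ≠ 0) ∧
  ∀ x ∈ Ioo (0:ℝ) 1, HasDerivAt (fun t => ω t * φd t) (-(μ * ω x * φ x)) x

/-- `μ` is a Neumann eigenvalue of `-(ω φ')' = μ ω φ`. -/
def IsNeumannEigenvalue (ω : ℝ → ℝ) (μ : ℝ) : Prop := ∃ φ φd, NeumannSol ω μ φ φd


/-!
Testing the weak form of the eigenvalue equation with functions of `x` alone shows that `ω` times
the cross-sectional average of `∂ₓu` at `x` is `-λ ∫₀ˣ ω ū`. The primitive `v` of that average would
be `ū` if averaging commuted with `d/dx`. By convexity, dilating one cross-section about one of its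
points carries it almost onto its neighbours, and the gradient bound, which degenerates at the ends
exactly where the shape of `Ω(x)` may change fast, gives `|ū - v| = O(ε)`. Hence `v` solves
`-(ω v')' = λ ω v` up to `O(ε)`.

Brunn–Minkowski makes `ω^(1/(n-1))` concave, so `ω` grows and decays at most like a cone and
`ω(t)⁻¹ ∫₀ᵗ ω f` is bounded by `sup |f|` even where `ω` degenerates. The initial value problem for
the equation is therefore stable from either end. Shooting from both ends and perturbing `λ` by
`O(ε)` closes the approximate solution `v` up to a genuine eigenfunction, so `μ ≤ λ + O(ε)`;
the Rayleigh quotient gives `λ ≤ μ`. Stability applied to `v - φ` then bounds it by `O(ε)`.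
-/

/-! ### Inequalities and integrals on an interval -/

lemma sub_le_sub_of_hasDerivAt_le {a b : ℝ} {z z' g g' : ℝ → ℝ} (hz : ContinuousOn z (Icc a b))
    (hg : ContinuousOn g (Icc a b)) (hz' : ∀ t ∈ Ioo a b, HasDerivAt z (z' t) t)
    (hg' : ∀ t ∈ Ioo a b, HasDerivAt g (g' t) t) (hle : ∀ t ∈ Ioo a b, z' t ≤ g' t)
    {t : ℝ} (ht : t ∈ Icc a b) : z t - z a ≤ g t - g a := by
  have hmono : MonotoneOn (fun t => g t - z t) (Icc a b) := by
    refine monotoneOn_of_hasDerivWithinAt_nonneg (f' := fun t => g' t - z' t) (convex_Icc a b)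
      (hg.sub hz) (fun x hx => ?_) (fun x hx => ?_) <;> rw [interior_Icc] at hx
    · exact ((hg' x hx).sub (hz' x hx)).hasDerivWithinAt
    · exact sub_nonneg.2 (hle x hx)
  have : g a - z a ≤ g t - z t := hmono ⟨le_rfl, ht.1.trans ht.2⟩ ht ht.1
  linarith

lemma abs_sub_le_of_abs_hasDerivAt_le {a b : ℝ} {z z' g g' : ℝ → ℝ}
    (hz : ContinuousOn z (Icc a b)) (hg : ContinuousOn g (Icc a b))
    (hz' : ∀ t ∈ Ioo a b, HasDerivAt z (z' t) t) (hg' : ∀ t ∈ Ioo a b, HasDerivAt g (g' t) t)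
    (hle : ∀ t ∈ Ioo a b, |z' t| ≤ g' t) {t : ℝ} (ht : t ∈ Icc a b) :
    |z t - z a| ≤ g t - g a := by
  refine abs_le.2 ⟨?_, sub_le_sub_of_hasDerivAt_le hz hg hz' hg'
    (fun t ht => (abs_le.1 (hle t ht)).2) ht⟩
  have := sub_le_sub_of_hasDerivAt_le (z := fun t => -z t) hz.neg hg
    (fun t ht => (hz' t ht).neg) hg' (fun t ht => neg_le.1 (abs_le.1 (hle t ht)).1) ht
  linarith

lemma abs_sub_le_mul_of_abs_hasDerivAt_le {a b B : ℝ} {z z' : ℝ → ℝ}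
    (hz : ContinuousOn z (Icc a b)) (hz' : ∀ t ∈ Ioo a b, HasDerivAt z (z' t) t)
    (hle : ∀ t ∈ Ioo a b, |z' t| ≤ B) {s t : ℝ} (hs : s ∈ Icc a b) (ht : t ∈ Icc a b)
    (hst : s ≤ t) : |z t - z s| ≤ B * (t - s) := by
  have hsub : Ioo s b ⊆ Ioo a b := Ioo_subset_Ioo_left hs.1
  have := abs_sub_le_of_abs_hasDerivAt_le (g := fun t => B * t) (g' := fun _ => B)
    (hz.mono (Icc_subset_Icc_left hs.1)) (by fun_prop) (fun t ht => hz' t (hsub ht))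
    (fun t _ => by simpa using (hasDerivAt_id t).const_mul B) (fun t ht => hle t (hsub ht))
    (t := t) ⟨hst, ht.2⟩
  linarith

/-- A Gronwall inequality with memory: `|z'(t)|` is controlled by the supremum of `|z|` over the
whole past, not just by `|z(t)|`. -/
lemma abs_le_of_abs_hasDerivAt_le_past {A B T : ℝ} (hA : 0 < A) (hB : 0 ≤ B) (hT : 0 ≤ T)
    {z z' : ℝ → ℝ} (hz : ContinuousOn z (Icc 0 T)) (hz' : ∀ t ∈ Ioo 0 T, HasDerivAt z (z' t) t)
    (hpast : ∀ t ∈ Ioo 0 T, ∀ S, (∀ s ∈ Ioo 0 t, |z s| ≤ S) → |z' t| ≤ A * S + B) :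
    ∀ t ∈ Icc 0 T, |z t| ≤ 2 * (|z 0| + B * T) * Real.exp (2 * A * T) := by
  -- `N` is the norm of `z` in the weighted sup norm that makes the memory term a contraction.
  obtain ⟨t₀, ht₀, hmax⟩ := isCompact_Icc.exists_isMaxOn (nonempty_Icc.2 hT)
    (f := fun t => Real.exp (-(2 * A * t)) * |z t|)
    ((by fun_prop : Continuous fun t => Real.exp (-(2 * A * t))).continuousOn.mul hz.abs)
  set N := Real.exp (-(2 * A * t₀)) * |z t₀|
  have hN0 : 0 ≤ N := by positivity
  have cancel (t x : ℝ) : Real.exp (-(2 * A * t)) * x * Real.exp (2 * A * t) = x := by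
    rw [mul_right_comm, ← Real.exp_add, neg_add_cancel, Real.exp_zero, one_mul]
  have hzN : ∀ t ∈ Icc 0 T, |z t| ≤ N * Real.exp (2 * A * t) := fun t ht => by
    rw [← cancel t |z t|]
    gcongr
    exact hmax ht
  have hincr : |z t₀ - z 0| ≤ (N / 2 * Real.exp (2 * A * t₀) + B * t₀)
      - (N / 2 * Real.exp (2 * A * 0) + B * 0) := by
    refine abs_sub_le_of_abs_hasDerivAt_le (g := fun t => N / 2 * Real.exp (2 * A * t) + B * t)
      (g' := fun t => A * (N * Real.exp (2 * A * t)) + B) hz (by fun_prop) hz' (fun t _ => ?_)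
      (fun t ht => hpast t ht _ fun s hs => ?_) ht₀
    · have := ((((hasDerivAt_id t).const_mul (2 * A)).exp).const_mul (N / 2)).fun_add
        ((hasDerivAt_id t).const_mul B)
      exact this.congr_deriv (by simp only [id]; ring)
    · refine (hzN s ⟨hs.1.le, (hs.2.trans ht.2).le⟩).trans ?_
      gcongr
      exact hs.2.le
  have hN_le : N ≤ 2 * (|z 0| + B * T) := by
    have hmaxval : N * Real.exp (2 * A * t₀) = |z t₀| := cancel t₀ _
    have hone : N ≤ N * Real.exp (2 * A * t₀) :=
      le_mul_of_one_le_right hN0 (Real.one_le_exp (by have := ht₀.1; positivity))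
    have htri : |z t₀| ≤ |z 0| + |z t₀ - z 0| := by simpa using abs_add_le (z 0) (z t₀ - z 0)
    have hBT : B * t₀ ≤ B * T := by gcongr; exact ht₀.2
    rw [mul_zero, Real.exp_zero] at hincr
    linarith
  intro t ht
  refine (hzN t ht).trans ?_
  gcongr
  exact ht.2

lemma intervalIntegrable_of_continuousOn_Ioo_of_abs_le {f : ℝ → ℝ} {a b C : ℝ} (hab : a ≤ b)
    (hf : ContinuousOn f (Ioo a b)) (hC : ∀ x ∈ Ioo a b, |f x| ≤ C) :
    IntervalIntegrable f volume a b := by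
  rw [intervalIntegrable_iff_integrableOn_Ioo_of_le hab]
  refine IntegrableOn.of_bound (C := C) (by simp) (hf.aestronglyMeasurable measurableSet_Ioo) ?_
  exact (ae_restrict_iff' measurableSet_Ioo).2 (Eventually.of_forall hC)

lemma intervalIntegrable_mono_Icc {f : ℝ → ℝ} {a b c d : ℝ}
    (hf : IntervalIntegrable f volume a b) (hc : c ∈ Icc a b) (hd : d ∈ Icc a b) :
    IntervalIntegrable f volume c d :=
  hf.mono_set (by rw [uIcc_of_le (hc.1.trans hc.2)]; exact uIcc_subset_Icc hc hd)

lemma abs_intervalIntegral_le_of_abs_le_Ioo {f : ℝ → ℝ} {B a b : ℝ} (hab : a ≤ b)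
    (h : ∀ s ∈ Ioo a b, |f s| ≤ B) : |∫ s in a..b, f s| ≤ B * (b - a) := by
  have := intervalIntegral.norm_integral_le_of_norm_le_const_ae (a := a) (b := b) (f := f)
    (C := B) ?_
  · rwa [abs_of_nonneg (sub_nonneg.2 hab)] at this
  · filter_upwards [Measure.ae_ne volume b] with x hx hxab
    rw [uIoc_of_le hab] at hxab
    exact h x ⟨hxab.1, hxab.2.lt_of_ne hx⟩

lemma hasDerivAt_intervalIntegral_of_continuousOn_Ioo {f : ℝ → ℝ} {a b c t : ℝ}
    (hf : ContinuousOn f (Ioo a b)) (hi : IntervalIntegrable f volume a b) (hc : c ∈ Icc a b)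
    (ht : t ∈ Ioo a b) : HasDerivAt (fun t => ∫ s in c..t, f s) (f t) t :=
  intervalIntegral.integral_hasDerivAt_right
    (intervalIntegrable_mono_Icc hi hc (Ioo_subset_Icc_self ht))
    (hf.stronglyMeasurableAtFilter isOpen_Ioo t ht) (hf.continuousAt (isOpen_Ioo.mem_nhds ht))

lemma continuousOn_intervalIntegral_Icc {f : ℝ → ℝ} {a b c : ℝ}
    (hi : IntervalIntegrable f volume a b) (hc : c ∈ Icc a b) :
    ContinuousOn (fun t => ∫ s in c..t, f s) (Icc a b) := by
  have hab := hc.1.trans hc.2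
  simpa only [uIcc_of_le hab] using
    intervalIntegral.continuousOn_primitive_interval' hi (uIcc_of_le hab ▸ hc)

lemma intervalIntegrable_mul_continuousOn {f g : ℝ → ℝ} {T : ℝ} (hT0 : 0 ≤ T)
    (hf : IntervalIntegrable f volume 0 T) (hg : ContinuousOn g (Icc 0 T)) :
    IntervalIntegrable (fun s => f s * g s) volume 0 T :=
  hf.mul_continuousOn (by rwa [uIcc_of_le hT0])

lemma one_sub_mem_Ioo {x : ℝ} (hx : x ∈ Ioo (0 : ℝ) 1) : 1 - x ∈ Ioo (0 : ℝ) 1 :=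
  ⟨by linarith [hx.2], by linarith [hx.1]⟩

lemma one_sub_mem_Icc {x : ℝ} (hx : x ∈ Icc (0 : ℝ) 1) : 1 - x ∈ Icc (0 : ℝ) 1 :=
  ⟨by linarith [hx.2], by linarith [hx.1]⟩

/-! ### Cone weights -/

/-- A positive continuous weight on `(0,1)` such that `x⁻ᵐ ω(x)` is nonincreasing and
`(1 - x)⁻ᵐ ω(x)` is nondecreasing. Cross-sectional volumes of convex sets in `ℝ^(m+1)` have this
property by comparison with the cones over a cross-section; it is all that the one-dimensional
problem needs to know about `ω`. -/
structure IsConeWeight (m : ℕ) (ω : ℝ → ℝ) : Prop where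
  continuousOn : ContinuousOn ω (Ioo 0 1)
  pos : ∀ x ∈ Ioo (0 : ℝ) 1, 0 < ω x
  mul_pow_le : ∀ s t, 0 < s → s ≤ t → t < 1 → ω t * s ^ m ≤ ω s * t ^ m
  mul_one_sub_pow_le : ∀ s t, 0 < s → s ≤ t → t < 1 → ω s * (1 - t) ^ m ≤ ω t * (1 - s) ^ m

/-- The best constant `K` with `ω s ≤ K * ω t` for `s ≤ t ≤ T` and every cone weight `ω`. -/
def coneConst (m : ℕ) (T : ℝ) : ℝ := ((1 - T) ^ m)⁻¹

lemma coneConst_pos {m : ℕ} {T : ℝ} (hT : T < 1) : 0 < coneConst m T :=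
  inv_pos.2 (pow_pos (sub_pos.2 hT) m)

lemma coneConst_half (m : ℕ) : coneConst m (1 / 2) = 2 ^ m := by
  rw [coneConst, ← inv_pow]
  norm_num

namespace IsConeWeight

variable {m : ℕ} {ω : ℝ → ℝ}

lemma reflect (h : IsConeWeight m ω) : IsConeWeight m (fun x => ω (1 - x)) where
  continuousOn := h.continuousOn.comp (by fun_prop) fun _ => one_sub_mem_Ioo
  pos x hx := h.pos _ (one_sub_mem_Ioo hx)
  mul_pow_le s t hs hst ht := by
    simpa using h.mul_one_sub_pow_le (1 - t) (1 - s) (by linarith) (by linarith) (by linarith)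
  mul_one_sub_pow_le s t hs hst ht := by
    simpa using h.mul_pow_le (1 - t) (1 - s) (by linarith) (by linarith) (by linarith)

lemma le_coneConst_mul (h : IsConeWeight m ω) {s t T : ℝ} (hs : 0 < s) (hst : s ≤ t) (htT : t ≤ T)
    (hT : T < 1) : ω s ≤ coneConst m T * ω t := by
  have hωs := h.pos s ⟨hs, by linarith⟩
  have hωt := h.pos t ⟨by linarith, by linarith⟩
  have : 0 ≤ 1 - T := by linarith
  rw [coneConst, inv_mul_eq_div, le_div_iff₀ (pow_pos (sub_pos.2 hT) m)]
  calc ω s * (1 - T) ^ m ≤ ω s * (1 - t) ^ m := by gcongr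
    _ ≤ ω t * (1 - s) ^ m := h.mul_one_sub_pow_le s t hs hst (by linarith)
    _ ≤ ω t := mul_le_of_le_one_right hωt.le (pow_le_one₀ (by linarith) (by linarith))

lemma le_two_pow_mul_half (h : IsConeWeight m ω) {x : ℝ} (hx : x ∈ Ioo (0 : ℝ) 1) :
    ω x ≤ 2 ^ m * ω (1 / 2) := by
  have hK := coneConst_half m
  rcases le_total x (1 / 2) with hx2 | hx2
  · exact hK ▸ h.le_coneConst_mul hx.1 hx2 le_rfl (by norm_num)
  · have := h.reflect.le_coneConst_mul (sub_pos.2 hx.2) (by linarith : 1 - x ≤ 1 / 2) le_rfl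
      (by norm_num)
    norm_num [hK] at this ⊢
    exact this

lemma two_mul_pow_mul_half_le (h : IsConeWeight m ω) {x : ℝ} (hx : x ∈ Ioc (0 : ℝ) (1 / 2)) :
    (2 * x) ^ m * ω (1 / 2) ≤ ω x := by
  have := h.mul_pow_le x (1 / 2) hx.1 hx.2 (by norm_num)
  calc (2 * x) ^ m * ω (1 / 2) = 2 ^ m * (ω (1 / 2) * x ^ m) := by ring
    _ ≤ 2 ^ m * (ω x * (1 / 2) ^ m) := by gcongr
    _ = ω x := by rw [mul_left_comm, ← mul_pow]; norm_num

lemma half_pos (h : IsConeWeight m ω) : 0 < ω (1 / 2) := h.pos _ (by norm_num)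

lemma abs_mul_le (h : IsConeWeight m ω) {f : ℝ → ℝ} {C x : ℝ} (hx : x ∈ Ioo (0 : ℝ) 1)
    (hC : |f x| ≤ C) : |ω x * f x| ≤ 2 ^ m * ω (1 / 2) * C := by
  rw [abs_mul, abs_of_pos (h.pos x hx)]
  have := h.half_pos
  gcongr
  exact h.le_two_pow_mul_half hx

lemma intervalIntegrable_mul_of_abs_le (h : IsConeWeight m ω) {f : ℝ → ℝ} {C T : ℝ} (hT0 : 0 ≤ T)
    (hT : T ≤ 1) (hf : ContinuousOn f (Ioo 0 T)) (hC : ∀ x ∈ Ioo 0 T, |f x| ≤ C) :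
    IntervalIntegrable (fun s => ω s * f s) volume 0 T :=
  have hsub : Ioo 0 T ⊆ Ioo 0 1 := Ioo_subset_Ioo_right hT
  intervalIntegrable_of_continuousOn_Ioo_of_abs_le hT0 ((h.continuousOn.mono hsub).mul hf)
    fun x hx => h.abs_mul_le (hsub hx) (hC x hx)

lemma intervalIntegrable_mul (h : IsConeWeight m ω) {f : ℝ → ℝ} {T : ℝ} (hT0 : 0 ≤ T)
    (hT : T ≤ 1) (hf : ContinuousOn f (Icc 0 T)) :
    IntervalIntegrable (fun s => ω s * f s) volume 0 T := by
  obtain ⟨C, hC⟩ := isCompact_Icc.exists_bound_of_continuousOn hf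
  exact h.intervalIntegrable_mul_of_abs_le hT0 hT (hf.mono Ioo_subset_Icc_self)
    fun x hx => hC x (Ioo_subset_Icc_self hx)

lemma abs_integral_mul_le (h : IsConeWeight m ω) {f : ℝ → ℝ} {C t : ℝ} (ht0 : 0 ≤ t) (ht : t ≤ 1)
    (hC0 : 0 ≤ C) (hC : ∀ x ∈ Ioo 0 t, |f x| ≤ C) :
    |∫ s in 0..t, ω s * f s| ≤ 2 ^ m * ω (1 / 2) * C := by
  have := h.half_pos
  refine (abs_intervalIntegral_le_of_abs_le_Ioo ht0 fun s hs =>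
    h.abs_mul_le ⟨hs.1, hs.2.trans_le ht⟩ (hC s hs)).trans ?_
  exact mul_le_of_le_one_right (by positivity) (by linarith)

end IsConeWeight

/-! ### The weighted primitive and flux solutions -/

/-- `ω(t)⁻¹ ∫₀ᵗ ω f`, so that `z' = -weightedPrimitive ω r` is the once integrated form of
`(ω z')' = -ω r` with no flux `ω z'` at `0`. -/
def weightedPrimitive (ω f : ℝ → ℝ) (t : ℝ) : ℝ := (∫ s in 0..t, ω s * f s) / ω t

@[simp]
lemma weightedPrimitive_zero (ω f : ℝ → ℝ) : weightedPrimitive ω f 0 = 0 := by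
  simp [weightedPrimitive]

lemma weightedPrimitive_const_mul (ω f : ℝ → ℝ) (c t : ℝ) :
    weightedPrimitive ω (fun s => c * f s) t = c * weightedPrimitive ω f t := by
  simp only [weightedPrimitive, mul_left_comm _ c, intervalIntegral.integral_const_mul,
    mul_div_assoc]

lemma weightedPrimitive_sub {ω f g : ℝ → ℝ} {t : ℝ}
    (hf : IntervalIntegrable (fun s => ω s * f s) volume 0 t)
    (hg : IntervalIntegrable (fun s => ω s * g s) volume 0 t) :
    weightedPrimitive ω (fun s => f s - g s) t
      = weightedPrimitive ω f t - weightedPrimitive ω g t := by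
  simp only [weightedPrimitive, mul_sub, intervalIntegral.integral_sub hf hg, sub_div]

lemma weightedPrimitive_reflect {ω f : ℝ → ℝ}
    (hf : IntervalIntegrable (fun s => ω s * f s) volume 0 1)
    (hmean : ∫ s in 0..1, ω s * f s = 0) {t : ℝ} (ht : t ∈ Icc (0 : ℝ) 1) :
    weightedPrimitive (fun x => ω (1 - x)) (fun x => f (1 - x)) t
      = -weightedPrimitive ω f (1 - t) := by
  have hsplit := intervalIntegral.integral_add_adjacent_intervals
    (intervalIntegrable_mono_Icc hf ⟨le_rfl, zero_le_one⟩ (one_sub_mem_Icc ht))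
    (intervalIntegrable_mono_Icc hf (one_sub_mem_Icc ht) ⟨zero_le_one, le_rfl⟩)
  rw [weightedPrimitive, weightedPrimitive, ← neg_div,
    intervalIntegral.integral_comp_sub_left (fun s => ω s * f s), sub_zero]
  congr 1
  linarith

section

variable {m : ℕ} {ω : ℝ → ℝ} {T : ℝ}

lemma IsConeWeight.mul_weightedPrimitive (h : IsConeWeight m ω) (f : ℝ → ℝ) {t : ℝ}
    (ht : t ∈ Ioo (0 : ℝ) 1) : ω t * weightedPrimitive ω f t = ∫ s in 0..t, ω s * f s :=
  mul_div_cancel₀ _ (h.pos t ht).ne'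

lemma IsConeWeight.abs_weightedPrimitive_le (h : IsConeWeight m ω) (hT : T < 1) {f : ℝ → ℝ}
    {D t : ℝ} (ht : t ∈ Icc 0 T) (hf : ∀ s ∈ Ioo 0 t, |f s| ≤ D) :
    |weightedPrimitive ω f t| ≤ coneConst m T * D * t := by
  rcases ht.1.eq_or_lt with rfl | ht0
  · simp
  have hωt := h.pos t ⟨ht0, ht.2.trans_lt hT⟩
  rw [weightedPrimitive, abs_div, abs_of_pos hωt, div_le_iff₀ hωt]
  have hint : |∫ s in 0..t, ω s * f s| ≤ coneConst m T * ω t * D * (t - 0) := by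
    refine abs_intervalIntegral_le_of_abs_le_Ioo ht0.le fun s hs => ?_
    have hωs := h.pos s ⟨hs.1, by linarith [hs.2, ht.2]⟩
    rw [abs_mul, abs_of_pos hωs]
    exact mul_le_mul (h.le_coneConst_mul hs.1 hs.2.le ht.2 hT) (hf s hs) (abs_nonneg _)
      (mul_pos (coneConst_pos hT) hωt).le
  linarith

lemma IsConeWeight.continuousOn_weightedPrimitive (h : IsConeWeight m ω) (hT : T < 1) {f : ℝ → ℝ}
    (hf : ContinuousOn f (Icc 0 T)) : ContinuousOn (weightedPrimitive ω f) (Icc 0 T) := by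
  intro t ht
  have hT0 := ht.1.trans ht.2
  rcases ht.1.eq_or_lt with rfl | ht0
  · obtain ⟨C, hC⟩ := isCompact_Icc.exists_bound_of_continuousOn hf
    rw [ContinuousWithinAt, weightedPrimitive_zero]
    refine squeeze_zero_norm' (a := fun t => coneConst m T * C * t) ?_ ?_
    · filter_upwards [self_mem_nhdsWithin] with t ht
      exact h.abs_weightedPrimitive_le hT ht
        fun s hs => hC s ⟨hs.1.le, hs.2.le.trans ht.2⟩
    · have : Continuous fun t => coneConst m T * C * t := by fun_prop
      simpa using (this.tendsto 0).mono_left nhdsWithin_le_nhds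
  · have ht1 : t ∈ Ioo (0 : ℝ) 1 := ⟨ht0, ht.2.trans_lt hT⟩
    exact ((continuousOn_intervalIntegral_Icc (h.intervalIntegrable_mul hT0 hT.le hf)
      ⟨le_rfl, hT0⟩) t ht).div (h.continuousOn.continuousAt
        (isOpen_Ioo.mem_nhds ht1)).continuousWithinAt (h.pos t ht1).ne'

/-- `z` is a continuous function on `[0,T]` satisfying `(ω z')' = -ω r` on `(0,T)` with zero flux
at `0`. The flux condition is built in by prescribing `ω z'` as an integral from `0`; no derivative
at the end points is needed. -/
structure IsFluxSolution (ω : ℝ → ℝ) (T : ℝ) (z r : ℝ → ℝ) : Prop where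
  continuousOn : ContinuousOn z (Icc 0 T)
  continuousOn_rhs : ContinuousOn r (Ioo 0 T)
  intervalIntegrable : IntervalIntegrable (fun s => ω s * r s) volume 0 T
  hasDerivAt : ∀ t ∈ Ioo 0 T, HasDerivAt z (-weightedPrimitive ω r t) t

namespace IsFluxSolution

variable {z r w q : ℝ → ℝ}

lemma integrable_Icc (hz : IsFluxSolution ω T z r) {a b : ℝ} (ha : a ∈ Icc 0 T)
    (hb : b ∈ Icc 0 T) : IntervalIntegrable (fun s => ω s * r s) volume a b :=
  intervalIntegrable_mono_Icc hz.intervalIntegrable ha hb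

lemma mono (hz : IsFluxSolution ω T z r) {T' : ℝ} (hT' : T' ∈ Icc 0 T) :
    IsFluxSolution ω T' z r where
  continuousOn := hz.continuousOn.mono (Icc_subset_Icc_right hT'.2)
  continuousOn_rhs := hz.continuousOn_rhs.mono (Ioo_subset_Ioo_right hT'.2)
  intervalIntegrable := hz.integrable_Icc ⟨le_rfl, hT'.1.trans hT'.2⟩ hT'
  hasDerivAt t ht := hz.hasDerivAt t ⟨ht.1, ht.2.trans_le hT'.2⟩

lemma sub (hz : IsFluxSolution ω T z r) (hw : IsFluxSolution ω T w q) :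
    IsFluxSolution ω T (fun t => z t - w t) (fun t => r t - q t) where
  continuousOn := hz.continuousOn.sub hw.continuousOn
  continuousOn_rhs := hz.continuousOn_rhs.sub hw.continuousOn_rhs
  intervalIntegrable := by
    simpa only [mul_sub] using hz.intervalIntegrable.sub hw.intervalIntegrable
  hasDerivAt t ht := by
    have h0 : (0 : ℝ) ∈ Icc 0 T := ⟨le_rfl, (ht.1.trans ht.2).le⟩
    rw [weightedPrimitive_sub (hz.integrable_Icc h0 (Ioo_subset_Icc_self ht))
      (hw.integrable_Icc h0 (Ioo_subset_Icc_self ht)), neg_sub', sub_neg_eq_add]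
    exact ((hz.hasDerivAt t ht).sub (hw.hasDerivAt t ht)).congr_deriv (by ring)

lemma const_mul (hz : IsFluxSolution ω T z r) (c : ℝ) :
    IsFluxSolution ω T (fun t => c * z t) (fun t => c * r t) where
  continuousOn := continuousOn_const.mul hz.continuousOn
  continuousOn_rhs := continuousOn_const.mul hz.continuousOn_rhs
  intervalIntegrable := by
    simpa only [mul_left_comm _ c] using hz.intervalIntegrable.const_mul c
  hasDerivAt t ht := by
    rw [weightedPrimitive_const_mul, ← mul_neg]
    exact (hz.hasDerivAt t ht).const_mul c

/-- A mean-zero right-hand side means zero flux at `1` as well. -/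
lemma reflect (hz : IsFluxSolution ω 1 z r) (hmean : ∫ s in 0..1, ω s * r s = 0) :
    IsFluxSolution (fun x => ω (1 - x)) 1 (fun x => z (1 - x)) (fun x => r (1 - x)) where
  continuousOn := hz.continuousOn.comp (by fun_prop) fun _ => one_sub_mem_Icc
  continuousOn_rhs := hz.continuousOn_rhs.comp (by fun_prop) fun _ => one_sub_mem_Ioo
  intervalIntegrable := by simpa using (hz.intervalIntegrable.comp_sub_left 1).symm
  hasDerivAt t ht := by
    have := (hz.hasDerivAt _ (one_sub_mem_Ioo ht)).scomp t ((hasDerivAt_id t).const_sub 1)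
    rw [weightedPrimitive_reflect hz.intervalIntegrable hmean (Ioo_subset_Icc_self ht)]
    simpa [Function.comp_def] using this

lemma hasDerivAt_flux (h : IsConeWeight m ω) (hT : T ≤ 1) (hz : IsFluxSolution ω T z r) {t : ℝ}
    (ht : t ∈ Ioo 0 T) : HasDerivAt (fun t => ∫ s in 0..t, ω s * r s) (ω t * r t) t :=
  hasDerivAt_intervalIntegral_of_continuousOn_Ioo
    ((h.continuousOn.mono (Ioo_subset_Ioo_right hT)).mul hz.continuousOn_rhs) hz.intervalIntegrable
    ⟨le_rfl, (ht.1.trans ht.2).le⟩ ht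

lemma continuousOn_flux (hT0 : 0 ≤ T) (hz : IsFluxSolution ω T z r) :
    ContinuousOn (fun t => ∫ s in 0..t, ω s * r s) (Icc 0 T) :=
  continuousOn_intervalIntegral_Icc hz.intervalIntegrable ⟨le_rfl, hT0⟩

lemma mul_flux_sub_mul_flux (h : IsConeWeight m ω) (hT0 : 0 ≤ T) (hT : T ≤ 1)
    (hz : IsFluxSolution ω T z r) (hw : IsFluxSolution ω T w q) :
    z T * (∫ s in 0..T, ω s * q s) - w T * (∫ s in 0..T, ω s * r s)
      = ∫ s in 0..T, (ω s * q s * z s - ω s * r s * w s) := by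
  rw [intervalIntegral.integral_eq_sub_of_hasDerivAt_of_le hT0
    ((hz.continuousOn.mul (hw.continuousOn_flux hT0)).sub
      (hw.continuousOn.mul (hz.continuousOn_flux hT0))) (fun t ht => ?_)
    ((intervalIntegrable_mul_continuousOn hT0 hw.intervalIntegrable hz.continuousOn).sub
      (intervalIntegrable_mul_continuousOn hT0 hz.intervalIntegrable hw.continuousOn))]
  · simp
  · refine (((hz.hasDerivAt t ht).mul (hw.hasDerivAt_flux h hT ht)).sub
      ((hw.hasDerivAt t ht).mul (hz.hasDerivAt_flux h hT ht))).congr_deriv ?_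
    simp only [weightedPrimitive]
    ring

/-- The energy identity: `weightedPrimitive ω r` is `-z'`. -/
lemma integral_mul_weightedPrimitive_sq (h : IsConeWeight m ω) (hz : IsFluxSolution ω 1 z r)
    (hmean : ∫ s in 0..1, ω s * r s = 0)
    (hint : IntervalIntegrable (fun s => ω s * weightedPrimitive ω r s ^ 2) volume 0 1) :
    ∫ s in 0..1, ω s * weightedPrimitive ω r s ^ 2 = ∫ s in 0..1, ω s * r s * z s := by
  have hrz := intervalIntegrable_mul_continuousOn zero_le_one hz.intervalIntegrable hz.continuousOn
  have hzero := intervalIntegral.integral_eq_sub_of_hasDerivAt_of_le zero_le_one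
    ((hz.continuousOn_flux zero_le_one).mul hz.continuousOn)
    (f' := fun t => ω t * r t * z t - ω t * weightedPrimitive ω r t ^ 2) (fun t ht => ?_)
    (hrz.sub hint)
  · rw [intervalIntegral.integral_sub hrz hint] at hzero
    simp only [Pi.mul_apply, hmean, intervalIntegral.integral_same, zero_mul, sub_zero] at hzero
    linarith
  · refine ((hz.hasDerivAt_flux h le_rfl ht).mul (hz.hasDerivAt t ht)).congr_deriv ?_
    rw [← h.mul_weightedPrimitive r ht]
    ring

end IsFluxSolution

end

/-! ### Stability -/

namespace IsFluxSolution

variable {m : ℕ} {ω z r : ℝ → ℝ} {T Λ B : ℝ}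

lemma abs_le_of_abs_rhs_le (h : IsConeWeight m ω) (hT0 : 0 ≤ T) (hT : T < 1) (hΛ : 0 < Λ)
    (hB : 0 ≤ B) (hz : IsFluxSolution ω T z r) (hr : ∀ t ∈ Ioo 0 T, |r t| ≤ Λ * |z t| + B)
    {t : ℝ} (ht : t ∈ Icc 0 T) :
    |z t| ≤ 2 * (|z 0| + coneConst m T * B) * Real.exp (2 * (coneConst m T * Λ)) := by
  have hK := coneConst_pos (m := m) hT
  refine (abs_le_of_abs_hasDerivAt_le_past (A := coneConst m T * Λ) (B := coneConst m T * B)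
    (by positivity) (by positivity) hT0 hz.continuousOn hz.hasDerivAt
    (fun t ht S hS => ?_) t ht).trans ?_
  · have hS0 : 0 ≤ S := (abs_nonneg _).trans (hS (t / 2) ⟨by linarith [ht.1], by linarith [ht.1]⟩)
    have hrS : ∀ s ∈ Ioo 0 t, |r s| ≤ Λ * S + B := fun s hs =>
      (hr s ⟨hs.1, hs.2.trans ht.2⟩).trans (by gcongr; exact hS s hs)
    calc |-weightedPrimitive ω r t| ≤ coneConst m T * (Λ * S + B) * t := by
          rw [abs_neg]; exact h.abs_weightedPrimitive_le hT (Ioo_subset_Icc_self ht) hrS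
      _ ≤ coneConst m T * (Λ * S + B) :=
          mul_le_of_le_one_right (by positivity) (by linarith [ht.2])
      _ = coneConst m T * Λ * S + coneConst m T * B := by ring
  · gcongr 2 * (|z 0| + ?_) * Real.exp ?_
    · exact mul_le_of_le_one_right (by positivity) hT.le
    · exact mul_le_of_le_one_right (by positivity) hT.le

/-- On a short interval the memory term is absorbed, so `z` is controlled by its value at the
interior point instead of the one at the singular end point. -/
lemma abs_le_two_mul_abs_right_add (h : IsConeWeight m ω) (hT0 : 0 ≤ T) (hT : T ≤ 1 / 2)
    (hΛT : 2 * 2 ^ m * Λ * T ≤ 1) (hΛ : 0 < Λ) (hB : 0 ≤ B) (hz : IsFluxSolution ω T z r)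
    (hr : ∀ t ∈ Ioo 0 T, |r t| ≤ Λ * |z t| + B) {t : ℝ} (ht : t ∈ Icc 0 T) :
    |z t| ≤ 2 * |z T| + 2 ^ m * B := by
  obtain ⟨t₀, ht₀, hmax⟩ := isCompact_Icc.exists_isMaxOn (nonempty_Icc.2 hT0) hz.continuousOn.abs
  have hmax' : ∀ s ∈ Icc 0 T, |z s| ≤ |z t₀| := hmax
  have hderiv : ∀ s ∈ Ioo 0 T, |-weightedPrimitive ω r s| ≤ 2 ^ m * (Λ * |z t₀| + B) := by
    intro s hs
    rw [abs_neg, ← coneConst_half]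
    refine (h.abs_weightedPrimitive_le (T := 1 / 2) (by norm_num) ⟨hs.1.le, by linarith [hs.2]⟩
      (D := Λ * |z t₀| + B) fun x hx => ?_).trans ?_
    · have hx' : x ∈ Ioo 0 T := ⟨hx.1, hx.2.trans hs.2⟩
      refine (hr x hx').trans ?_
      gcongr Λ * ?_ + B
      exact hmax' x (Ioo_subset_Icc_self hx')
    · have := coneConst_pos (m := m) (T := 1 / 2) (by norm_num)
      exact mul_le_of_le_one_right (by positivity) (by linarith [hs.2])
  have hdiff : |z T - z t₀| ≤ 2 ^ m * (Λ * |z t₀| + B) * (T - t₀) :=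
    abs_sub_le_mul_of_abs_hasDerivAt_le hz.continuousOn hz.hasDerivAt hderiv ht₀
      ⟨hT0, le_rfl⟩ ht₀.2
  have hT_le : 2 ^ m * (Λ * |z t₀| + B) * (T - t₀) ≤ 2 ^ m * (Λ * |z t₀| + B) * T := by
    gcongr; linarith [ht₀.1]
  have habsorb : 2 * 2 ^ m * Λ * T * |z t₀| ≤ 1 * |z t₀| := by gcongr
  have hBT : 2 ^ m * B * T ≤ 2 ^ m * B * (1 / 2) := by gcongr
  have htri : |z t₀| ≤ |z T| + |z T - z t₀| := by
    simpa [abs_sub_comm] using abs_add_le (z T) (z t₀ - z T)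
  exact (hmax' t ht).trans (by linarith)

end IsFluxSolution

/-- The solution is controlled by its value at `0` all the way to the singular end point `1`:
Gronwall's inequality leads to a fixed distance from `1`, and near `1` one uses the flux from
the right. -/
lemma exists_abs_le_of_isFluxSolution (m : ℕ) {Λ : ℝ} (hΛ : 0 < Λ) : ∃ C > 0, ∀ {ω z r : ℝ → ℝ}
    {B : ℝ}, IsConeWeight m ω → 0 ≤ B → IsFluxSolution ω 1 z r → ∫ s in 0..1, ω s * r s = 0 →
    (∀ t ∈ Ioo (0 : ℝ) 1, |r t| ≤ Λ * |z t| + B) →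
    ∀ t ∈ Icc (0 : ℝ) 1, |z t| ≤ C * (|z 0| + B) := by
  set δ := min (1 / 2) (1 / (2 * 2 ^ m * Λ))
  have hδ : 0 < δ := by positivity
  have hδ2 : δ ≤ 1 / 2 := min_le_left _ _
  have hδΛ : 2 * 2 ^ m * Λ * δ ≤ 1 := by
    rw [← le_div_iff₀' (by positivity)]; exact min_le_right _ _
  set K := coneConst m (1 - δ)
  have hK : 0 < K := coneConst_pos (by linarith)
  set E := Real.exp (2 * (K * Λ))
  have : 0 < E := Real.exp_pos _
  refine ⟨4 * (1 + K) * E + 2 ^ m, by positivity, fun {ω z r B} h hB hz hmean hr => ?_⟩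
  have hleft : ∀ t ∈ Icc 0 (1 - δ), |z t| ≤ 2 * (|z 0| + K * B) * E := fun t ht =>
    (hz.mono ⟨by linarith, by linarith⟩).abs_le_of_abs_rhs_le h (by linarith) (by linarith) hΛ hB
      (fun t ht => hr t ⟨ht.1, by linarith [ht.2]⟩) ht
  have hright : ∀ t ∈ Icc (1 - δ) 1, |z t| ≤ 2 * |z (1 - δ)| + 2 ^ m * B := fun t ht => by
    have := ((hz.reflect hmean).mono ⟨hδ.le, by linarith⟩).abs_le_two_mul_abs_right_add h.reflect
      hδ.le hδ2 hδΛ hΛ hB (fun t ht => hr _ (one_sub_mem_Ioo ⟨ht.1, by linarith [ht.2]⟩))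
      (t := 1 - t) ⟨by linarith [ht.2], by linarith [ht.1]⟩
    rwa [sub_sub_cancel] at this
  have hslack : 2 * (2 * (|z 0| + K * B) * E) + 2 ^ m * B
      ≤ (4 * (1 + K) * E + 2 ^ m) * (|z 0| + B) := by
    have : 0 ≤ 4 * E * (K * |z 0| + B) + 2 ^ m * |z 0| := by positivity
    linarith
  have hS : 0 ≤ 2 * (|z 0| + K * B) * E := by positivity
  have hmB : 0 ≤ 2 ^ m * B := by positivity
  intro t ht
  rcases le_total t (1 - δ) with htδ | htδ
  · linarith [hleft t ⟨ht.1, htδ⟩]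
  · linarith [hright t ⟨htδ, ht.2⟩, hleft (1 - δ) ⟨by linarith, le_rfl⟩]

/-! ### Shooting from the left end point -/

lemma hasSum_intervalIntegral_of_abs_le_Ioo {f : ℕ → ℝ → ℝ} {b : ℕ → ℝ} {t : ℝ} (ht : 0 ≤ t)
    (hf : ∀ k, ContinuousOn (f k) (Ioo 0 t)) (hfb : ∀ k, ∀ s ∈ Ioo 0 t, |f k s| ≤ b k)
    (hb : Summable b) :
    HasSum (fun k => ∫ s in 0..t, f k s) (∫ s in 0..t, ∑' k, f k s) := by
  have hae {p : ℝ → Prop} (h : ∀ s ∈ Ioo 0 t, p s) : ∀ᵐ s, s ∈ uIoc 0 t → p s := by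
    filter_upwards [Measure.ae_ne volume t] with s hs hst
    rw [uIoc_of_le ht] at hst
    exact h s ⟨hst.1, hst.2.lt_of_ne hs⟩
  refine intervalIntegral.hasSum_integral_of_dominated_convergence (fun k _ => b k) (fun k => ?_)
    (fun k => hae (hfb k)) (hae fun _ _ => hb) (by simp) (hae fun s hs => ?_)
  · rw [uIoc_of_le ht, ← Measure.restrict_congr_set Ioo_ae_eq_Ioc]
    exact (hf k).aestronglyMeasurable measurableSet_Ioo
  · exact (Summable.of_norm_bounded hb fun k => hfb k s hs).hasSum

lemma summable_mul_pow_div_factorial (C x : ℝ) : Summable fun k : ℕ => C * (x ^ k / k.factorial) :=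
  (Real.summable_pow_div_factorial x).mul_left C

lemma continuous_tsum_pow_mul_of_abs_le {b : ℕ → ℝ} {C K : ℝ}
    (hb : ∀ k : ℕ, |b k| ≤ C * (K ^ k / k.factorial)) :
    Continuous fun x : ℝ => ∑' k, x ^ k * b k := by
  refine continuous_iff_continuousAt.2 fun x₀ => ?_
  refine ContinuousOn.continuousAt (s := Metric.ball 0 (|x₀| + 1)) ?_
    (Metric.isOpen_ball.mem_nhds (by simp))
  refine continuousOn_tsum (fun k => by fun_prop)
    (summable_mul_pow_div_factorial C ((|x₀| + 1) * K)) fun k x hx => ?_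
  have hx' : |x| ≤ |x₀| + 1 := by simpa using (Metric.mem_ball.1 hx).le
  calc ‖x ^ k * b k‖ = |x| ^ k * |b k| := by rw [norm_mul, norm_pow]; rfl
    _ ≤ (|x₀| + 1) ^ k * (C * (K ^ k / k.factorial)) := by gcongr; exact hb k
    _ = C * (((|x₀| + 1) * K) ^ k / k.factorial) := by rw [mul_pow]; ring

/-- The coefficients in the expansion `z = ∑ (-λ)ᵏ aₖ` of the solution of `(ω z')' = -λ ω z` with
`z(0) = 1` and zero flux at `0`. -/
def shootCoeff (ω : ℝ → ℝ) : ℕ → ℝ → ℝ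
  | 0 => fun _ => 1
  | k + 1 => fun x => ∫ s in 0..x, weightedPrimitive ω (shootCoeff ω k) s

/-- The solution of `(ω z')' = -l ω z` with `z(0) = 1` and zero flux at `0`, as a power series in
the spectral parameter `l`. It is meaningful on `[0,1)`. -/
def shoot (ω : ℝ → ℝ) (l x : ℝ) : ℝ := ∑' k, (-l) ^ k * shootCoeff ω k x

lemma shootCoeff_succ_zero (ω : ℝ → ℝ) (k : ℕ) : shootCoeff ω (k + 1) 0 = 0 := by
  simp [shootCoeff]

@[simp]
lemma shoot_zero_left (ω : ℝ → ℝ) (x : ℝ) : shoot ω 0 x = 1 := by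
  rw [shoot, tsum_eq_single 0 fun k hk => by simp [hk]]
  simp [shootCoeff]

@[simp]
lemma shoot_zero_right (ω : ℝ → ℝ) (l : ℝ) : shoot ω l 0 = 1 := by
  rw [shoot, tsum_eq_single 0 fun k hk => ?_]
  · simp [shootCoeff]
  · obtain ⟨j, rfl⟩ := Nat.exists_eq_succ_of_ne_zero hk
    simp [shootCoeff_succ_zero]

namespace IsConeWeight

variable {m : ℕ} {ω : ℝ → ℝ} {T : ℝ}

lemma continuousOn_shootCoeff (h : IsConeWeight m ω) (hT0 : 0 ≤ T) (hT : T < 1) :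
    ∀ k, ContinuousOn (shootCoeff ω k) (Icc 0 T)
  | 0 => continuousOn_const
  | k + 1 => continuousOn_intervalIntegral_Icc ((h.continuousOn_weightedPrimitive hT
      (h.continuousOn_shootCoeff hT0 hT k)).intervalIntegrable_of_Icc hT0) ⟨le_rfl, hT0⟩

lemma abs_shootCoeff_le (h : IsConeWeight m ω) (hT : T < 1) (k : ℕ) {x : ℝ} (hx : x ∈ Icc 0 T) :
    |shootCoeff ω k x| ≤ (coneConst m T * x) ^ k / k.factorial := by
  induction k generalizing x with
  | zero => simp [shootCoeff]
  | succ k ih =>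
    have hK := coneConst_pos (m := m) hT
    have hcont : Continuous fun s => coneConst m T * ((coneConst m T * s) ^ k / k.factorial) := by
      fun_prop
    have hint : |shootCoeff ω (k + 1) x|
        ≤ ∫ s in 0..x, coneConst m T * ((coneConst m T * s) ^ k / k.factorial) := by
      rw [shootCoeff, ← Real.norm_eq_abs]
      refine intervalIntegral.norm_integral_le_of_norm_le hx.1 (ae_of_all _ fun s hs => ?_)
        (hcont.intervalIntegrable 0 x)
      have hsT : s ∈ Icc 0 T := ⟨hs.1.le, hs.2.trans hx.2⟩
      have hs0 := hs.1.le
      refine (h.abs_weightedPrimitive_le hT hsT fun y hy =>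
        (ih ⟨hy.1.le, hy.2.le.trans hsT.2⟩).trans ?_).trans
          (mul_le_of_le_one_right (by positivity) (hsT.2.trans hT.le))
      have := hy.1.le
      gcongr
      exact hy.2.le
    refine hint.trans_eq ?_
    simp only [mul_pow, mul_div_right_comm, intervalIntegral.integral_const_mul, integral_pow,
      Nat.factorial_succ]
    push_cast
    field_simp
    ring

lemma abs_shootCoeff_le_of_mem (h : IsConeWeight m ω) (hT : T < 1) (k : ℕ) {x : ℝ}
    (hx : x ∈ Icc 0 T) : |shootCoeff ω k x| ≤ coneConst m T ^ k / k.factorial := by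
  have hK := coneConst_pos (m := m) hT
  have hx0 := hx.1
  refine (h.abs_shootCoeff_le hT k hx).trans ?_
  gcongr
  exact mul_le_of_le_one_right hK.le (hx.2.trans hT.le)

lemma abs_pow_mul_shootCoeff_le (h : IsConeWeight m ω) (hT : T < 1) (l : ℝ) (k : ℕ) {x : ℝ}
    (hx : x ∈ Icc 0 T) :
    |(-l) ^ k * shootCoeff ω k x| ≤ (|l| * coneConst m T) ^ k / k.factorial := by
  rw [abs_mul, abs_pow, abs_neg, mul_pow, mul_div_assoc]
  gcongr
  exact h.abs_shootCoeff_le_of_mem hT k hx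

lemma continuousOn_shoot (h : IsConeWeight m ω) (hT0 : 0 ≤ T) (hT : T < 1) (l : ℝ) :
    ContinuousOn (shoot ω l) (Icc 0 T) :=
  continuousOn_tsum (fun k => continuousOn_const.mul (h.continuousOn_shootCoeff hT0 hT k))
    (Real.summable_pow_div_factorial (|l| * coneConst m T))
    fun k _ hx => h.abs_pow_mul_shootCoeff_le hT l k hx

lemma continuous_shoot_left (h : IsConeWeight m ω) {x : ℝ} (hx : x ∈ Ico (0 : ℝ) 1) :
    Continuous fun l => shoot ω l x :=
  (continuous_tsum_pow_mul_of_abs_le fun k =>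
    (h.abs_shootCoeff_le_of_mem hx.2 k ⟨hx.1, le_rfl⟩).trans_eq (one_mul _).symm).comp
    continuous_neg

lemma hasSum_integral_mul_shoot (h : IsConeWeight m ω) {x : ℝ} (hx : x ∈ Ico (0 : ℝ) 1) (l : ℝ) :
    HasSum (fun k => (-l) ^ k * ∫ s in 0..x, ω s * shootCoeff ω k s)
      (∫ s in 0..x, ω s * shoot ω l s) := by
  simp only [← intervalIntegral.integral_const_mul, shoot, ← tsum_mul_left, mul_left_comm _ (ω _)]
  exact hasSum_intervalIntegral_of_abs_le_Ioo hx.1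
    (b := fun k => 2 ^ m * ω (1 / 2) * ((|l| * coneConst m x) ^ k / k.factorial))
    (fun k => (h.continuousOn.mono (Ioo_subset_Ioo_right hx.2.le)).mul (continuousOn_const.mul
      ((h.continuousOn_shootCoeff hx.1 hx.2 k).mono Ioo_subset_Icc_self)))
    (fun k s hs => h.abs_mul_le (f := fun s => (-l) ^ k * shootCoeff ω k s)
      ⟨hs.1, hs.2.trans hx.2⟩
      (h.abs_pow_mul_shootCoeff_le hx.2 l k (Ioo_subset_Icc_self hs)))
    (summable_mul_pow_div_factorial _ _)

lemma continuous_integral_mul_shoot_left (h : IsConeWeight m ω) {x : ℝ}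
    (hx : x ∈ Ico (0 : ℝ) 1) : Continuous fun l => ∫ s in 0..x, ω s * shoot ω l s := by
  simp only [← (h.hasSum_integral_mul_shoot hx _).tsum_eq]
  have := h.half_pos
  have := coneConst_pos (m := m) hx.2
  exact (continuous_tsum_pow_mul_of_abs_le fun k =>
    h.abs_integral_mul_le hx.1 hx.2.le (by positivity) fun s hs =>
      h.abs_shootCoeff_le_of_mem hx.2 k (Ioo_subset_Icc_self hs)).comp continuous_neg

lemma weightedPrimitive_shoot_eq_tsum (h : IsConeWeight m ω) {x : ℝ} (hx : x ∈ Ico (0 : ℝ) 1)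
    (l : ℝ) : weightedPrimitive ω (shoot ω l) x
      = ∑' k, (-l) ^ k * weightedPrimitive ω (shootCoeff ω k) x := by
  simp only [weightedPrimitive, ← (h.hasSum_integral_mul_shoot hx l).tsum_eq, ← mul_div_assoc,
    tsum_div_const]

lemma abs_pow_mul_weightedPrimitive_shootCoeff_le (h : IsConeWeight m ω) (hT : T < 1) (l : ℝ)
    (k : ℕ) {x : ℝ} (hx : x ∈ Icc 0 T) :
    |(-l) ^ k * weightedPrimitive ω (shootCoeff ω k) x|
      ≤ coneConst m T * ((|l| * coneConst m T) ^ k / k.factorial) := by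
  have hK := coneConst_pos (m := m) hT
  rw [← weightedPrimitive_const_mul]
  exact (h.abs_weightedPrimitive_le hT hx fun s hs => h.abs_pow_mul_shootCoeff_le hT l k
    ⟨hs.1.le, hs.2.le.trans hx.2⟩).trans
      (mul_le_of_le_one_right (by positivity) (hx.2.trans hT.le))

lemma shoot_eq_one_sub_integral (h : IsConeWeight m ω) {x : ℝ} (hx : x ∈ Ico (0 : ℝ) 1) (l : ℝ) :
    shoot ω l x = 1 - l * ∫ s in 0..x, weightedPrimitive ω (shoot ω l) s := by
  have hswap : HasSum (fun k => (-l) ^ k * shootCoeff ω (k + 1) x)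
      (∫ s in 0..x, weightedPrimitive ω (shoot ω l) s) := by
    rw [intervalIntegral.integral_congr fun s hs => h.weightedPrimitive_shoot_eq_tsum
      (x := s) (by rw [uIcc_of_le hx.1] at hs; exact ⟨hs.1, hs.2.trans_lt hx.2⟩) l]
    simp only [shootCoeff, ← intervalIntegral.integral_const_mul]
    refine hasSum_intervalIntegral_of_abs_le_Ioo hx.1 (fun k => continuousOn_const.mul ?_)
      (fun k s hs => h.abs_pow_mul_weightedPrimitive_shootCoeff_le hx.2 l k
        (Ioo_subset_Icc_self hs)) (summable_mul_pow_div_factorial _ _)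
    exact (h.continuousOn_weightedPrimitive hx.2
      (h.continuousOn_shootCoeff hx.1 hx.2 k)).mono Ioo_subset_Icc_self
  have hsum : Summable fun k => (-l) ^ k * shootCoeff ω k x :=
    .of_norm_bounded (Real.summable_pow_div_factorial _)
      fun k => h.abs_pow_mul_shootCoeff_le hx.2 l k ⟨hx.1, le_rfl⟩
  rw [shoot, hsum.tsum_eq_zero_add]
  simp only [pow_succ', mul_assoc, tsum_mul_left, hswap.tsum_eq]
  simp [shootCoeff, sub_eq_add_neg]

lemma hasDerivAt_shoot (h : IsConeWeight m ω) (l : ℝ) {x : ℝ} (hx : x ∈ Ioo (0 : ℝ) 1) :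
    HasDerivAt (shoot ω l) (-weightedPrimitive ω (fun x => l * shoot ω l x) x) x := by
  obtain ⟨T, hxT, hT⟩ := exists_between hx.2
  have hT0 := (hx.1.trans hxT).le
  have hw := h.continuousOn_weightedPrimitive hT (h.continuousOn_shoot hT0 hT l)
  rw [weightedPrimitive_const_mul]
  refine (((hasDerivAt_intervalIntegral_of_continuousOn_Ioo (hw.mono Ioo_subset_Icc_self)
    (hw.intervalIntegrable_of_Icc hT0) ⟨le_rfl, hT0⟩ ⟨hx.1, hxT⟩).const_mul l).const_sub
      1).congr_of_eventuallyEq ?_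
  filter_upwards [Ioo_mem_nhds hx.1 hx.2] with y hy
  exact h.shoot_eq_one_sub_integral (Ioo_subset_Ico_self hy) l

lemma isFluxSolution_shoot (h : IsConeWeight m ω) (hT0 : 0 ≤ T) (hT : T < 1) (l : ℝ) :
    IsFluxSolution ω T (shoot ω l) (fun x => l * shoot ω l x) where
  continuousOn := h.continuousOn_shoot hT0 hT l
  continuousOn_rhs :=
    continuousOn_const.mul ((h.continuousOn_shoot hT0 hT l).mono Ioo_subset_Icc_self)
  intervalIntegrable :=
    h.intervalIntegrable_mul hT0 hT.le (continuousOn_const.mul (h.continuousOn_shoot hT0 hT l))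
  hasDerivAt _ hx := h.hasDerivAt_shoot l ⟨hx.1, hx.2.trans hT⟩

end IsConeWeight

/-! ### Neumann eigenvalues by matching -/

lemma hasDerivWithinAt_Icc_of_hasDerivAt_Ioo {a b x : ℝ} {z z' : ℝ → ℝ}
    (hz : ContinuousOn z (Icc a b)) (hz' : ContinuousOn z' (Icc a b))
    (hderiv : ∀ t ∈ Ioo a b, HasDerivAt z (z' t) t) (hx : x ∈ Icc a b) :
    HasDerivWithinAt z (z' x) (Icc a b) x := by
  have hftc : ∀ t ∈ Icc a b, z t = z a + ∫ s in a..t, z' s := fun t ht => by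
    rw [intervalIntegral.integral_eq_sub_of_hasDerivAt_of_le ht.1
      (hz.mono (Icc_subset_Icc_right ht.2)) (fun s hs => hderiv s ⟨hs.1, hs.2.trans_le ht.2⟩)
      ((hz'.mono (Icc_subset_Icc_right ht.2)).intervalIntegrable_of_Icc ht.1),
      add_sub_cancel]
  have := Fact.mk hx
  refine ((intervalIntegral.integral_hasDerivWithinAt_right
    ((hz'.mono (Icc_subset_Icc_right hx.2)).intervalIntegrable_of_Icc hx.1)
    (hz'.stronglyMeasurableAtFilter_nhdsWithin measurableSet_Icc x)
    (hz' x hx)).const_add (z a)).congr_of_mem hftc hx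

lemma hasDerivAt_ite_le {f g : ℝ → ℝ} {c d : ℝ} (hf : HasDerivAt f d c) (hg : HasDerivAt g d c)
    (hfg : f c = g c) : HasDerivAt (fun x => if x ≤ c then f x else g x) d c := by
  rw [← hasDerivWithinAt_univ, ← Iic_union_Ici (a := c)]
  refine (hf.hasDerivWithinAt.congr_of_mem (fun x hx => if_pos hx) self_mem_Iic).union
    (hg.hasDerivWithinAt.congr_of_mem (fun x hx => ?_) self_mem_Ici)
  rcases (mem_Ici.1 hx).eq_or_lt with rfl | hcx
  · simp [hfg]
  · exact if_neg hcx.not_ge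

section

variable {m : ℕ} {ω φ : ℝ → ℝ} {l : ℝ}

lemma IsConeWeight.continuousOn_weightedPrimitive_of_integral_eq_zero (h : IsConeWeight m ω)
    {f : ℝ → ℝ} (hf : ContinuousOn f (Icc 0 1)) (hmean : ∫ s in 0..1, ω s * f s = 0) :
    ContinuousOn (weightedPrimitive ω f) (Icc 0 1) := by
  rw [← Icc_union_Icc_eq_Icc (b := 1 / 2) (by norm_num) (by norm_num)]
  refine ContinuousOn.union_of_isClosed ?_ ?_ isClosed_Icc isClosed_Icc
  · exact h.continuousOn_weightedPrimitive (by norm_num)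
      (hf.mono (Icc_subset_Icc_right (by norm_num)))
  · have hrefl : ContinuousOn (weightedPrimitive (fun x => ω (1 - x)) fun x => f (1 - x))
        (Icc 0 (1 / 2)) :=
      h.reflect.continuousOn_weightedPrimitive (by norm_num) (hf.comp (by fun_prop)
        fun x hx => one_sub_mem_Icc (Icc_subset_Icc_right (by norm_num) hx))
    refine (hrefl.neg.comp (t := Icc 0 (1 / 2)) (f := fun x => 1 - x) (by fun_prop)
      fun x hx => ⟨by linarith [hx.2], by linarith [hx.1]⟩).congr fun x hx => ?_
    have hx' : 1 - x ∈ Icc (0 : ℝ) 1 := ⟨by linarith [hx.2], by linarith [hx.1]⟩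
    have := weightedPrimitive_reflect (h.intervalIntegrable_mul zero_le_one le_rfl hf) hmean hx'
    simp only [Function.comp_apply, Pi.neg_apply, this, sub_sub_cancel, neg_neg]

lemma IsFluxSolution.neumannSol (h : IsConeWeight m ω)
    (hφ : IsFluxSolution ω 1 φ (fun x => l * φ x)) (hmean : ∫ s in 0..1, ω s * (l * φ s) = 0)
    (hne : ∃ x ∈ Icc (0 : ℝ) 1, φ x ≠ 0) :
    NeumannSol ω l φ (fun x => -weightedPrimitive ω (fun x => l * φ x) x) := by
  have hcont : ContinuousOn (fun x => -weightedPrimitive ω (fun x => l * φ x) x) (Icc 0 1) :=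
    (h.continuousOn_weightedPrimitive_of_integral_eq_zero
      (continuousOn_const.mul hφ.continuousOn) hmean).neg
  refine ⟨fun x hx => hasDerivWithinAt_Icc_of_hasDerivAt_Ioo hφ.continuousOn hcont hφ.hasDerivAt hx,
    hcont, by simp, by simp [weightedPrimitive, hmean], hne, fun x hx => ?_⟩
  refine ((hφ.hasDerivAt_flux h le_rfl hx).neg.congr_of_eventuallyEq ?_).congr_deriv (by ring)
  filter_upwards [Ioo_mem_nhds hx.1 hx.2] with y hy
  rw [mul_neg, h.mul_weightedPrimitive _ hy, Pi.neg_apply]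

end

/-- The solution started at `0` with value `α` on `[0,c]`, continued by the one started at `1` with
value `β`. -/
def matchedShoot (ω : ℝ → ℝ) (l c α β x : ℝ) : ℝ :=
  if x ≤ c then α * shoot ω l x else β * shoot (fun x => ω (1 - x)) l (1 - x)

/-- The determinant of the matching conditions at `c` for the value and the flux of the solutions
started at `0` and at `1`; `l` is an eigenvalue when it vanishes. -/
def matchingDet (ω : ℝ → ℝ) (c l : ℝ) : ℝ :=
  shoot ω l c * (∫ s in 0..(1 - c), ω (1 - s) * shoot (fun x => ω (1 - x)) l s)
    + shoot (fun x => ω (1 - x)) l (1 - c) * ∫ s in 0..c, ω s * shoot ω l s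

lemma exists_ne_zero_of_det_eq_zero {p q r s : ℝ} (hdet : p * s + q * r = 0) :
    ∃ α β : ℝ, (α ≠ 0 ∨ β ≠ 0) ∧ α * p = β * q ∧ α * r + β * s = 0 := by
  by_cases hpq : p = 0 ∧ q = 0
  · by_cases hrs : r = 0 ∧ s = 0
    · exact ⟨1, 0, by simp [hpq, hrs]⟩
    · exact ⟨s, -r, (not_and_or.1 hrs).symm.imp id neg_ne_zero.2, by simp [hpq], by ring⟩
  · exact ⟨q, p, (not_and_or.1 hpq).symm, mul_comm q p, by linarith⟩

section

variable {m : ℕ} {ω : ℝ → ℝ} {l c α β : ℝ}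

lemma matchedShoot_of_ge (hval : α * shoot ω l c = β * shoot (fun x => ω (1 - x)) l (1 - c))
    {x : ℝ} (hx : c ≤ x) :
    matchedShoot ω l c α β x = β * shoot (fun x => ω (1 - x)) l (1 - x) := by
  rcases hx.eq_or_lt with rfl | hcx
  · rw [matchedShoot, if_pos le_rfl, hval]
  · exact if_neg hcx.not_ge

lemma weightedPrimitive_matchedShoot_left {x : ℝ} (hx : x ∈ Icc 0 c) :
    weightedPrimitive ω (matchedShoot ω l c α β) x = α * weightedPrimitive ω (shoot ω l) x := by
  rw [← weightedPrimitive_const_mul, weightedPrimitive, weightedPrimitive]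
  congr 1
  refine intervalIntegral.integral_congr fun s hs => ?_
  rw [uIcc_of_le hx.1] at hs
  simp only [matchedShoot, if_pos (hs.2.trans hx.2)]

lemma weightedPrimitive_reflect_matchedShoot
    (hval : α * shoot ω l c = β * shoot (fun x => ω (1 - x)) l (1 - c)) {x : ℝ}
    (hx : x ∈ Icc 0 (1 - c)) :
    weightedPrimitive (fun x => ω (1 - x)) (fun x => matchedShoot ω l c α β (1 - x)) x
      = β * weightedPrimitive (fun x => ω (1 - x)) (shoot (fun x => ω (1 - x)) l) x := by
  rw [← weightedPrimitive_const_mul, weightedPrimitive, weightedPrimitive]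
  congr 1
  refine intervalIntegral.integral_congr fun s hs => ?_
  rw [uIcc_of_le hx.1] at hs
  simp only [matchedShoot_of_ge hval (by linarith [hs.2, hx.2] : c ≤ 1 - s), sub_sub_cancel]

namespace IsConeWeight

lemma continuousOn_matchedShoot (h : IsConeWeight m ω) (hc : c ∈ Ioo (0 : ℝ) 1)
    (hval : α * shoot ω l c = β * shoot (fun x => ω (1 - x)) l (1 - c)) :
    ContinuousOn (matchedShoot ω l c α β) (Icc 0 1) := by
  rw [← Icc_union_Icc_eq_Icc hc.1.le hc.2.le]
  refine ContinuousOn.union_of_isClosed ?_ ?_ isClosed_Icc isClosed_Icc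
  · exact (continuousOn_const.mul (h.continuousOn_shoot hc.1.le hc.2 l)).congr
      fun x hx => if_pos hx.2
  · have hright : ContinuousOn (shoot (fun x => ω (1 - x)) l) (Icc 0 (1 - c)) :=
      h.reflect.continuousOn_shoot (sub_nonneg.2 hc.2.le) (by linarith [hc.1]) l
    exact ((continuousOn_const (c := β)).mul (hright.comp (f := fun x => 1 - x) (by fun_prop)
      fun x hx => ⟨by linarith [hx.2], by linarith [hx.1]⟩)).congr
        fun x hx => matchedShoot_of_ge hval hx.1

lemma hasDerivAt_matchedShoot (h : IsConeWeight m ω) (hc : c ∈ Ioo (0 : ℝ) 1)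
    (hval : α * shoot ω l c = β * shoot (fun x => ω (1 - x)) l (1 - c))
    (hmean : ∫ s in 0..1, ω s * matchedShoot ω l c α β s = 0) {t : ℝ} (ht : t ∈ Ioo (0 : ℝ) 1) :
    HasDerivAt (matchedShoot ω l c α β)
      (-weightedPrimitive ω (fun x => l * matchedShoot ω l c α β x) t) t := by
  have hint := h.intervalIntegrable_mul zero_le_one le_rfl (h.continuousOn_matchedShoot hc hval)
  have hleft : t ≤ c → HasDerivAt (fun x => α * shoot ω l x)
      (-weightedPrimitive ω (fun x => l * matchedShoot ω l c α β x) t) t := fun htc => by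
    refine ((h.hasDerivAt_shoot l ht).const_mul α).congr_deriv ?_
    rw [weightedPrimitive_const_mul, weightedPrimitive_const_mul,
      weightedPrimitive_matchedShoot_left ⟨ht.1.le, htc⟩]
    ring
  have hright : c ≤ t → HasDerivAt (fun x => β * shoot (fun x => ω (1 - x)) l (1 - x))
      (-weightedPrimitive ω (fun x => l * matchedShoot ω l c α β x) t) t := fun hct => by
    have hrefl := weightedPrimitive_reflect hint hmean (one_sub_mem_Icc (Ioo_subset_Icc_self ht))
    rw [weightedPrimitive_reflect_matchedShoot hval
      ⟨(one_sub_mem_Ioo ht).1.le, by linarith⟩, sub_sub_cancel] at hrefl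
    refine (((h.reflect.hasDerivAt_shoot l (one_sub_mem_Ioo ht)).scomp t
      ((hasDerivAt_id t).const_sub 1)).const_mul β).congr_deriv ?_
    rw [weightedPrimitive_const_mul, weightedPrimitive_const_mul, smul_eq_mul]
    linear_combination l * hrefl
  rcases lt_trichotomy t c with htc | rfl | hct
  · refine (hleft htc.le).congr_of_eventuallyEq ?_
    filter_upwards [Iio_mem_nhds htc] with x hx using if_pos (le_of_lt hx)
  · exact hasDerivAt_ite_le (hleft le_rfl) (hright le_rfl) hval
  · refine (hright hct.le).congr_of_eventuallyEq ?_
    filter_upwards [Ioi_mem_nhds hct] with x hx using if_neg (not_le_of_gt hx)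

lemma integral_mul_matchedShoot (h : IsConeWeight m ω) (hc : c ∈ Ioo (0 : ℝ) 1)
    (hval : α * shoot ω l c = β * shoot (fun x => ω (1 - x)) l (1 - c)) :
    ∫ s in 0..1, ω s * matchedShoot ω l c α β s = α * (∫ s in 0..c, ω s * shoot ω l s)
      + β * ∫ s in 0..(1 - c), ω (1 - s) * shoot (fun x => ω (1 - x)) l s := by
  have hint := h.intervalIntegrable_mul zero_le_one le_rfl (h.continuousOn_matchedShoot hc hval)
  have hcI := Ioo_subset_Icc_self hc
  have hwp := weightedPrimitive_reflect_matchedShoot hval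
    ⟨sub_nonneg.2 hc.2.le, le_refl (1 - c)⟩
  have hmul := congrArg (ω c * ·)
    (weightedPrimitive_matchedShoot_left (ω := ω) (l := l) (α := α) (β := β) ⟨hc.1.le, le_refl c⟩)
  have hmul' := congrArg (ω (1 - (1 - c)) * ·) hwp
  simp only [mul_left_comm _ α, h.mul_weightedPrimitive _ hc] at hmul
  simp only [mul_left_comm _ β] at hmul'
  rw [h.reflect.mul_weightedPrimitive _ (one_sub_mem_Ioo hc),
    h.reflect.mul_weightedPrimitive _ (one_sub_mem_Ioo hc),
    intervalIntegral.integral_comp_sub_left (fun s => ω s * matchedShoot ω l c α β s),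
    sub_sub_cancel, sub_zero] at hmul'
  rw [← intervalIntegral.integral_add_adjacent_intervals
    (intervalIntegrable_mono_Icc hint ⟨le_rfl, zero_le_one⟩ hcI)
    (intervalIntegrable_mono_Icc hint hcI ⟨zero_le_one, le_rfl⟩), hmul, hmul']

theorem isNeumannEigenvalue_of_matchingDet_eq_zero (h : IsConeWeight m ω) (hc : c ∈ Ioo (0 : ℝ) 1)
    (hdet : matchingDet ω c l = 0) : IsNeumannEigenvalue ω l := by
  obtain ⟨α, β, hne, hval, hflux⟩ := exists_ne_zero_of_det_eq_zero hdet
  have hcont := h.continuousOn_matchedShoot hc hval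
  have hmean : ∫ s in 0..1, ω s * matchedShoot ω l c α β s = 0 :=
    (h.integral_mul_matchedShoot hc hval).trans hflux
  have hflux : IsFluxSolution ω 1 (matchedShoot ω l c α β)
      (fun x => l * matchedShoot ω l c α β x) :=
    { continuousOn := hcont
      continuousOn_rhs := continuousOn_const.mul (hcont.mono Ioo_subset_Icc_self)
      intervalIntegrable :=
        h.intervalIntegrable_mul zero_le_one le_rfl (continuousOn_const.mul hcont)
      hasDerivAt := fun _ ht => h.hasDerivAt_matchedShoot hc hval hmean ht }
  refine ⟨_, _, hflux.neumannSol h ?_ ?_⟩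
  · simp only [mul_left_comm _ l, intervalIntegral.integral_const_mul, hmean, mul_zero]
  · rcases hne with hα | hβ
    · exact ⟨0, by simp, by simpa [matchedShoot, hc.1.le] using hα⟩
    · exact ⟨1, by simp, by simpa [matchedShoot, hc.2.not_ge] using hβ⟩

end IsConeWeight

end

/-! ### Approximate Neumann solutions -/

/-- The integral of `(2x)ᵐ` over `(0,δ)`: the mass near `0` of a cone weight with `ω(1/2) = 1` is at
least this large. -/
def coneMass (m : ℕ) (δ : ℝ) : ℝ := 2 ^ m * (δ ^ (m + 1) / (m + 1))

lemma coneMass_pos {m : ℕ} {δ : ℝ} (hδ : 0 < δ) : 0 < coneMass m δ := by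
  rw [coneMass]; positivity

lemma IsConeWeight.mul_coneMass_le_integral {m : ℕ} {ω g : ℝ → ℝ} {b c δ : ℝ}
    (h : IsConeWeight m ω) (hδ0 : 0 ≤ δ) (hδ : δ ≤ 1 / 2) (hδc : δ ≤ c) (hc : c ≤ 1) (hb : 0 ≤ b)
    (hg : IntervalIntegrable (fun s => ω s * g s) volume 0 c) (hg0 : ∀ x ∈ Ioo 0 c, 0 ≤ g x)
    (hgb : ∀ x ∈ Ioo 0 δ, b ≤ g x) :
    b * coneMass m δ * ω (1 / 2) ≤ ∫ s in 0..c, ω s * g s := by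
  have hc0 : 0 ≤ c := hδ0.trans hδc
  have hgδ := intervalIntegrable_mono_Icc hg ⟨le_rfl, hc0⟩ ⟨hδ0, hδc⟩
  calc b * coneMass m δ * ω (1 / 2) = ∫ s in 0..δ, (2 * s) ^ m * ω (1 / 2) * b := by
        simp only [mul_pow, mul_assoc, intervalIntegral.integral_const_mul,
          intervalIntegral.integral_mul_const, integral_pow, coneMass]
        simp; ring
    _ ≤ ∫ s in 0..δ, ω s * g s := by
        refine intervalIntegral.integral_mono_on_of_le_Ioo hδ0
          (Continuous.intervalIntegrable (by fun_prop) _ _) hgδ fun s hs => ?_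
        have hs' : s ∈ Ioc (0 : ℝ) (1 / 2) := ⟨hs.1, hs.2.le.trans hδ⟩
        exact mul_le_mul (h.two_mul_pow_mul_half_le hs') (hgb s hs) hb
          (h.pos s ⟨hs.1, by linarith [hs'.2]⟩).le
    _ ≤ ∫ s in 0..c, ω s * g s := by
        rw [← intervalIntegral.integral_add_adjacent_intervals hgδ
          (intervalIntegrable_mono_Icc hg ⟨hδ0, hδc⟩ ⟨hc0, le_rfl⟩)]
        refine le_add_of_nonneg_right ?_
        rw [intervalIntegral.integral_of_le hδc, integral_Ioc_eq_integral_Ioo]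
        exact setIntegral_nonneg measurableSet_Ioo fun s hs =>
          mul_nonneg (h.pos s ⟨by linarith [hs.1], by linarith [hs.2]⟩).le
            (hg0 s ⟨by linarith [hs.1], hs.2⟩)

/-- `U` solves `-(ω v')' = l ω U` with Neumann conditions, where `v` is `η`-close to `U`, `|U| ≤ 1`,
`|v'| ≤ B`, and `v` goes from at least `a` at `0` to at most `-a` at `1`. For the cross-sectional
average `U` of a Neumann eigenfunction, `v` is the primitive of the average of `∂u/∂x`. -/
structure IsApproxNeumannSol (m : ℕ) (a B η l : ℝ) (ω U v : ℝ → ℝ) : Prop where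
  weight : IsConeWeight m ω
  pos : 0 < l
  abs_le_one : ∀ x ∈ Ioo (0 : ℝ) 1, |U x| ≤ 1
  integral_eq_zero : ∫ s in 0..1, ω s * U s = 0
  isFluxSolution : IsFluxSolution ω 1 v (fun x => l * U x)
  abs_deriv_le : ∀ x ∈ Ioo (0 : ℝ) 1, |weightedPrimitive ω (fun x => l * U x) x| ≤ B
  abs_sub_le : ∀ x ∈ Ioo (0 : ℝ) 1, |U x - v x| ≤ η
  le_left : a ≤ v 0
  right_le : v 1 ≤ -a

namespace IsApproxNeumannSol

variable {m : ℕ} {a B c δ η l l' T Z : ℝ} {ω U v : ℝ → ℝ}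

lemma nonneg (h : IsApproxNeumannSol m a B η l ω U v) : 0 ≤ η :=
  (abs_nonneg _).trans (h.abs_sub_le (1 / 2) (by norm_num))

lemma continuousOn (h : IsApproxNeumannSol m a B η l ω U v) : ContinuousOn U (Ioo 0 1) := by
  refine (continuousOn_const (c := l⁻¹).mul h.isFluxSolution.continuousOn_rhs).congr fun x _ => ?_
  exact (inv_mul_cancel_left₀ h.pos.ne' _).symm

lemma intervalIntegrable (h : IsApproxNeumannSol m a B η l ω U v) (hc : c ∈ Icc (0 : ℝ) 1) :
    IntervalIntegrable (fun s => ω s * U s) volume 0 c :=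
  intervalIntegrable_mono_Icc
    (h.weight.intervalIntegrable_mul_of_abs_le zero_le_one le_rfl h.continuousOn h.abs_le_one)
    ⟨le_rfl, zero_le_one⟩ hc

lemma integral_rhs_eq_zero (h : IsApproxNeumannSol m a B η l ω U v) :
    ∫ s in 0..1, ω s * (l * U s) = 0 := by
  simp only [mul_left_comm _ l, intervalIntegral.integral_const_mul, h.integral_eq_zero, mul_zero]

lemma reflect (h : IsApproxNeumannSol m a B η l ω U v) : IsApproxNeumannSol m a B η l
    (fun x => ω (1 - x)) (fun x => -U (1 - x)) (fun x => -v (1 - x)) where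
  weight := h.weight.reflect
  pos := h.pos
  abs_le_one x hx := by rw [abs_neg]; exact h.abs_le_one _ (one_sub_mem_Ioo hx)
  integral_eq_zero := by
    have := intervalIntegral.integral_comp_sub_left (fun s => ω s * U s) (a := 0) (b := 1) 1
    norm_num [h.integral_eq_zero] at this
    simp [this]
  isFluxSolution := by
    simpa using (h.isFluxSolution.reflect h.integral_rhs_eq_zero).const_mul (-1)
  abs_deriv_le x hx := by
    have := weightedPrimitive_reflect h.isFluxSolution.intervalIntegrable h.integral_rhs_eq_zero
      (Ioo_subset_Icc_self hx)
    have hneg := weightedPrimitive_const_mul (fun x => ω (1 - x)) (fun x => l * U (1 - x)) (-1) x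
    simp only [neg_one_mul, this, neg_neg] at hneg
    simpa only [mul_neg, hneg] using h.abs_deriv_le _ (one_sub_mem_Ioo hx)
  abs_sub_le x hx := by
    have := h.abs_sub_le _ (one_sub_mem_Ioo hx)
    rwa [neg_sub_neg, abs_sub_comm]
  le_left := by simpa using le_neg.2 h.right_le
  right_le := by simpa using h.le_left

lemma abs_le_two (h : IsApproxNeumannSol m a B η l ω U v) (hη : η ≤ 1) {x : ℝ}
    (hx : x ∈ Ioo (0 : ℝ) 1) : |v x| ≤ 2 := by
  have h1 := abs_le.1 (h.abs_le_one x hx)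
  have h2 := abs_le.1 (h.abs_sub_le x hx)
  exact abs_le.2 ⟨by linarith, by linarith⟩

lemma sub_mul_le (h : IsApproxNeumannSol m a B η l ω U v) {t : ℝ} (ht : t ∈ Icc (0 : ℝ) 1) :
    a - B * t ≤ v t := by
  have := abs_sub_le_mul_of_abs_hasDerivAt_le h.isFluxSolution.continuousOn
    h.isFluxSolution.hasDerivAt (fun x hx => (abs_neg _).trans_le (h.abs_deriv_le x hx))
    ⟨le_rfl, zero_le_one⟩ ht ht.1
  linarith [(abs_le.1 this).1, h.le_left]

lemma half_le (h : IsApproxNeumannSol m a B η l ω U v) (hB : 0 ≤ B) (hδ : δ ≤ 1 / 2)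
    (hδB : 2 * B * δ ≤ a) {t : ℝ} (ht : t ∈ Icc 0 δ) : a / 2 ≤ v t := by
  have : B * t ≤ B * δ := by gcongr; exact ht.2
  linarith [h.sub_mul_le ⟨ht.1, by linarith [ht.2]⟩]

/-- The flux at `δ` is bounded because `v'` is, and bounds `l` because `U ≥ a / 4` on `(0,δ)`. -/
lemma mul_coneMass_le (h : IsApproxNeumannSol m a B η l ω U v) (ha : 0 < a) (hB : 0 ≤ B)
    (hδ0 : 0 < δ) (hδ : δ ≤ 1 / 2) (hδB : 2 * B * δ ≤ a) (hη : η ≤ a / 4) :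
    l * (a / 4 * coneMass m δ) ≤ 2 ^ m * B := by
  have hδI : δ ∈ Ioo (0 : ℝ) 1 := ⟨hδ0, by linarith⟩
  have hU : ∀ x ∈ Ioo 0 δ, a / 4 ≤ U x := fun x hx => by
    linarith [h.half_le hB hδ hδB (Ioo_subset_Icc_self hx),
      (abs_le.1 (h.abs_sub_le x ⟨hx.1, hx.2.trans hδI.2⟩)).1]
  have hmass := h.weight.mul_coneMass_le_integral hδ0.le hδ le_rfl hδI.2.le (by positivity)
    (h.intervalIntegrable (Ioo_subset_Icc_self hδI)) (fun x hx => by linarith [hU x hx]) hU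
  have hflux := h.weight.abs_mul_le hδI (h.abs_deriv_le δ hδI)
  rw [h.weight.mul_weightedPrimitive _ hδI] at hflux
  simp only [mul_left_comm _ l, intervalIntegral.integral_const_mul] at hflux
  refine le_of_mul_le_mul_right ?_ h.weight.half_pos
  calc l * (a / 4 * coneMass m δ) * ω (1 / 2) = l * (a / 4 * coneMass m δ * ω (1 / 2)) := by ring
    _ ≤ l * ∫ s in 0..δ, ω s * U s := by have := h.pos; gcongr
    _ ≤ 2 ^ m * B * ω (1 / 2) := by linarith [le_of_abs_le hflux]

lemma exists_eq_zero (h : IsApproxNeumannSol m a B η l ω U v) (ha : 0 < a) (hB : 0 < B)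
    (hδB : 2 * B * δ ≤ a) :
    ∃ c ∈ Icc δ (1 - δ), v c = 0 ∧ ∀ x ∈ Icc 0 c, 0 ≤ v x := by
  have hv := h.isFluxSolution.continuousOn
  have hright := h.right_le
  have hzero : (Icc (0 : ℝ) 1 ∩ v ⁻¹' {0}).Nonempty :=
    intermediate_value_Icc' zero_le_one hv ⟨by linarith, by linarith [h.le_left]⟩
  have hcpt : IsCompact (Icc (0 : ℝ) 1 ∩ v ⁻¹' {0}) :=
    isCompact_Icc.of_isClosed_subset (hv.preimage_isClosed_of_isClosed isClosed_Icc
      isClosed_singleton) inter_subset_left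
  obtain ⟨c, ⟨hcI, hvc : v c = 0⟩, hleast⟩ := hcpt.exists_isLeast hzero
  refine ⟨c, ⟨?_, ?_⟩, hvc, fun x hx => ?_⟩
  · have := h.sub_mul_le hcI
    exact le_of_mul_le_mul_left (by linarith) hB
  · have := h.reflect.sub_mul_le (one_sub_mem_Icc hcI)
    simp only [sub_sub_cancel, hvc, neg_zero] at this
    have : δ ≤ 1 - c := le_of_mul_le_mul_left (by linarith) hB
    linarith
  · by_contra! hneg
    obtain ⟨y, hy, hvy⟩ := intermediate_value_Icc' hx.1
      (hv.mono (Icc_subset_Icc_right (hx.2.trans hcI.2))) ⟨hneg.le, by linarith [h.le_left]⟩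
    have hcy : c ≤ y := hleast ⟨⟨hy.1, hy.2.trans (hx.2.trans hcI.2)⟩, hvy⟩
    rw [le_antisymm hx.2 (hcy.trans hy.2), hvc] at hneg
    exact lt_irrefl _ hneg

lemma mul_coneMass_le_integral (h : IsApproxNeumannSol m a B η l ω U v) (ha : 0 < a) (hB : 0 ≤ B)
    (hδ0 : 0 < δ) (hδ : δ ≤ 1 / 2) (hδB : 2 * B * δ ≤ a)
    (hη : 2 ^ m * η ≤ a / 4 * coneMass m δ) (hc : c ∈ Icc δ 1) (hvc : ∀ x ∈ Icc 0 c, 0 ≤ v x) :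
    a / 4 * coneMass m δ * ω (1 / 2) ≤ ∫ s in 0..c, ω s * U s := by
  have hc0 : 0 ≤ c := hδ0.le.trans hc.1
  have hvint := h.weight.intervalIntegrable_mul hc0 hc.2
    (h.isFluxSolution.continuousOn.mono (Icc_subset_Icc_right hc.2))
  have hmass := h.weight.mul_coneMass_le_integral hδ0.le hδ hc.1 hc.2 (b := a / 2) (by positivity)
    hvint (fun x hx => hvc x (Ioo_subset_Icc_self hx))
    fun x hx => h.half_le hB hδ hδB (Ioo_subset_Icc_self hx)
  have hdiff := h.weight.abs_integral_mul_le (f := fun s => U s - v s) hc0 hc.2 h.nonneg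
    fun x hx => h.abs_sub_le x ⟨hx.1, hx.2.trans_le hc.2⟩
  simp only [mul_sub] at hdiff
  rw [intervalIntegral.integral_sub (h.intervalIntegrable ⟨hc0, hc.2⟩) hvint] at hdiff
  have hηω := mul_le_mul_of_nonneg_right hη h.weight.half_pos.le
  linarith [(abs_le.1 hdiff).1]

lemma mul_coneMass_le_integral_sq (h : IsApproxNeumannSol m a B η l ω U v) (ha : 0 < a)
    (hB : 0 ≤ B) (hδ0 : 0 < δ) (hδ : δ ≤ 1 / 2) (hδB : 2 * B * δ ≤ a) (hc : c ∈ Icc δ 1) :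
    (a / 2) ^ 2 * coneMass m δ * ω (1 / 2) ≤ ∫ s in 0..c, ω s * v s ^ 2 := by
  have hc0 : 0 ≤ c := hδ0.le.trans hc.1
  refine h.weight.mul_coneMass_le_integral hδ0.le hδ hc.1 hc.2 (by positivity)
    (h.weight.intervalIntegrable_mul hc0 hc.2
      ((h.isFluxSolution.continuousOn.mono (Icc_subset_Icc_right hc.2)).pow 2))
    (fun x _ => sq_nonneg _) fun x hx => ?_
  gcongr
  exact h.half_le hB hδ hδB (Ioo_subset_Icc_self hx)

/-! ### The first eigenvalue is at most slightly larger than `l` -/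

lemma abs_mul_shoot_sub_le (h : IsApproxNeumannSol m a B η l ω U v) (hη : η ≤ 1) (hl : l ≤ l')
    (hT0 : 0 ≤ T) (hT : T < 1) {t : ℝ} (ht : t ∈ Icc 0 T) :
    |v 0 * shoot ω l' t - v t| ≤ 2 * (coneConst m T * (2 * (l' - l) + l * η))
      * Real.exp (2 * (coneConst m T * l')) := by
  have hl0 := h.pos
  have hdiff := ((h.weight.isFluxSolution_shoot hT0 hT l').const_mul (v 0)).sub
    (h.isFluxSolution.mono ⟨hT0, hT.le⟩)
  refine (hdiff.abs_le_of_abs_rhs_le h.weight hT0 hT (Λ := l') (B := 2 * (l' - l) + l * η)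
    (by linarith) (by have := h.nonneg; have := sub_nonneg.2 hl; positivity)
    (fun x hx => ?_) ht).trans_eq ?_
  · have hx1 : x ∈ Ioo (0 : ℝ) 1 := ⟨hx.1, hx.2.trans hT⟩
    calc |v 0 * (l' * shoot ω l' x) - l * U x|
        = |l' * (v 0 * shoot ω l' x - v x) + ((l' - l) * v x - l * (U x - v x))| := by ring_nf
      _ ≤ |l'| * |v 0 * shoot ω l' x - v x| + (|l' - l| * |v x| + |l| * |U x - v x|) := by
          simp only [← abs_mul]
          exact (abs_add_le _ _).trans (by gcongr; exact abs_sub _ _)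
      _ ≤ l' * |v 0 * shoot ω l' x - v x| + ((l' - l) * 2 + l * η) := by
          rw [abs_of_pos hl0, abs_of_pos (hl0.trans_le hl), abs_of_nonneg (sub_nonneg.2 hl)]
          have := sub_nonneg.2 hl
          gcongr
          exacts [h.abs_le_two hη hx1, h.abs_sub_le x hx1]
      _ = l' * |v 0 * shoot ω l' x - v x| + (2 * (l' - l) + l * η) := by ring
  · simp [shoot_zero_right]

lemma abs_mul_rhs_sub_add_le (h : IsApproxNeumannSol m a B η l ω U v) (hη : η ≤ 1) (hl : l ≤ l')
    {p x : ℝ} (hx : x ∈ Ioo (0 : ℝ) 1) (hp : |p - v x| ≤ Z) :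
    |p * (l * U x - l' * v x) + (l' - l) * v x ^ 2| ≤ 2 * l * η + Z * (l * η + 2 * (l' - l)) := by
  have hv2 := h.abs_le_two hη hx
  have hUv : |l * (U x - v x)| ≤ l * η := by
    have := h.pos
    rw [abs_mul, abs_of_pos this]; gcongr; exact h.abs_sub_le x hx
  have hlv : |(l' - l) * v x| ≤ (l' - l) * 2 := by
    have := sub_nonneg.2 hl
    rw [abs_mul, abs_of_nonneg this]; gcongr
  have hZ0 : 0 ≤ Z := (abs_nonneg _).trans hp
  calc |p * (l * U x - l' * v x) + (l' - l) * v x ^ 2|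
      = |v x * (l * (U x - v x)) + (p - v x) * (l * (U x - v x) - (l' - l) * v x)| := by ring_nf
    _ ≤ |v x| * |l * (U x - v x)| + |p - v x| * (|l * (U x - v x)| + |(l' - l) * v x|) := by
        simp only [← abs_mul]
        refine (abs_add_le _ _).trans ?_
        gcongr
        rw [abs_mul (p - v x)]
        gcongr
        exact abs_sub _ _
    _ ≤ 2 * (l * η) + Z * (l * η + (l' - l) * 2) := by gcongr
    _ = 2 * l * η + Z * (l * η + 2 * (l' - l)) := by ring

/-- Green's identity between the approximate solution and the shooting solution at `l' > l`. -/
lemma mul_shoot_mul_integral_le (h : IsApproxNeumannSol m a B η l ω U v) (hη : η ≤ 1) (hl : l ≤ l')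
    (hc : c ∈ Ioo (0 : ℝ) 1) (hvc : v c = 0)
    (hZ : ∀ x ∈ Icc 0 c, |v 0 * shoot ω l' x - v x| ≤ Z) :
    v 0 * shoot ω l' c * (l * ∫ s in 0..c, ω s * U s)
      ≤ -((l' - l) * ∫ s in 0..c, ω s * v s ^ 2)
        + 2 ^ m * ω (1 / 2) * (2 * l * η + Z * (l * η + 2 * (l' - l))) := by
  have hbound := fun x (hx : x ∈ Ioo 0 c) => h.abs_mul_rhs_sub_add_le hη hl
    ⟨hx.1, hx.2.trans hc.2⟩ (hZ x (Ioo_subset_Icc_self hx))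
  have hp := (h.weight.isFluxSolution_shoot hc.1.le hc.2 l').const_mul (v 0)
  have hv := h.isFluxSolution.mono (Ioo_subset_Icc_self hc)
  have hgreen := hp.mul_flux_sub_mul_flux h.weight hc.1.le hc.2.le hv
  have hdefect := h.weight.abs_integral_mul_le hc.1.le hc.2.le
    (f := fun x => v 0 * shoot ω l' x * (l * U x - l' * v x) + (l' - l) * v x ^ 2)
    ((abs_nonneg _).trans (hbound (c / 2) ⟨by linarith [hc.1], by linarith [hc.1]⟩)) hbound
  have hsq := h.weight.intervalIntegrable_mul hc.1.le hc.2.le (f := fun x => v x ^ 2)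
    (hv.continuousOn.pow 2)
  have hsum : v 0 * shoot ω l' c * (l * ∫ s in 0..c, ω s * U s)
        + (l' - l) * ∫ s in 0..c, ω s * v s ^ 2
      = ∫ s in 0..c, ω s
        * (v 0 * shoot ω l' s * (l * U s - l' * v s) + (l' - l) * v s ^ 2) := by
    simp only [hvc, zero_mul, sub_zero, mul_left_comm (ω _) l,
      intervalIntegral.integral_const_mul] at hgreen
    rw [hgreen, ← intervalIntegral.integral_const_mul,
      ← intervalIntegral.integral_add _ (hsq.const_mul _)]
    · exact intervalIntegral.integral_congr fun s _ => by ring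
    · simpa only [mul_left_comm (ω _) l] using
        (intervalIntegrable_mul_continuousOn hc.1.le hv.intervalIntegrable hp.continuousOn).sub
        (intervalIntegrable_mul_continuousOn hc.1.le hp.intervalIntegrable hv.continuousOn)
  linarith [le_of_abs_le hdefect]

end IsApproxNeumannSol

namespace IsApproxNeumannSol

variable {m : ℕ} {a B c δ η l l' T Z Λ : ℝ} {ω U v : ℝ → ℝ}

lemma shoot_nonpos (h : IsApproxNeumannSol m a B η l ω U v) (ha : 0 < a) (hB : 0 ≤ B)
    (hδ0 : 0 < δ) (hδ : δ ≤ 1 / 2) (hδB : 2 * B * δ ≤ a) (hη : η ≤ 1) (hl : l ≤ l')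
    (hc : c ∈ Icc δ (1 - δ)) (hvc : v c = 0) (hF : 0 < ∫ s in 0..c, ω s * U s)
    (hZ : ∀ x ∈ Icc 0 c, |v 0 * shoot ω l' x - v x| ≤ Z)
    (hgap : 2 ^ m * (2 * l * η + Z * (l * η + 2 * (l' - l)))
      ≤ (l' - l) * ((a / 2) ^ 2 * coneMass m δ)) :
    shoot ω l' c ≤ 0 := by
  have hcI : c ∈ Ioo (0 : ℝ) 1 := ⟨by linarith [hc.1], by linarith [hc.2]⟩
  have hsq := mul_le_mul_of_nonneg_left
    (h.mul_coneMass_le_integral_sq ha hB hδ0 hδ hδB ⟨hc.1, hcI.2.le⟩) (sub_nonneg.2 hl)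
  have hprod : shoot ω l' c * (v 0 * (l * ∫ s in 0..c, ω s * U s)) ≤ 0 := by
    linarith [h.mul_shoot_mul_integral_le hη hl hcI hvc hZ,
      mul_le_mul_of_nonneg_right hgap h.weight.half_pos.le]
  exact nonpos_of_mul_nonpos_left hprod (mul_pos (ha.trans_le h.le_left) (mul_pos h.pos hF))

lemma integral_mul_shoot_pos (h : IsApproxNeumannSol m a B η l ω U v) (ha : 0 < a)
    (hc : c ∈ Ico (0 : ℝ) 1) (hZ : ∀ x ∈ Icc 0 c, |v 0 * shoot ω l' x - v x| ≤ Z)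
    (hF : 2 ^ m * ω (1 / 2) * (Z + η) < ∫ s in 0..c, ω s * U s) :
    0 < ∫ s in 0..c, ω s * shoot ω l' s := by
  have hZ0 : 0 ≤ Z := (abs_nonneg _).trans (hZ c ⟨hc.1, le_rfl⟩)
  have hint := h.weight.intervalIntegrable_mul hc.1 hc.2.le
    (h.weight.continuousOn_shoot hc.1 hc.2 l')
  have hdiff := h.weight.abs_integral_mul_le (f := fun s => v 0 * shoot ω l' s - U s) hc.1 hc.2.le
    (C := Z + η) (by linarith [h.nonneg]) fun x hx => by
      have hxU := h.abs_sub_le x ⟨hx.1, hx.2.trans hc.2⟩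
      rw [abs_sub_comm] at hxU
      exact (_root_.abs_sub_le _ (v x) _).trans (add_le_add (hZ x (Ioo_subset_Icc_self hx)) hxU)
  simp only [mul_sub, mul_left_comm (ω _)] at hdiff
  rw [intervalIntegral.integral_sub (hint.const_mul _) (h.intervalIntegrable ⟨hc.1, hc.2.le⟩),
    intervalIntegral.integral_const_mul] at hdiff
  exact pos_of_mul_pos_right (by linarith [(abs_le.1 hdiff).1]) (ha.le.trans h.le_left)

lemma abs_mul_shoot_add_mul_sub_le (h : IsApproxNeumannSol m a B η l ω U v) (hη : η ≤ 1)
    (hK : 0 ≤ K) (hKη : K * η ≤ 1) (hl : l ≤ Λ) (hT0 : 0 ≤ T) (hT : T < 1) {t : ℝ}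
    (ht : t ∈ Icc 0 T) :
    |v 0 * shoot ω (l + K * η) t - v t| ≤
      2 * (coneConst m T * (2 * K + Λ)) * Real.exp (2 * (coneConst m T * (Λ + 1))) * η := by
  have hη0 := h.nonneg
  have := h.pos
  have hΛ : 0 < Λ := this.trans_le hl
  have := coneConst_pos (m := m) hT
  calc _ ≤ 2 * (coneConst m T * (2 * (l + K * η - l) + l * η))
          * Real.exp (2 * (coneConst m T * (l + K * η))) :=
        h.abs_mul_shoot_sub_le hη (le_add_of_nonneg_right (by positivity)) hT0 hT ht
    _ ≤ 2 * (coneConst m T * (2 * (K * η) + Λ * η))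
          * Real.exp (2 * (coneConst m T * (Λ + 1))) := by
        rw [add_sub_cancel_left]
        gcongr
    _ = _ := by ring

/-- The constants: `K` makes `(l' - l) ∫ ω v²` beat the error `O(η)` in Green's identity, and then
`η₀` makes the quadratic errors negligible. -/
lemma exists_shoot_nonpos_and_integral_pos (m : ℕ) (ha : 0 < a) (hB : 0 ≤ B) (hδ0 : 0 < δ)
    (hδ : δ ≤ 1 / 2) (hδB : 2 * B * δ ≤ a) (hΛ : 0 < Λ) :
    ∃ K > 0, ∃ η₀ > 0, ∀ {c η l : ℝ} {ω U v : ℝ → ℝ}, IsApproxNeumannSol m a B η l ω U v →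
      η < η₀ → l ≤ Λ → c ∈ Icc δ (1 - δ) → v c = 0 →
      a / 4 * coneMass m δ * ω (1 / 2) ≤ ∫ s in 0..c, ω s * U s →
      shoot ω (l + K * η) c ≤ 0 ∧ 0 < ∫ s in 0..c, ω s * shoot ω (l + K * η) s := by
  have hmass := coneMass_pos (m := m) hδ0
  have hk := coneConst_pos (m := m) (T := 1 - δ) (by linarith)
  set k := coneConst m (1 - δ)
  set κ := (a / 2) ^ 2 * coneMass m δ
  have hκ0 : 0 < κ := by positivity
  set K := 2 ^ m * (2 * Λ + 1) / κ
  have hKκ : K * κ = 2 ^ m * (2 * Λ + 1) := div_mul_cancel₀ _ hκ0.ne'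
  have hK0 : 0 < K := by positivity
  set C := 2 * (k * (2 * K + Λ)) * Real.exp (2 * (k * (Λ + 1)))
  have : 0 < C := by positivity
  refine ⟨K, hK0, min (min 1 (1 / K)) (min (1 / (C * (Λ + 2 * K)))
    (a / 4 * coneMass m δ / (2 ^ m * (C + 1)))), by positivity,
    fun {c η l ω U v} h hη hlΛ hc hvc hF => ?_⟩
  simp only [lt_min_iff, lt_div_iff₀ hK0, lt_div_iff₀ (show 0 < C * (Λ + 2 * K) by positivity),
    lt_div_iff₀ (show 0 < 2 ^ m * (C + 1) by positivity)] at hη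
  obtain ⟨⟨hη1, hηK⟩, hηC, hηF⟩ := hη
  have hη0 := h.nonneg
  have := h.pos
  have hω := h.weight.half_pos
  have hc01 : c ∈ Ico (0 : ℝ) 1 := ⟨by linarith [hc.1], by linarith [hc.2]⟩
  have hl : l ≤ l + K * η := le_add_of_nonneg_right (by positivity)
  have hZ : ∀ x ∈ Icc 0 c, |v 0 * shoot ω (l + K * η) x - v x| ≤ C * η := fun x hx =>
    h.abs_mul_shoot_add_mul_sub_le hη1.le hK0.le (by linarith) hlΛ (by linarith) (by linarith)
      (Icc_subset_Icc_right hc.2 hx)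
  constructor
  · refine h.shoot_nonpos ha hB hδ0 hδ hδB hη1.le hl hc hvc
      (lt_of_lt_of_le (by positivity) hF) hZ ?_
    calc 2 ^ m * (2 * l * η + C * η * (l * η + 2 * (l + K * η - l)))
        ≤ 2 ^ m * (2 * Λ * η + C * η * (Λ * η + 2 * (K * η))) := by
          rw [add_sub_cancel_left]
          gcongr
      _ = 2 ^ m * η * (2 * Λ + η * (C * (Λ + 2 * K))) := by ring
      _ ≤ 2 ^ m * η * (2 * Λ + 1) := by gcongr
      _ = (l + K * η - l) * κ := by linear_combination (-η) * hKκ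
  · refine h.integral_mul_shoot_pos ha hc01 hZ (lt_of_lt_of_le ?_ hF)
    calc 2 ^ m * ω (1 / 2) * (C * η + η) = η * (2 ^ m * (C + 1)) * ω (1 / 2) := by ring
      _ < a / 4 * coneMass m δ * ω (1 / 2) := by gcongr

lemma integral_mul_reflect (h : IsApproxNeumannSol m a B η l ω U v) (hc : c ∈ Icc (0 : ℝ) 1) :
    ∫ s in 0..(1 - c), ω (1 - s) * -U (1 - s) = ∫ s in 0..c, ω s * U s := by
  have hint := h.intervalIntegrable ⟨zero_le_one, le_rfl⟩
  have hadd := intervalIntegral.integral_add_adjacent_intervals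
    (intervalIntegrable_mono_Icc hint ⟨le_rfl, zero_le_one⟩ hc)
    (intervalIntegrable_mono_Icc hint hc ⟨zero_le_one, le_rfl⟩)
  simp only [mul_neg, intervalIntegral.integral_neg]
  rw [intervalIntegral.integral_comp_sub_left (fun s => ω s * U s), sub_sub_cancel, sub_zero]
  linarith [h.integral_eq_zero]

end IsApproxNeumannSol

lemma IsConeWeight.exists_isNeumannEigenvalue_of_matchingDet_nonpos {m : ℕ} {ω : ℝ → ℝ} {c l : ℝ}
    (h : IsConeWeight m ω) (hc : c ∈ Ioo (0 : ℝ) 1) (hl : 0 ≤ l) (hdet : matchingDet ω c l ≤ 0) :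
    ∃ μ ∈ Ioc 0 l, IsNeumannEigenvalue ω μ := by
  have hc' := one_sub_mem_Ioo hc
  have hcont : Continuous (matchingDet ω c) :=
    ((h.continuous_shoot_left ⟨hc.1.le, hc.2⟩).mul
      (h.reflect.continuous_integral_mul_shoot_left ⟨hc'.1.le, hc'.2⟩)).add
    ((h.reflect.continuous_shoot_left ⟨hc'.1.le, hc'.2⟩).mul
      (h.continuous_integral_mul_shoot_left ⟨hc.1.le, hc.2⟩))
  have hmass : ∀ {ω : ℝ → ℝ} {c : ℝ}, IsConeWeight m ω → c ∈ Ioo (0 : ℝ) 1 →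
      0 < ∫ s in 0..c, ω s * shoot ω 0 s := fun {ω c} h hc => by
    refine intervalIntegral.intervalIntegral_pos_of_pos_on (h.intervalIntegrable_mul hc.1.le
      hc.2.le (h.continuousOn_shoot hc.1.le hc.2 0)) (fun x hx => ?_) hc.1
    simpa [shoot_zero_left] using h.pos x ⟨hx.1, hx.2.trans hc.2⟩
  have hdet0 : 0 < matchingDet ω c 0 := by
    have hr := hmass h.reflect hc'
    have hl := hmass h hc
    simp only [matchingDet, shoot_zero_left] at hr hl ⊢
    linarith
  obtain ⟨μ, hμ, hμdet⟩ := intermediate_value_Icc' hl hcont.continuousOn ⟨hdet, hdet0.le⟩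
  have hμ0 : μ ≠ 0 := by rintro rfl; exact hdet0.ne' hμdet
  exact ⟨μ, ⟨hμ.1.lt_of_ne' hμ0, hμ.2⟩, h.isNeumannEigenvalue_of_matchingDet_eq_zero hc hμdet⟩

namespace IsApproxNeumannSol

lemma exists_isNeumannEigenvalue_le (m : ℕ) {a B : ℝ} (ha : 0 < a) (hB : 0 < B) :
    ∃ Λ > 0, ∃ K > 0, ∃ η₀ > 0, ∀ {η l : ℝ} {ω U v : ℝ → ℝ}, IsApproxNeumannSol m a B η l ω U v →
      η < η₀ → l ≤ Λ ∧ ∃ μ ∈ Ioc 0 (l + K * η), IsNeumannEigenvalue ω μ := by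
  set δ := min (1 / 2) (a / (2 * B))
  have hδ0 : 0 < δ := by positivity
  have hδ : δ ≤ 1 / 2 := min_le_left _ _
  have hδB : 2 * B * δ ≤ a := by
    rw [← le_div_iff₀' (by positivity)]; exact min_le_right _ _
  have hmass : 0 < a / 4 * coneMass m δ := mul_pos (by positivity) (coneMass_pos hδ0)
  obtain ⟨K, hK, η₁, hη₁, hsign⟩ := exists_shoot_nonpos_and_integral_pos m ha hB.le hδ0 hδ hδB
    (Λ := 2 ^ m * B / (a / 4 * coneMass m δ)) (by positivity)
  refine ⟨2 ^ m * B / (a / 4 * coneMass m δ), by positivity, K, hK,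
    min η₁ (min (a / 4) (a / 4 * coneMass m δ / 2 ^ m)), by positivity,
    fun {η l ω U v} h hη => ?_⟩
  simp only [lt_min_iff, lt_div_iff₀' (show (0 : ℝ) < 2 ^ m by positivity)] at hη
  have hlΛ : l ≤ 2 ^ m * B / (a / 4 * coneMass m δ) := by
    rw [le_div_iff₀ hmass]
    exact h.mul_coneMass_le ha hB.le hδ0 hδ hδB hη.2.1.le
  obtain ⟨c, hc, hvc, hv0⟩ := h.exists_eq_zero ha hB hδB
  have hcI : c ∈ Ioo (0 : ℝ) 1 := ⟨by linarith [hc.1], by linarith [hc.2]⟩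
  have hF := h.mul_coneMass_le_integral ha hB.le hδ0 hδ hδB hη.2.2.le ⟨hc.1, hcI.2.le⟩ hv0
  obtain ⟨hsl, hGl⟩ := hsign h hη.1 hlΛ hc hvc hF
  obtain ⟨hsr, hGr⟩ := hsign (c := 1 - c) h.reflect hη.1 hlΛ
    ⟨by linarith [hc.2], by linarith [hc.1]⟩ (by simp [hvc])
    (by rw [h.integral_mul_reflect (Ioo_subset_Icc_self hcI)]; norm_num; linarith)
  exact ⟨hlΛ, h.weight.exists_isNeumannEigenvalue_of_matchingDet_nonpos hcI
    (add_nonneg h.pos.le (mul_nonneg hK.le h.nonneg)) (add_nonpos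
      (mul_nonpos_of_nonpos_of_nonneg hsl hGr.le) (mul_nonpos_of_nonpos_of_nonneg hsr hGl.le))⟩

end IsApproxNeumannSol

/-! ### Comparison with the first eigenfunction of the weighted problem -/

namespace NeumannSol

variable {m : ℕ} {ω φ φd : ℝ → ℝ} {μ : ℝ}

lemma continuousOn (hφ : NeumannSol ω μ φ φd) : ContinuousOn φ (Icc 0 1) := fun x hx =>
  (hφ.1 x hx).continuousWithinAt

lemma tendsto_flux (h : IsConeWeight m ω) (hφ : NeumannSol ω μ φ φd) {p : ℝ}
    (hp : p ∈ Icc (0 : ℝ) 1) (hφdp : φd p = 0) :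
    Tendsto (fun t => ω t * φd t) (𝓝[Ioo 0 1] p) (𝓝 0) := by
  have hφd : Tendsto φd (𝓝[Ioo 0 1] p) (𝓝 (φd p)) :=
    (hφ.2.1 p hp).mono_left (nhdsWithin_mono p Ioo_subset_Icc_self)
  rw [hφdp] at hφd
  refine squeeze_zero_norm' (a := fun t => 2 ^ m * ω (1 / 2) * |φd t|) ?_
    (by simpa using hφd.abs.const_mul (2 ^ m * ω (1 / 2)))
  filter_upwards [self_mem_nhdsWithin] with t ht using h.abs_mul_le ht le_rfl

lemma integral_mul_eq_neg (h : IsConeWeight m ω) (hφ : NeumannSol ω μ φ φd) {t : ℝ}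
    (ht : t ∈ Ioc (0 : ℝ) 1) {F : ℝ} (hF : Tendsto (fun t => ω t * φd t) (𝓝[<] t) (𝓝 F)) :
    ∫ s in 0..t, ω s * (μ * φ s) = -F := by
  have hleft : Tendsto (fun t => ω t * φd t) (𝓝[>] 0) (𝓝 0) := by
    rw [← nhdsWithin_Ioo_eq_nhdsGT zero_lt_one]
    exact hφ.tendsto_flux h (left_mem_Icc.2 zero_le_one) hφ.2.2.1
  have := intervalIntegral.integral_eq_sub_of_hasDerivAt_of_tendsto ht.1
    (fun x hx => hφ.2.2.2.2.2 x ⟨hx.1, hx.2.trans_le ht.2⟩) ?_ hleft hF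
  · rw [sub_zero] at this
    rw [← this, ← intervalIntegral.integral_neg]
    exact intervalIntegral.integral_congr fun s _ => by ring
  · have := (h.intervalIntegrable_mul ht.1.le ht.2 (continuousOn_const.mul
      (hφ.continuousOn.mono (Icc_subset_Icc_right ht.2)))).neg (f := fun s => ω s * (μ * φ s))
    exact this.congr fun s _ => by simp only [Pi.neg_apply]; ring

lemma integral_eq_zero (h : IsConeWeight m ω) (hφ : NeumannSol ω μ φ φd) :
    ∫ s in 0..1, ω s * (μ * φ s) = 0 := by
  rw [hφ.integral_mul_eq_neg h ⟨zero_lt_one, le_rfl⟩ (F := 0), neg_zero]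
  rw [← nhdsWithin_Ioo_eq_nhdsLT zero_lt_one]
  exact hφ.tendsto_flux h (right_mem_Icc.2 zero_le_one) hφ.2.2.2.1

lemma eq_neg_weightedPrimitive (h : IsConeWeight m ω) (hφ : NeumannSol ω μ φ φd) {t : ℝ}
    (ht : t ∈ Ioo (0 : ℝ) 1) : φd t = -weightedPrimitive ω (fun x => μ * φ x) t := by
  have hcont := (hφ.2.2.2.2.2 t ht).continuousAt.continuousWithinAt (s := Iio t)
  have hωt := (h.pos t ht).ne'
  rw [weightedPrimitive, hφ.integral_mul_eq_neg h ⟨ht.1, ht.2.le⟩ hcont]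
  field_simp

lemma isFluxSolution (h : IsConeWeight m ω) (hφ : NeumannSol ω μ φ φd) :
    IsFluxSolution ω 1 φ (fun x => μ * φ x) where
  continuousOn := hφ.continuousOn
  continuousOn_rhs := continuousOn_const.mul (hφ.continuousOn.mono Ioo_subset_Icc_self)
  intervalIntegrable := h.intervalIntegrable_mul zero_le_one le_rfl
    (continuousOn_const.mul hφ.continuousOn)
  hasDerivAt t ht := by
    rw [← hφ.eq_neg_weightedPrimitive h ht]
    exact (hφ.1 t (Ioo_subset_Icc_self ht)).hasDerivAt (Icc_mem_nhds ht.1 ht.2)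

end NeumannSol

theorem exists_abs_sub_neumannSol_le (m : ℕ) {a B : ℝ} (ha : 0 < a) (hB : 0 < B) :
    ∃ C > 0, ∃ η₀ > 0, ∀ {η l μ : ℝ} {ω U v φ φd : ℝ → ℝ}, IsApproxNeumannSol m a B η l ω U v →
      η < η₀ → l ≤ μ → NeumannSol ω μ φ φd →
      (∀ μ', 0 < μ' → IsNeumannEigenvalue ω μ' → μ ≤ μ') → φ 0 = v 0 →
      ∀ x ∈ Ioo (0 : ℝ) 1, |U x - φ x| ≤ C * η := by
  obtain ⟨Λ, hΛ, K, hK, η₁, hη₁, hexists⟩ :=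
    IsApproxNeumannSol.exists_isNeumannEigenvalue_le m ha hB
  obtain ⟨C, hC, hstab⟩ := exists_abs_le_of_isFluxSolution m (Λ := Λ + 1) (by positivity)
  refine ⟨1 + C * (Λ + 2 * K), by positivity, min η₁ (min 1 (1 / K)), by positivity,
    fun {η l μ ω U v φ φd} h hη hlμ hφ hmin hφv x hx => ?_⟩
  simp only [lt_min_iff, lt_div_iff₀' hK] at hη
  obtain ⟨hlΛ, μ', hμ', hμ'eig⟩ := hexists h hη.1
  have hμl : μ ≤ l + K * η := (hmin μ' hμ'.1 hμ'eig).trans hμ'.2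
  have hl0 := h.pos
  have hη0 := h.nonneg
  have hφsol := hφ.isFluxSolution h.weight
  have hmean : ∫ s in 0..1, ω s * (l * U s - μ * φ s) = 0 := by
    simp only [mul_sub]
    rw [intervalIntegral.integral_sub h.isFluxSolution.intervalIntegrable
      hφsol.intervalIntegrable, h.integral_rhs_eq_zero, hφ.integral_eq_zero h.weight, sub_zero]
  have hrhs : ∀ t ∈ Ioo (0 : ℝ) 1,
      |l * U t - μ * φ t| ≤ (Λ + 1) * |v t - φ t| + (Λ + 2 * K) * η := fun t ht => by
    calc |l * U t - μ * φ t|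
        = |μ * (v t - φ t) + (l * (U t - v t) - (μ - l) * v t)| := by ring_nf
      _ ≤ |μ| * |v t - φ t| + (|l| * |U t - v t| + |μ - l| * |v t|) := by
          simp only [← abs_mul]
          exact (abs_add_le _ _).trans (by gcongr; exact abs_sub _ _)
      _ ≤ (Λ + 1) * |v t - φ t| + (Λ * η + K * η * 2) := by
          rw [abs_of_pos hl0, abs_of_pos (hl0.trans_le hlμ), abs_of_nonneg (sub_nonneg.2 hlμ)]
          gcongr
          exacts [by linarith, h.abs_sub_le t ht, by linarith, h.abs_le_two hη.2.1.le ht]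
      _ = (Λ + 1) * |v t - φ t| + (Λ + 2 * K) * η := by ring
  have hz := hstab h.weight (by positivity) (h.isFluxSolution.sub hφsol) hmean hrhs x
    (Ioo_subset_Icc_self hx)
  rw [hφv, sub_self, abs_zero, zero_add] at hz
  calc |U x - φ x| ≤ |U x - v x| + |v x - φ x| := abs_sub_le _ _ _
    _ ≤ η + C * ((Λ + 2 * K) * η) := add_le_add (h.abs_sub_le x hx) hz
    _ = (1 + C * (Λ + 2 * K)) * η := by ring

/-! ### Splitting off the first coordinate -/

section Coordinates

variable {m : ℕ}

lemma mkPt_apply_zero (x : ℝ) (y : EuclideanSpace ℝ (Fin m)) : mkPt m x y 0 = x := by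
  simp [mkPt, EuclideanSpace.equiv]

lemma mkPt_apply_succ (x : ℝ) (y : EuclideanSpace ℝ (Fin m)) (i : Fin m) :
    mkPt m x y i.succ = y i := by
  simp [mkPt, EuclideanSpace.equiv]

lemma exists_eq_mkPt (p : EuclideanSpace ℝ (Fin (m + 1))) : ∃ y, p = mkPt m (p 0) y := by
  refine ⟨WithLp.toLp 2 fun i => p i.succ, ?_⟩
  ext i
  cases i using Fin.cases with
  | zero => rw [mkPt_apply_zero]
  | succ i => rw [mkPt_apply_succ]

lemma smul_mkPt_add_smul_mkPt (a b x x' : ℝ) (y y' : EuclideanSpace ℝ (Fin m)) :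
    a • mkPt m x y + b • mkPt m x' y' = mkPt m (a * x + b * x') (a • y + b • y') := by
  ext i
  cases i using Fin.cases <;> simp [mkPt_apply_zero, mkPt_apply_succ]

lemma mkPt_sub_mkPt (x x' : ℝ) (y y' : EuclideanSpace ℝ (Fin m)) :
    mkPt m x y - mkPt m x' y' = mkPt m (x - x') (y - y') := by
  simpa [← sub_eq_add_neg] using smul_mkPt_add_smul_mkPt 1 (-1) x x' y y'

lemma norm_mkPt_le (x : ℝ) (y : EuclideanSpace ℝ (Fin m)) : ‖mkPt m x y‖ ≤ |x| + ‖y‖ := by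
  have hsq : ‖mkPt m x y‖ ^ 2 = |x| ^ 2 + ‖y‖ ^ 2 := by
    rw [EuclideanSpace.real_norm_sq_eq, EuclideanSpace.real_norm_sq_eq, Fin.sum_univ_succ, sq_abs]
    simp only [mkPt_apply_zero, mkPt_apply_succ]
  refine abs_le_of_sq_le_sq' ?_ (by positivity) |>.2
  rw [hsq, add_sq]
  have : 0 ≤ 2 * |x| * ‖y‖ := by positivity
  linarith

lemma continuous_mkPt : Continuous fun p : ℝ × EuclideanSpace ℝ (Fin m) => mkPt m p.1 p.2 := by
  refine (EuclideanSpace.equiv (Fin (m + 1)) ℝ).symm.continuous.comp (continuous_pi fun i => ?_)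
  cases i using Fin.cases with
  | zero => simpa using continuous_fst
  | succ i =>
    exact (continuous_apply i).comp
      ((EuclideanSpace.equiv (Fin m) ℝ).continuous.comp continuous_snd)

lemma continuous_mkPt_left (y : EuclideanSpace ℝ (Fin m)) : Continuous fun x => mkPt m x y :=
  continuous_mkPt.comp (Continuous.prodMk_left y)

lemma continuous_mkPt_right (x : ℝ) : Continuous (mkPt m x) :=
  continuous_mkPt.comp (Continuous.prodMk_right x)

/-- The map `(x, y) ↦ mkPt m x y` as a measurable equivalence, through which Fubini's theorem is
transported to `EuclideanSpace ℝ (Fin (m + 1))`. -/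
def mkPtEquiv (m : ℕ) : ℝ × EuclideanSpace ℝ (Fin m) ≃ᵐ EuclideanSpace ℝ (Fin (m + 1)) :=
  (((MeasurableEquiv.refl ℝ).prodCongr (MeasurableEquiv.toLp 2 (Fin m → ℝ)).symm).trans
    (MeasurableEquiv.piFinSuccAbove (fun _ : Fin (m + 1) => ℝ) 0).symm).trans
    (MeasurableEquiv.toLp 2 (Fin (m + 1) → ℝ))

lemma mkPtEquiv_apply (p : ℝ × EuclideanSpace ℝ (Fin m)) : mkPtEquiv m p = mkPt m p.1 p.2 := by
  ext i
  cases i using Fin.cases with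
  | zero => simp [mkPt_apply_zero, mkPtEquiv, MeasurableEquiv.piFinSuccAbove]; rfl
  | succ i => simp [mkPt_apply_succ, mkPtEquiv, MeasurableEquiv.piFinSuccAbove]; rfl

lemma measurePreserving_mkPtEquiv (m : ℕ) :
    MeasurePreserving (mkPtEquiv m) (volume.prod volume) volume := by
  refine MeasurePreserving.trans (MeasurePreserving.trans (μb := volume) ?_ ?_) ?_ (μb := volume)
  · exact (MeasurePreserving.id volume).prod
      (EuclideanSpace.volume_preserving_symm_measurableEquiv_toLp (Fin m))
  · exact (volume_preserving_piFinSuccAbove (fun _ : Fin (m + 1) => ℝ) 0).symm _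
  · exact PiLp.volume_preserving_toLp (Fin (m + 1))

end Coordinates

/-! ### Homotheties -/

section Homothety

variable {m : ℕ} (c : EuclideanSpace ℝ (Fin m)) {r : ℝ} (S : Set (EuclideanSpace ℝ (Fin m)))

lemma homothety_eq_smul_add_smul (c : EuclideanSpace ℝ (Fin m)) (r : ℝ)
    (y : EuclideanSpace ℝ (Fin m)) : AffineMap.homothety c r y = (1 - r) • c + r • y := by
  rw [AffineMap.homothety_eq_lineMap, AffineMap.lineMap_apply_module]

lemma injective_homothety (hr : r ≠ 0) : Function.Injective (AffineMap.homothety c r) :=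
  fun y z hyz => smul_right_injective _ hr <| by
    simpa only [homothety_eq_smul_add_smul, add_right_inj] using hyz

lemma toReal_volume_image_homothety (hr : 0 ≤ r) :
    (volume (AffineMap.homothety c r '' S)).toReal = r ^ m * (volume S).toReal := by
  rw [Measure.addHaar_image_homothety, ENNReal.toReal_mul,
    ENNReal.toReal_ofReal (abs_nonneg _), finrank_euclideanSpace_fin, abs_of_nonneg (by positivity)]

lemma setIntegral_image_homothety (hr : 0 < r) (hS : MeasurableSet S)
    (F : EuclideanSpace ℝ (Fin m) → ℝ) :
    ∫ y in AffineMap.homothety c r '' S, F y =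
      r ^ m * ∫ z in S, F (AffineMap.homothety c r z) := by
  have hderiv : ∀ z ∈ S, HasFDerivWithinAt (AffineMap.homothety c r)
      (r • ContinuousLinearMap.id ℝ (EuclideanSpace ℝ (Fin m))) S z := fun z _ => by
    rw [funext (homothety_eq_smul_add_smul c r)]
    exact (((hasFDerivAt_id z).const_smul r).const_add _).hasFDerivWithinAt
  have hdet : |(r • ContinuousLinearMap.id ℝ (EuclideanSpace ℝ (Fin m))).det| = r ^ m := by
    simp [ContinuousLinearMap.det, LinearMap.det_smul, abs_of_pos hr]
  rw [integral_image_eq_integral_abs_det_fderiv_smul volume hS hderiv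
    (injective_homothety c hr.ne').injOn, hdet, integral_smul,
    smul_eq_mul]

end Homothety

/-! ### Cross-sections of convex domains -/

section Cross

variable {m : ℕ} {Ω : Set (EuclideanSpace ℝ (Fin (m + 1)))}

lemma isOpen_cross (hΩ : IsOpen Ω) (x : ℝ) : IsOpen (cross Ω x) :=
  hΩ.preimage (continuous_mkPt_right x)

lemma smul_add_smul_mem_cross (hΩ : Convex ℝ Ω) {a b x x' : ℝ} {y y' : EuclideanSpace ℝ (Fin m)}
    (hy : y ∈ cross Ω x) (hy' : y' ∈ cross Ω x') (ha : 0 ≤ a) (hb : 0 ≤ b) (hab : a + b = 1) :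
    a • y + b • y' ∈ cross Ω (a * x + b * x') := by
  have := hΩ hy hy' ha hb hab
  rwa [smul_mkPt_add_smul_mkPt] at this

lemma convex_cross (hΩ : Convex ℝ Ω) (x : ℝ) : Convex ℝ (cross Ω x) := by
  intro y hy z hz a b ha hb hab
  simpa only [← add_mul, hab, one_mul] using smul_add_smul_mem_cross hΩ hy hz ha hb hab

lemma mem_closure_cross (hΩ : IsOpen Ω) (hconv : Convex ℝ Ω) {x : ℝ} (hx : (cross Ω x).Nonempty)
    {y : EuclideanSpace ℝ (Fin m)} (hy : mkPt m x y ∈ closure Ω) : y ∈ closure (cross Ω x) := by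
  obtain ⟨z, hz⟩ := hx
  have hseg : ∀ t ∈ Ioo (0 : ℝ) 1, (1 - t) • z + t • y ∈ cross Ω x := by
    intro t ht
    have hmem := hconv.openSegment_interior_closure_subset_interior
      (hΩ.interior_eq.symm ▸ hz : mkPt m x z ∈ interior Ω) hy
      ⟨1 - t, t, by linarith [ht.2], ht.1, by ring, rfl⟩
    rwa [hΩ.interior_eq, smul_mkPt_add_smul_mkPt, ← add_mul, sub_add_cancel, one_mul] at hmem
  have hlim : Tendsto (fun t : ℝ => (1 - t) • z + t • y) (𝓝[<] 1) (𝓝 y) := by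
    have hcont : Continuous fun t : ℝ => (1 - t) • z + t • y := by fun_prop
    simpa using (hcont.tendsto 1).mono_left nhdsWithin_le_nhds
  refine mem_closure_of_tendsto hlim ?_
  filter_upwards [Ioo_mem_nhdsLT zero_lt_one] with t ht using hseg t ht

lemma mapsTo_homothety_cross (hΩ : Convex ℝ Ω) {x₀ a b r : ℝ} {y₀ : EuclideanSpace ℝ (Fin m)}
    (hy₀ : y₀ ∈ cross Ω x₀) (hr : r ∈ Icc (0 : ℝ) 1) (ha : a = (1 - r) * x₀ + r * b) :
    MapsTo (AffineMap.homothety y₀ r) (cross Ω b) (cross Ω a) := by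
  intro y hy
  rw [homothety_eq_smul_add_smul, ha]
  exact smul_add_smul_mem_cross hΩ hy₀ hy (sub_nonneg.2 hr.2) hr.1 (by ring)

lemma pow_mul_ωvol_le (hΩ : Convex ℝ Ω) {x₀ a b r : ℝ} (hx₀ : (cross Ω x₀).Nonempty)
    (hr : r ∈ Icc (0 : ℝ) 1) (ha : a = (1 - r) * x₀ + r * b) (hfin : volume (cross Ω a) ≠ ⊤) :
    r ^ m * ωvol Ω b ≤ ωvol Ω a := by
  obtain ⟨y₀, hy₀⟩ := hx₀
  rw [ωvol, ← toReal_volume_image_homothety y₀ _ hr.1]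
  exact ENNReal.toReal_mono hfin (measure_mono (mapsTo_homothety_cross hΩ hy₀ hr ha).image_subset)

lemma ωvol_mul_abs_sub_pow_le (hΩ : Convex ℝ Ω) {x₀ a b : ℝ} (hx₀ : (cross Ω x₀).Nonempty)
    (ha : a ∈ segment ℝ x₀ b) (hfin : volume (cross Ω a) ≠ ⊤) :
    ωvol Ω b * |a - x₀| ^ m ≤ ωvol Ω a * |b - x₀| ^ m := by
  obtain ⟨s, r, hs, hr, hsr, rfl⟩ := ha
  obtain rfl : s = 1 - r := by linarith
  have hvol := pow_mul_ωvol_le hΩ hx₀ ⟨hr, by linarith⟩ rfl hfin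
  have hdist : |(1 - r) • x₀ + r • b - x₀| = r * |b - x₀| := by
    rw [← abs_of_nonneg hr, ← abs_mul, abs_of_nonneg hr]
    congr 1
    simp only [smul_eq_mul]
    ring
  rw [hdist, mul_pow, ← mul_assoc, mul_comm (ωvol Ω b)]
  gcongr
  exact hvol

end Cross

/-! ### Thin convex domains -/

/-- A bounded open convex set contained in the cylinder `(0,1) × B(0, ε)` over the open ball of
radius `ε` in `ℝ^m`, all of whose cross-sections over `(0,1)` are nonempty. -/
structure IsThinConvexDomain {m : ℕ} (ε : ℝ) (Ω : Set (EuclideanSpace ℝ (Fin (m + 1)))) :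
    Prop where
  isOpen : IsOpen Ω
  convex : Convex ℝ Ω
  isBounded : Bornology.IsBounded Ω
  mem_of_mkPt_mem : ∀ x y, mkPt m x y ∈ Ω →
    x ∈ Ioo (0 : ℝ) 1 ∧ y ∈ Metric.ball (0 : EuclideanSpace ℝ (Fin m)) ε
  nonempty_cross : ∀ s ∈ Ioo (0 : ℝ) 1, (cross Ω s).Nonempty

/-- The integral `∫_{Ω(x)} f(x, y) dy` of `f` over a cross-section. -/
def sliceIntegral {m : ℕ} (Ω : Set (EuclideanSpace ℝ (Fin (m + 1))))
    (f : EuclideanSpace ℝ (Fin (m + 1)) → ℝ) (x : ℝ) : ℝ :=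
  ∫ y in cross Ω x, f (mkPt m x y)

/-- `f` is continuous and bounded on `Ω`; on a bounded domain, and on each of its cross-sections,
such functions are integrable. -/
structure IsBoundedContinuousOn {X E : Type*} [TopologicalSpace X] [NormedAddCommGroup E]
    (f : X → E) (Ω : Set X) : Prop where
  continuousOn : ContinuousOn f Ω
  exists_norm_le : ∃ C, ∀ p ∈ Ω, ‖f p‖ ≤ C

namespace IsBoundedContinuousOn

variable {X E : Type*} [TopologicalSpace X] {Ω : Set X}

lemma mul {f g : X → ℝ} (hf : IsBoundedContinuousOn f Ω) (hg : IsBoundedContinuousOn g Ω) :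
    IsBoundedContinuousOn (fun p => f p * g p) Ω := by
  obtain ⟨A, hA⟩ := hf.exists_norm_le
  obtain ⟨B, hB⟩ := hg.exists_norm_le
  refine ⟨hf.continuousOn.mul hg.continuousOn, A * B, fun p hp => (norm_mul_le _ _).trans ?_⟩
  exact mul_le_mul (hA p hp) (hB p hp) (norm_nonneg _) ((norm_nonneg _).trans (hA p hp))

lemma add_const_mul {f g : X → ℝ} (hf : IsBoundedContinuousOn f Ω)
    (hg : IsBoundedContinuousOn g Ω) (t : ℝ) :
    IsBoundedContinuousOn (fun p => f p + t * g p) Ω := by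
  obtain ⟨A, hA⟩ := hf.exists_norm_le
  obtain ⟨B, hB⟩ := hg.exists_norm_le
  refine ⟨hf.continuousOn.add (continuousOn_const.mul hg.continuousOn), A + ‖t‖ * B,
    fun p hp => (norm_add_le _ _).trans (add_le_add (hA p hp) ?_)⟩
  rw [norm_mul]
  exact mul_le_mul_of_nonneg_left (hB p hp) (norm_nonneg t)

lemma comp {Y : Type*} [TopologicalSpace Y] [NormedAddCommGroup E] {f : X → E} {g : Y → X}
    {T : Set Y} (hf : IsBoundedContinuousOn f Ω) (hg : ContinuousOn g T) (hgT : MapsTo g T Ω) :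
    IsBoundedContinuousOn (fun y => f (g y)) T :=
  ⟨hf.continuousOn.comp hg hgT, hf.exists_norm_le.imp fun _ hC _ hy => hC _ (hgT hy)⟩

lemma inner [NormedAddCommGroup E] [InnerProductSpace ℝ E] {f g : X → E}
    (hf : IsBoundedContinuousOn f Ω) (hg : IsBoundedContinuousOn g Ω) :
    IsBoundedContinuousOn (fun p => ⟪f p, g p⟫) Ω := by
  obtain ⟨A, hA⟩ := hf.exists_norm_le
  obtain ⟨B, hB⟩ := hg.exists_norm_le
  refine ⟨hf.continuousOn.inner hg.continuousOn, A * B,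
    fun p hp => (norm_inner_le_norm _ _).trans ?_⟩
  exact mul_le_mul (hA p hp) (hB p hp) (norm_nonneg _) ((norm_nonneg _).trans (hA p hp))

lemma isBounded_image [NormedAddCommGroup E] {f : X → E} (hf : IsBoundedContinuousOn f Ω) :
    Bornology.IsBounded (f '' Ω) :=
  let ⟨C, hC⟩ := hf.exists_norm_le
  isBounded_iff_forall_norm_le.2 ⟨C, forall_mem_image.2 hC⟩

lemma integrableOn [MeasurableSpace X] [OpensMeasurableSpace X] {μ : Measure X} {f : X → ℝ}
    (hf : IsBoundedContinuousOn f Ω) (hΩ : IsOpen Ω) (hfin : μ Ω ≠ ⊤) : IntegrableOn f Ω μ := by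
  obtain ⟨C, hC⟩ := hf.exists_norm_le
  exact IntegrableOn.of_bound hfin.lt_top
    (hf.continuousOn.aestronglyMeasurable hΩ.measurableSet) C
    (ae_restrict_of_forall_mem hΩ.measurableSet hC)

end IsBoundedContinuousOn

lemma sliceIntegral_one {m : ℕ} {Ω : Set (EuclideanSpace ℝ (Fin (m + 1)))} (x : ℝ) :
    sliceIntegral Ω (fun _ => 1) x = ωvol Ω x := by
  simp [sliceIntegral, ωvol, Measure.real]

lemma sliceIntegral_mul_comp_apply_zero {m : ℕ} {Ω : Set (EuclideanSpace ℝ (Fin (m + 1)))}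
    (f : EuclideanSpace ℝ (Fin (m + 1)) → ℝ) (η : ℝ → ℝ) (x : ℝ) :
    sliceIntegral Ω (fun p => f p * η (p 0)) x = sliceIntegral Ω f x * η x := by
  simp only [sliceIntegral, mkPt_apply_zero, integral_mul_const]

namespace IsThinConvexDomain

variable {m : ℕ} {ε : ℝ} {Ω : Set (EuclideanSpace ℝ (Fin (m + 1)))}
  {f : EuclideanSpace ℝ (Fin (m + 1)) → ℝ}

lemma apply_zero_mem (h : IsThinConvexDomain ε Ω) {p : EuclideanSpace ℝ (Fin (m + 1))}
    (hp : p ∈ Ω) : p 0 ∈ Ioo (0 : ℝ) 1 := by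
  obtain ⟨y, hy⟩ := exists_eq_mkPt p
  exact (h.mem_of_mkPt_mem (p 0) y (hy ▸ hp)).1

lemma nonempty (h : IsThinConvexDomain ε Ω) : Ω.Nonempty :=
  let ⟨_, hy⟩ := h.nonempty_cross (1 / 2) (by norm_num)
  ⟨_, hy⟩

lemma volume_ne_top (h : IsThinConvexDomain ε Ω) : volume Ω ≠ ⊤ := h.isBounded.measure_lt_top.ne

lemma cross_subset_ball (h : IsThinConvexDomain ε Ω) (x : ℝ) : cross Ω x ⊆ Metric.ball 0 ε :=
  fun y hy => (h.mem_of_mkPt_mem x y hy).2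

lemma volume_cross_ne_top (h : IsThinConvexDomain ε Ω) (x : ℝ) : volume (cross Ω x) ≠ ⊤ :=
  ((measure_mono (h.cross_subset_ball x)).trans_lt measure_ball_lt_top).ne

lemma cross_eq_empty (h : IsThinConvexDomain ε Ω) {x : ℝ} (hx : x ∉ Ioo (0 : ℝ) 1) :
    cross Ω x = ∅ :=
  eq_empty_of_forall_notMem fun y hy => hx (h.mem_of_mkPt_mem x y hy).1

lemma ωvol_pos (h : IsThinConvexDomain ε Ω) {x : ℝ} (hx : x ∈ Ioo (0 : ℝ) 1) : 0 < ωvol Ω x :=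
  ENNReal.toReal_pos ((isOpen_cross h.isOpen x).measure_pos volume (h.nonempty_cross x hx)).ne'
    (h.volume_cross_ne_top x)

lemma isBoundedContinuousOn_comp_apply_zero (h : IsThinConvexDomain ε Ω) {η : ℝ → ℝ}
    (hη : Continuous η) :
    IsBoundedContinuousOn (fun p : EuclideanSpace ℝ (Fin (m + 1)) => η (p 0)) Ω where
  continuousOn := by fun_prop
  exists_norm_le := by
    obtain ⟨C, hC⟩ := isCompact_Icc.exists_bound_of_continuousOn (hη.continuousOn (s := Icc 0 1))
    exact ⟨C, fun p hp => hC _ (Ioo_subset_Icc_self (h.apply_zero_mem hp))⟩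

lemma integrableOn (h : IsThinConvexDomain ε Ω) (hf : IsBoundedContinuousOn f Ω) :
    IntegrableOn f Ω :=
  hf.integrableOn h.isOpen h.volume_ne_top

lemma integrableOn_cross (h : IsThinConvexDomain ε Ω) (hf : IsBoundedContinuousOn f Ω) (x : ℝ) :
    IntegrableOn (fun y => f (mkPt m x y)) (cross Ω x) :=
  (hf.comp (continuous_mkPt_right x).continuousOn fun _ hy => hy).integrableOn
    (isOpen_cross h.isOpen x) (h.volume_cross_ne_top x)

lemma abs_sliceIntegral_le (h : IsThinConvexDomain ε Ω) {C x : ℝ}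
    (hC : ∀ y ∈ cross Ω x, |f (mkPt m x y)| ≤ C) : |sliceIntegral Ω f x| ≤ C * ωvol Ω x :=
  norm_setIntegral_le_of_norm_le_const (f := fun y => f (mkPt m x y))
    (h.volume_cross_ne_top x).lt_top hC

lemma integral_eq_integral_sliceIntegral (h : IsThinConvexDomain ε Ω)
    (hf : IsBoundedContinuousOn f Ω) :
    ∫ p in Ω, f p = ∫ x in (0 : ℝ)..1, sliceIntegral Ω f x := by
  have hslice : ∀ x, ∫ y, Ω.indicator f (mkPtEquiv m (x, y)) =
      (Ioo (0 : ℝ) 1).indicator (sliceIntegral Ω f) x := by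
    intro x
    have hind : ∀ y, Ω.indicator f (mkPtEquiv m (x, y)) =
        (cross Ω x).indicator (fun y => f (mkPt m x y)) y := fun y => by
      rw [mkPtEquiv_apply]
      rfl
    simp_rw [hind]
    rw [integral_indicator (isOpen_cross h.isOpen x).measurableSet]
    by_cases hx : x ∈ Ioo (0 : ℝ) 1
    · rw [indicator_of_mem hx, sliceIntegral]
    · rw [indicator_of_notMem hx, h.cross_eq_empty hx, Measure.restrict_empty,
        integral_zero_measure]
  have hint : Integrable (fun p => Ω.indicator f (mkPtEquiv m p)) (volume.prod volume) :=
    (measurePreserving_mkPtEquiv m).integrable_comp_of_integrable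
      ((integrable_indicator_iff h.isOpen.measurableSet).2 (h.integrableOn hf))
  rw [← integral_indicator h.isOpen.measurableSet,
    ← (measurePreserving_mkPtEquiv m).integral_comp', integral_prod _ hint,
    integral_congr_ae (Eventually.of_forall hslice), integral_indicator measurableSet_Ioo,
    intervalIntegral.integral_of_le zero_le_one, integral_Ioc_eq_integral_Ioo]

lemma continuousAt_indicator_mkPt (h : IsThinConvexDomain ε Ω) (hf : ContinuousOn f Ω) {x : ℝ}
    (hx : x ∈ Ioo (0 : ℝ) 1) {y : EuclideanSpace ℝ (Fin m)} (hy : y ∉ frontier (cross Ω x)) :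
    ContinuousAt (fun t => Ω.indicator f (mkPt m t y)) x := by
  have hpath : ContinuousAt (fun t => mkPt m t y) x := (continuous_mkPt_left y).continuousAt
  by_cases hmem : mkPt m x y ∈ Ω
  · have hΩ := h.isOpen.mem_nhds hmem
    have hcomp : ContinuousAt (fun t => f (mkPt m t y)) x :=
      ContinuousAt.comp (f := fun t => mkPt m t y) (hf.continuousAt hΩ) hpath
    refine hcomp.congr ?_
    filter_upwards [hpath.preimage_mem_nhds hΩ] with t ht
    exact (indicator_of_mem (show mkPt m t y ∈ Ω from ht) f).symm
  · have hcl : mkPt m x y ∉ closure Ω := fun hcl => hy <| by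
      rw [frontier, (isOpen_cross h.isOpen x).interior_eq]
      exact ⟨mem_closure_cross h.isOpen h.convex (h.nonempty_cross x hx) hcl, hmem⟩
    refine (continuousAt_const (y := (0 : ℝ))).congr ?_
    filter_upwards [hpath.preimage_mem_nhds (isClosed_closure.isOpen_compl.mem_nhds hcl)] with t ht
    exact (indicator_of_notMem (fun hΩ => ht (subset_closure hΩ)) f).symm

lemma continuousOn_sliceIntegral (h : IsThinConvexDomain ε Ω) (hf : IsBoundedContinuousOn f Ω) :
    ContinuousOn (sliceIntegral Ω f) (Ioo 0 1) := by
  have hind : ∀ t, (fun y => Ω.indicator f (mkPt m t y)) =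
      (cross Ω t).indicator fun y => f (mkPt m t y) := fun _ => rfl
  have heq : sliceIntegral Ω f = fun t => ∫ y, Ω.indicator f (mkPt m t y) := by
    ext t
    rw [hind, integral_indicator (isOpen_cross h.isOpen t).measurableSet, sliceIntegral]
  obtain ⟨C, hC⟩ := hf.exists_norm_le
  rw [heq]
  refine fun x hx => ContinuousAt.continuousWithinAt ?_
  refine continuousAt_of_dominated (bound := (Metric.ball 0 ε).indicator fun _ => C)
    (Eventually.of_forall fun t => ?_)
    (Eventually.of_forall fun t => Eventually.of_forall fun y => ?_) ?_ ?_
  · rw [hind, aestronglyMeasurable_indicator_iff (isOpen_cross h.isOpen t).measurableSet]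
    exact (h.integrableOn_cross hf t).aestronglyMeasurable
  · by_cases hy : mkPt m t y ∈ Ω
    · rw [indicator_of_mem hy, indicator_of_mem (h.mem_of_mkPt_mem t y hy).2]
      exact hC _ hy
    · obtain ⟨p, hp⟩ := h.nonempty
      rw [indicator_of_notMem hy, norm_zero]
      exact indicator_nonneg (fun _ _ => (norm_nonneg _).trans (hC p hp)) _
  · rw [integrable_indicator_iff measurableSet_ball]
    exact integrableOn_const measure_ball_lt_top.ne
  · have hfrontier : ∀ᵐ y, y ∉ frontier (cross Ω x) :=
      compl_mem_ae_iff.2 ((convex_cross h.convex x).addHaar_frontier volume)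
    filter_upwards [hfrontier] with y hy
    exact h.continuousAt_indicator_mkPt hf.continuousOn hx hy

lemma continuousOn_ωvol (h : IsThinConvexDomain ε Ω) : ContinuousOn (ωvol Ω) (Ioo 0 1) :=
  (h.continuousOn_sliceIntegral ⟨continuousOn_const, ‖(1 : ℝ)‖, fun _ _ => le_rfl⟩).congr
    fun x _ => (sliceIntegral_one x).symm

/-- Compare with the cone over the cross-section at `s` or `t` whose vertex tends to one of the two
ends of `Ω`. -/
lemma isConeWeight (h : IsThinConvexDomain ε Ω) : IsConeWeight m (ωvol Ω) where
  continuousOn := h.continuousOn_ωvol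
  pos _ := h.ωvol_pos
  mul_pow_le s t hs hst ht := by
    have hcont : ∀ a b : ℝ, Tendsto (fun x₀ : ℝ => ωvol Ω a * |b - x₀| ^ m) (𝓝[>] 0)
        (𝓝 (ωvol Ω a * |b - 0| ^ m)) := fun a b =>
      ((by fun_prop : Continuous fun x₀ : ℝ => ωvol Ω a * |b - x₀| ^ m).tendsto 0).mono_left
        nhdsWithin_le_nhds
    have hlim := le_of_tendsto_of_tendsto (hcont t s) (hcont s t) ?_
    · simpa only [sub_zero, abs_of_pos hs, abs_of_pos (hs.trans_le hst)] using hlim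
    filter_upwards [Ioo_mem_nhdsGT hs] with x₀ hx₀
    refine ωvol_mul_abs_sub_pow_le h.convex (h.nonempty_cross x₀ ⟨hx₀.1, by linarith [hx₀.2]⟩) ?_
      (h.volume_cross_ne_top s)
    rw [segment_eq_Icc (by linarith [hx₀.2])]
    exact ⟨hx₀.2.le, hst⟩
  mul_one_sub_pow_le s t hs hst ht := by
    have hcont : ∀ a b : ℝ, Tendsto (fun x₀ : ℝ => ωvol Ω a * |b - x₀| ^ m) (𝓝[<] 1)
        (𝓝 (ωvol Ω a * |b - 1| ^ m)) := fun a b =>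
      ((by fun_prop : Continuous fun x₀ : ℝ => ωvol Ω a * |b - x₀| ^ m).tendsto 1).mono_left
        nhdsWithin_le_nhds
    have hlim := le_of_tendsto_of_tendsto (hcont s t) (hcont t s) ?_
    · rw [abs_sub_comm, abs_sub_comm s] at hlim
      simpa only [abs_of_pos (sub_pos.2 ht), abs_of_pos (sub_pos.2 (hst.trans_lt ht))] using hlim
    filter_upwards [Ioo_mem_nhdsLT ht] with x₀ hx₀
    refine ωvol_mul_abs_sub_pow_le h.convex (h.nonempty_cross x₀ ⟨by linarith [hx₀.1], hx₀.2⟩) ?_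
      (h.volume_cross_ne_top t)
    rw [segment_symm, segment_eq_Icc (by linarith [hx₀.1])]
    exact ⟨hst, hx₀.1.le⟩

lemma exists_abs_sliceIntegral_le (h : IsThinConvexDomain ε Ω) (hf : IsBoundedContinuousOn f Ω) :
    ∃ C, ∀ x ∈ Ioo (0 : ℝ) 1, |sliceIntegral Ω f x| ≤ C := by
  obtain ⟨C, hC⟩ := hf.exists_norm_le
  obtain ⟨p, hp⟩ := h.nonempty
  have hC0 : 0 ≤ C := (norm_nonneg _).trans (hC p hp)
  refine ⟨C * (2 ^ m * ωvol Ω (1 / 2)), fun x hx => ?_⟩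
  calc |sliceIntegral Ω f x| ≤ C * ωvol Ω x := h.abs_sliceIntegral_le fun y hy => hC _ hy
    _ ≤ C * (2 ^ m * ωvol Ω (1 / 2)) := by
        gcongr
        exact h.isConeWeight.le_two_pow_mul_half hx

end IsThinConvexDomain

/-! ### The variational characterization of the first Neumann eigenvalue -/

section BoundedConvex

variable {k : ℕ} {Ω : Set (EuclideanSpace ℝ (Fin k))} {u w : EuclideanSpace ℝ (Fin k) → ℝ}

lemma isBoundedContinuousOn_of_closure {X E : Type*} [PseudoMetricSpace X] [ProperSpace X]
    [NormedAddCommGroup E] {f : X → E} {S : Set X} (hS : Bornology.IsBounded S)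
    (hf : ContinuousOn f (closure S)) : IsBoundedContinuousOn f S where
  continuousOn := hf.mono subset_closure
  exists_norm_le := (hS.isCompact_closure.exists_bound_of_continuousOn hf).imp
    fun _ hC p hp => hC p (subset_closure hp)

lemma hasGradientAt_of_contDiffOn_closure (hΩ : IsOpen Ω) (hw : ContDiffOn ℝ 1 w (closure Ω))
    {p : EuclideanSpace ℝ (Fin k)} (hp : p ∈ Ω) : HasGradientAt w (gradient w p) p :=
  (((hw.mono subset_closure).contDiffAt (hΩ.mem_nhds hp)).differentiableAt
    one_ne_zero).hasGradientAt

lemma gradientWithin_closure_eqOn (hΩ : IsOpen Ω) :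
    EqOn (gradientWithin w (closure Ω)) (gradient w) Ω := fun p hp => by
  rw [gradient, gradientWithin,
    fderivWithin_of_mem_nhds (mem_of_superset (hΩ.mem_nhds hp) subset_closure)]

lemma continuousOn_gradientWithin_closure (hΩ : IsOpen Ω) (hconv : Convex ℝ Ω)
    (hw : ContDiffOn ℝ 1 w (closure Ω)) :
    ContinuousOn (gradientWithin w (closure Ω)) (closure Ω) := by
  rcases Ω.eq_empty_or_nonempty with rfl | hne
  · rw [closure_empty]
    exact continuousOn_empty _
  · have huniq : UniqueDiffOn ℝ (closure Ω) :=
      uniqueDiffOn_convex hconv.closure (hne.mono (hΩ.subset_interior_iff.2 subset_closure))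
    exact (InnerProductSpace.toDual ℝ _).symm.continuous.comp_continuousOn
      (hw.continuousOn_fderivWithin huniq le_rfl)

lemma isBoundedContinuousOn_gradient (hΩ : IsOpen Ω) (hconv : Convex ℝ Ω)
    (hbdd : Bornology.IsBounded Ω) (hw : ContDiffOn ℝ 1 w (closure Ω)) :
    IsBoundedContinuousOn (gradient w) Ω := by
  have heq := gradientWithin_closure_eqOn (w := w) hΩ
  obtain ⟨hc, C, hC⟩ := isBoundedContinuousOn_of_closure hbdd
    (continuousOn_gradientWithin_closure hΩ hconv hw)
  exact ⟨hc.congr heq.symm, C, fun p hp => heq hp ▸ hC p hp⟩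

lemma uniformContinuousOn_gradient (hΩ : IsOpen Ω) (hconv : Convex ℝ Ω)
    (hbdd : Bornology.IsBounded Ω) (hw : ContDiffOn ℝ 1 w (closure Ω)) :
    UniformContinuousOn (gradient w) Ω :=
  ((hbdd.isCompact_closure.uniformContinuousOn_of_continuous
    (continuousOn_gradientWithin_closure hΩ hconv hw)).mono subset_closure).congr
      (gradientWithin_closure_eqOn hΩ)

lemma gradient_add_const_mul {p : EuclideanSpace ℝ (Fin k)} (hu : DifferentiableAt ℝ u p)
    (hw : DifferentiableAt ℝ w p) (t : ℝ) :
    gradient (fun q => u q + t * w q) p = gradient u p + t • gradient w p := by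
  rw [gradient, fderiv_fun_add hu (hw.const_mul t), fderiv_const_mul hw, map_add, map_smulₛₗ]
  rfl

lemma integral_norm_add_smul_sq_of_isBoundedContinuousOn {E : Type*} [NormedAddCommGroup E]
    [InnerProductSpace ℝ E] {f g : EuclideanSpace ℝ (Fin k) → E} (hΩ : IsOpen Ω)
    (hfin : volume Ω ≠ ⊤) (hf : IsBoundedContinuousOn f Ω) (hg : IsBoundedContinuousOn g Ω)
    (t : ℝ) :
    ∫ p in Ω, ‖f p + t • g p‖ ^ 2
      = (∫ p in Ω, ‖f p‖ ^ 2) + 2 * t * (∫ p in Ω, ⟪f p, g p⟫)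
        + t ^ 2 * ∫ p in Ω, ‖g p‖ ^ 2 := by
  have hff := (hf.inner hf).integrableOn hΩ hfin
  have hfg := ((hf.inner hg).integrableOn hΩ hfin).const_mul (2 * t)
  have hgg := ((hg.inner hg).integrableOn hΩ hfin).const_mul (t ^ 2)
  simp_rw [← real_inner_self_eq_norm_sq]
  rw [← integral_const_mul, ← integral_const_mul, ← integral_add hff hfg,
    ← integral_add (hff.fun_add hfg) hgg]
  congr 1 with p
  rw [inner_add_add_self, inner_smul_left, inner_smul_left, inner_smul_right, inner_smul_right,
    real_inner_comm (f p) (g p), conj_trivial]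
  ring

lemma eq_zero_of_forall_two_mul_add_sq_mul_nonpos {a b : ℝ}
    (h : ∀ t : ℝ, 2 * t * a + t ^ 2 * b ≤ 0) : a = 0 := by
  have hdisc : discrim (-b) (-(2 * a)) 0 ≤ 0 :=
    discrim_le_zero fun t => by linarith [h t, sq t]
  rw [discrim] at hdisc
  exact pow_eq_zero_iff two_ne_zero |>.1 (by nlinarith [sq_nonneg a])

end BoundedConvex

/-- The Rayleigh quotients `∫|∇w|² / ∫w²` of the nonzero smooth functions on `closure Ω` with mean
zero; the infimum is the first nonzero Neumann eigenvalue. -/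
def neumannRayleighQuotients {k : ℕ} (Ω : Set (EuclideanSpace ℝ (Fin k))) : Set ℝ :=
  {r | ∃ w : EuclideanSpace ℝ (Fin k) → ℝ,
    ContDiffOn ℝ (⊤ : ℕ∞) w (closure Ω) ∧ (∃ p ∈ Ω, w p ≠ 0) ∧ (∫ p in Ω, w p) = 0 ∧
    r = (∫ p in Ω, ‖gradient w p‖ ^ 2) / (∫ p in Ω, (w p) ^ 2)}

/-- `u` is a smooth minimizer of the Neumann Rayleigh quotient over the functions of mean zero, and
the minimum `lam` is positive. This is the variational form of being an eigenfunction for the first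
nonzero Neumann eigenvalue `lam`. Since `0 / 0 = 0`, the condition `0 < lam` forces `u ≠ 0`. -/
structure IsFirstNeumannEigenfunction {k : ℕ} (Ω : Set (EuclideanSpace ℝ (Fin k))) (lam : ℝ)
    (u : EuclideanSpace ℝ (Fin k) → ℝ) : Prop where
  contDiffOn : ContDiffOn ℝ (⊤ : ℕ∞) u (closure Ω)
  integral_eq_zero : ∫ p in Ω, u p = 0
  pos : 0 < lam
  eq_sInf : lam = sInf (neumannRayleighQuotients Ω)
  eq_rayleigh : lam = (∫ p in Ω, ‖gradient u p‖ ^ 2) / (∫ p in Ω, (u p) ^ 2)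

namespace IsFirstNeumannEigenfunction

variable {k : ℕ} {Ω : Set (EuclideanSpace ℝ (Fin k))} {lam : ℝ}
  {u w : EuclideanSpace ℝ (Fin k) → ℝ}

lemma contDiffOn_one (h : IsFirstNeumannEigenfunction Ω lam u) : ContDiffOn ℝ 1 u (closure Ω) :=
  h.contDiffOn.of_le (by exact_mod_cast le_top)

lemma integral_sq_ne_zero (h : IsFirstNeumannEigenfunction Ω lam u) :
    ∫ p in Ω, (u p) ^ 2 ≠ 0 := fun h0 =>
  h.pos.ne' (by rw [h.eq_rayleigh, h0, div_zero])

lemma exists_ne_zero (h : IsFirstNeumannEigenfunction Ω lam u) : ∃ p ∈ Ω, u p ≠ 0 := by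
  by_contra! hzero
  refine h.integral_sq_ne_zero (setIntegral_eq_zero_of_forall_eq_zero fun p hp => ?_)
  rw [hzero p hp, zero_pow two_ne_zero]

lemma mul_integral_sq_eq (h : IsFirstNeumannEigenfunction Ω lam u) :
    lam * ∫ p in Ω, (u p) ^ 2 = ∫ p in Ω, ‖gradient u p‖ ^ 2 :=
  (eq_div_iff h.integral_sq_ne_zero).1 h.eq_rayleigh

lemma mul_integral_sq_le (h : IsFirstNeumannEigenfunction Ω lam u)
    (hw : ContDiffOn ℝ (⊤ : ℕ∞) w (closure Ω)) (hmean : ∫ p in Ω, w p = 0) :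
    lam * ∫ p in Ω, (w p) ^ 2 ≤ ∫ p in Ω, ‖gradient w p‖ ^ 2 := by
  have hnonneg : ∀ v : EuclideanSpace ℝ (Fin k) → ℝ, 0 ≤ ∫ p in Ω, ‖gradient v p‖ ^ 2 :=
    fun v => integral_nonneg fun p => sq_nonneg _
  have hsq : ∀ v : EuclideanSpace ℝ (Fin k) → ℝ, 0 ≤ ∫ p in Ω, (v p) ^ 2 :=
    fun v => integral_nonneg fun p => sq_nonneg _
  rcases (hsq w).eq_or_lt with h0 | hpos
  · rw [← h0, mul_zero]
    exact hnonneg w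
  have hne : ∃ p ∈ Ω, w p ≠ 0 := by
    by_contra! hw0
    exact hpos.ne' <| setIntegral_eq_zero_of_forall_eq_zero fun p hp => by
      rw [hw0 p hp, sq, zero_mul]
  rw [← le_div_iff₀ hpos, h.eq_sInf]
  refine csInf_le ⟨0, ?_⟩ ⟨w, hw, hne, hmean, rfl⟩
  rintro r ⟨v, -, -, -, rfl⟩
  exact div_nonneg (hnonneg v) (hsq v)

variable (hΩ : IsOpen Ω) (hconv : Convex ℝ Ω) (hbdd : Bornology.IsBounded Ω)
include hΩ hconv hbdd

/-- The first variation of the Rayleigh quotient at `u` vanishes. -/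
lemma integral_inner_gradient_eq_of_integral_eq_zero (h : IsFirstNeumannEigenfunction Ω lam u)
    (hw : ContDiffOn ℝ (⊤ : ℕ∞) w (closure Ω)) (hmean : ∫ p in Ω, w p = 0) :
    ∫ p in Ω, ⟪gradient u p, gradient w p⟫ = lam * ∫ p in Ω, u p * w p := by
  have hu1 := h.contDiffOn_one
  have hw1 : ContDiffOn ℝ 1 w (closure Ω) := hw.of_le (by exact_mod_cast le_top)
  have hfin := hbdd.measure_lt_top (μ := volume) |>.ne
  have hu := isBoundedContinuousOn_of_closure hbdd hu1.continuousOn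
  have hv := isBoundedContinuousOn_of_closure hbdd hw1.continuousOn
  have hmean' : ∀ t : ℝ, ∫ p in Ω, (u p + t * w p) = 0 := fun t => by
    rw [integral_add (hu.integrableOn hΩ hfin) ((hv.integrableOn hΩ hfin).const_mul t),
      integral_const_mul, h.integral_eq_zero, hmean, mul_zero, add_zero]
  have hsq : ∀ t : ℝ, ∫ p in Ω, (u p + t * w p) ^ 2
      = (∫ p in Ω, (u p) ^ 2) + 2 * t * (∫ p in Ω, u p * w p) + t ^ 2 * ∫ p in Ω, (w p) ^ 2 := by
    simpa only [Real.norm_eq_abs, sq_abs, smul_eq_mul, RCLike.inner_apply, conj_trivial, mul_comm]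
      using integral_norm_add_smul_sq_of_isBoundedContinuousOn hΩ hfin hu hv
  have hgradsq : ∀ t : ℝ, ∫ p in Ω, ‖gradient (fun q => u q + t * w q) p‖ ^ 2
      = (∫ p in Ω, ‖gradient u p‖ ^ 2) + 2 * t * (∫ p in Ω, ⟪gradient u p, gradient w p⟫)
        + t ^ 2 * ∫ p in Ω, ‖gradient w p‖ ^ 2 := fun t => by
    rw [← integral_norm_add_smul_sq_of_isBoundedContinuousOn hΩ hfin
      (isBoundedContinuousOn_gradient hΩ hconv hbdd hu1)
      (isBoundedContinuousOn_gradient hΩ hconv hbdd hw1)]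
    exact setIntegral_congr_fun hΩ.measurableSet fun p hp => by
      simp only [gradient_add_const_mul
        (hasGradientAt_of_contDiffOn_closure hΩ hu1 hp).differentiableAt
        (hasGradientAt_of_contDiffOn_closure hΩ hw1 hp).differentiableAt]
  have hvar := eq_zero_of_forall_two_mul_add_sq_mul_nonpos
    (a := lam * (∫ p in Ω, u p * w p) - ∫ p in Ω, ⟪gradient u p, gradient w p⟫)
    (b := lam * (∫ p in Ω, (w p) ^ 2) - ∫ p in Ω, ‖gradient w p‖ ^ 2) fun t => by
      have hray := h.mul_integral_sq_le (h.contDiffOn.add (contDiffOn_const.mul hw)) (hmean' t)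
      rw [hsq, hgradsq] at hray
      linarith [h.mul_integral_sq_eq]
  linarith

end IsFirstNeumannEigenfunction

/-! ### Comparison of the eigenvalues -/

section Approximation

lemma tendstoUniformlyOn_sq {X ι : Type*} [TopologicalSpace X] {S : Set X} (hS : IsCompact S)
    {p : Filter ι} {F : ι → X → ℝ} {f : X → ℝ} (h : TendstoUniformlyOn F f p S)
    (hf : ContinuousOn f S) :
    TendstoUniformlyOn (fun i x => F i x ^ 2) (fun x => f x ^ 2) p S := by
  have hloc := (tendstoLocallyUniformlyOn_iff_tendstoUniformlyOn_of_compact hS).2 h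
  have := (tendstoLocallyUniformlyOn_iff_tendstoUniformlyOn_of_compact hS).1
    (hloc.fun_mul₀ hloc hf hf)
  simpa only [sq] using this

lemma contDiff_intervalIntegral {ζ : ℝ → ℝ} (hζ : ContDiff ℝ (⊤ : ℕ∞) ζ) (a : ℝ) :
    ContDiff ℝ (⊤ : ℕ∞) fun x => ∫ s in a..x, ζ s := by
  have hderiv : deriv (fun x => ∫ s in a..x, ζ s) = ζ :=
    funext fun x => hζ.continuous.deriv_integral ζ a x
  rw [contDiff_infty_iff_deriv, hderiv]
  exact ⟨fun x => (intervalIntegral.integral_hasDerivAt_right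
    (hζ.continuous.intervalIntegrable _ _) (hζ.continuous.stronglyMeasurableAtFilter _ _)
    hζ.continuous.continuousAt).differentiableAt, hζ⟩

/-- Integrate polynomials that approximate the derivative. -/
lemma exists_seq_contDiff_tendstoUniformlyOn {φ φd : ℝ → ℝ}
    (hφ : ∀ x ∈ Icc (0 : ℝ) 1, HasDerivWithinAt φ (φd x) (Icc 0 1) x)
    (hφd : ContinuousOn φd (Icc 0 1)) :
    ∃ η : ℕ → ℝ → ℝ, (∀ k, ContDiff ℝ (⊤ : ℕ∞) (η k)) ∧
      TendstoUniformlyOn η φ atTop (Icc 0 1) ∧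
      TendstoUniformlyOn (fun k => deriv (η k)) φd atTop (Icc 0 1) := by
  choose P hP using fun k : ℕ =>
    exists_polynomial_near_of_continuousOn 0 1 φd hφd _ (Nat.one_div_pos_of_nat (n := k) (α := ℝ))
  have hsmooth : ∀ k, ContDiff ℝ (⊤ : ℕ∞) fun x => ∫ s in (0 : ℝ)..x, (P k).eval s := fun k =>
    contDiff_intervalIntegral (by simpa using (P k).contDiff_aeval (𝕜 := ℝ) (⊤ : ℕ∞)) 0
  have hderiv : ∀ k, deriv (fun x => φ 0 + ∫ s in (0 : ℝ)..x, (P k).eval s) =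
      fun x => (P k).eval x := fun k => by
    ext x
    rw [deriv_const_add, (P k).continuous.deriv_integral]
  refine ⟨fun k x => φ 0 + ∫ s in (0 : ℝ)..x, (P k).eval s, fun k => contDiff_const.add (hsmooth k),
    Metric.tendstoUniformlyOn_iff.2 fun δ hδ => ?_, Metric.tendstoUniformlyOn_iff.2 fun δ hδ => ?_⟩
  all_goals
    filter_upwards [(tendsto_one_div_add_atTop_nhds_zero_nat (𝕜 := ℝ)).eventually_lt_const hδ]
      with k hk x hx
    rw [dist_comm, Real.dist_eq]
  · have hmvt := abs_sub_le_mul_of_abs_hasDerivAt_le (a := 0) (b := 1) (B := 1 / ((k : ℝ) + 1))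
      (z := fun x => (∫ s in (0 : ℝ)..x, (P k).eval s) - φ x) (z' := fun x => (P k).eval x - φd x)
      ((hsmooth k).continuous.continuousOn.sub fun x hx => (hφ x hx).continuousWithinAt)
      (fun t ht => ?_) (fun t ht => (hP k t (Ioo_subset_Icc_self ht)).le) (left_mem_Icc.2
        zero_le_one) hx hx.1
    · calc _ = |(∫ s in (0 : ℝ)..x, (P k).eval s) - φ x
            - ((∫ s in (0 : ℝ)..0, (P k).eval s) - φ 0)| := by
            rw [intervalIntegral.integral_same]; ring_nf
        _ ≤ 1 / ((k : ℝ) + 1) * (x - 0) := hmvt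
        _ ≤ 1 / ((k : ℝ) + 1) := mul_le_of_le_one_right (by positivity) (by linarith [hx.2])
        _ < δ := hk
    · have := ((hsmooth k).differentiable (by simp)).differentiableAt (x := t) |>.hasDerivAt
      rw [(P k).continuous.deriv_integral] at this
      exact this.sub ((hφ t (Ioo_subset_Icc_self ht)).hasDerivAt (Icc_mem_nhds ht.1 ht.2))
  · rw [hderiv]
    exact (hP k x hx).trans hk

namespace IsConeWeight

variable {m : ℕ} {ω φ φd : ℝ → ℝ} {l : ℝ}

lemma tendsto_integral_mul (h : IsConeWeight m ω) {F : ℕ → ℝ → ℝ} {f : ℝ → ℝ}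
    (hF : ∀ k, ContinuousOn (F k) (Icc 0 1)) (hFf : TendstoUniformlyOn F f atTop (Icc 0 1)) :
    Tendsto (fun k => ∫ s in 0..1, ω s * F k s) atTop (𝓝 (∫ s in 0..1, ω s * f s)) := by
  have hf : ContinuousOn f (Icc 0 1) := hFf.continuousOn (Frequently.of_forall hF)
  have hpos : 0 < 2 ^ m * ω (1 / 2) := mul_pos (by positivity) h.half_pos
  rw [Metric.tendsto_nhds]
  intro δ hδ
  filter_upwards [Metric.tendstoUniformlyOn_iff.1 hFf _ (div_pos (_root_.half_pos hδ) hpos)]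
    with k hk
  have hdiff : (∫ s in 0..1, ω s * F k s) - ∫ s in 0..1, ω s * f s
      = ∫ s in 0..1, ω s * (F k s - f s) := by
    rw [← intervalIntegral.integral_sub (h.intervalIntegrable_mul zero_le_one le_rfl (hF k))
      (h.intervalIntegrable_mul zero_le_one le_rfl hf)]
    simp only [mul_sub]
  rw [Real.dist_eq, hdiff]
  calc _ ≤ 2 ^ m * ω (1 / 2) * (δ / 2 / (2 ^ m * ω (1 / 2))) :=
        h.abs_integral_mul_le zero_le_one le_rfl (by positivity) fun s hs => by
          rw [← Real.dist_eq, dist_comm]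
          exact (hk s (Ioo_subset_Icc_self hs)).le
    _ = δ / 2 := mul_div_cancel₀ _ hpos.ne'
    _ < δ := half_lt_self hδ

lemma integral_mul_sq_pos (h : IsConeWeight m ω) (hφ : ContinuousOn φ (Icc 0 1))
    (hne : ∃ x ∈ Icc (0 : ℝ) 1, φ x ≠ 0) : 0 < ∫ s in 0..1, ω s * φ s ^ 2 := by
  obtain ⟨x, hx, hne'⟩ : ∃ x ∈ Ioo (0 : ℝ) 1, φ x ≠ 0 := by
    by_contra! hzero
    obtain ⟨x, hx, hne⟩ := hne
    exact hne (EqOn.of_subset_closure (g := 0) hzero hφ continuousOn_const Ioo_subset_Icc_self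
      (closure_Ioo zero_ne_one).ge hx)
  rw [intervalIntegral.integral_of_le zero_le_one, integral_Ioc_eq_integral_Ioo,
    setIntegral_pos_iff_support_of_nonneg_ae
      ((ae_restrict_mem measurableSet_Ioo).mono fun y hy =>
        mul_nonneg (h.pos y hy).le (sq_nonneg _))
      ((intervalIntegrable_iff_integrableOn_Ioo_of_le zero_le_one).1
        (h.intervalIntegrable_mul zero_le_one le_rfl (hφ.pow 2)))]
  have hopen : IsOpen (Ioo (0 : ℝ) 1 ∩ φ ⁻¹' {0}ᶜ) :=
    (hφ.mono Ioo_subset_Icc_self).isOpen_inter_preimage isOpen_Ioo isOpen_compl_singleton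
  exact (hopen.measure_pos volume ⟨x, hx, hne'⟩).trans_le <| measure_mono fun y hy =>
    ⟨mul_ne_zero (h.pos y hy.1).ne' (pow_ne_zero 2 hy.2), hy.1⟩

lemma mul_integral_mul_sq_le (h : IsConeWeight m ω)
    (hsmooth : ∀ η : ℝ → ℝ, ContDiff ℝ (⊤ : ℕ∞) η → ∫ s in 0..1, ω s * η s = 0 →
      l * ∫ s in 0..1, ω s * η s ^ 2 ≤ ∫ s in 0..1, ω s * deriv η s ^ 2)
    (hφ : ∀ x ∈ Icc (0 : ℝ) 1, HasDerivWithinAt φ (φd x) (Icc 0 1) x)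
    (hφd : ContinuousOn φd (Icc 0 1)) (hmean : ∫ s in 0..1, ω s * φ s = 0) :
    l * ∫ s in 0..1, ω s * φ s ^ 2 ≤ ∫ s in 0..1, ω s * φd s ^ 2 := by
  obtain ⟨η, hη, hηφ, hηφd⟩ := exists_seq_contDiff_tendstoUniformlyOn hφ hφd
  have hφc : ContinuousOn φ (Icc 0 1) := fun x hx => (hφ x hx).continuousWithinAt
  have hηc := fun k => (hη k).continuous.continuousOn (s := Icc 0 1)
  have hω : 0 < ∫ s in 0..1, ω s := by
    simpa only [one_pow, mul_one] using
      h.integral_mul_sq_pos (φ := fun _ => 1) continuousOn_const ⟨0, by simp⟩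
  let c : ℕ → ℝ := fun k => (∫ s in 0..1, ω s * η k s) / ∫ s in 0..1, ω s
  have hc : Tendsto c atTop (𝓝 0) := by
    simpa only [hmean, zero_div] using (h.tendsto_integral_mul hηc hηφ).div_const (∫ s in 0..1, ω s)
  have hηc' : TendstoUniformlyOn (fun k x => η k x - c k) φ atTop (Icc 0 1) := by
    simpa only [Pi.sub_def, sub_zero] using hηφ.sub (hc.tendstoUniformlyOn_const (Icc 0 1))
  refine le_of_tendsto_of_tendsto
    ((h.tendsto_integral_mul (F := fun k x => (η k x - c k) ^ 2)
      (fun k => ((hηc k).sub continuousOn_const).pow 2)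
      (tendstoUniformlyOn_sq isCompact_Icc hηc' hφc)).const_mul l)
    (h.tendsto_integral_mul (F := fun k x => deriv (η k) x ^ 2)
      (fun k => (((hη k).continuous_deriv (by simp)).pow 2).continuousOn)
      (tendstoUniformlyOn_sq isCompact_Icc hηφd hφd)) (Eventually.of_forall fun k => ?_)
  have hk := hsmooth (fun x => η k x - c k) ((hη k).sub contDiff_const) ?_
  · simpa only [deriv_sub_const] using hk
  · have hωc := h.intervalIntegrable_mul (f := fun _ => c k) zero_le_one le_rfl continuousOn_const
    simp only [mul_sub]
    rw [intervalIntegral.integral_sub (h.intervalIntegrable_mul zero_le_one le_rfl (hηc k)) hωc,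
      intervalIntegral.integral_mul_const, mul_div_cancel₀ _ hω.ne', sub_self]

end IsConeWeight

end Approximation

namespace NeumannSol

variable {m : ℕ} {ω φ φd : ℝ → ℝ} {l μ : ℝ}

lemma const_mul (hφ : NeumannSol ω μ φ φd) {c : ℝ} (hc : c ≠ 0) :
    NeumannSol ω μ (fun x => c * φ x) (fun x => c * φd x) := by
  obtain ⟨hderiv, hcont, h0, h1, ⟨x, hx, hne⟩, hode⟩ := hφ
  refine ⟨fun x hx => (hderiv x hx).const_mul c, continuousOn_const.mul hcont,
    mul_eq_zero_of_right c h0, mul_eq_zero_of_right c h1, ⟨x, hx, mul_ne_zero hc hne⟩,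
    fun x hx => ?_⟩
  exact (((hode x hx).const_mul c).congr_of_eventuallyEq
    (Eventually.of_forall fun t => mul_left_comm _ _ _)).congr_deriv (by ring)

lemma integral_mul_deriv_sq (h : IsConeWeight m ω) (hφ : NeumannSol ω μ φ φd) :
    ∫ s in 0..1, ω s * φd s ^ 2 = μ * ∫ s in 0..1, ω s * φ s ^ 2 := by
  have heq : EqOn (fun s => ω s * weightedPrimitive ω (fun x => μ * φ x) s ^ 2)
      (fun s => ω s * φd s ^ 2) (Ioo 0 1) := fun s hs => by
    simp only [hφ.eq_neg_weightedPrimitive h hs, neg_sq]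
  have hint := h.intervalIntegrable_mul zero_le_one le_rfl (hφ.2.1.pow 2)
  rw [← intervalIntegral.integral_congr_Ioo_of_le zero_le_one heq,
    (hφ.isFluxSolution h).integral_mul_weightedPrimitive_sq h (hφ.integral_eq_zero h)
      (hint.congr_uIoo (by rw [uIoo_of_le zero_le_one]; exact heq.symm)),
    ← intervalIntegral.integral_const_mul]
  exact intervalIntegral.integral_congr fun s _ => by ring

lemma le_of_forall_contDiff (h : IsConeWeight m ω) (hφ : NeumannSol ω μ φ φd) (hμ : 0 < μ)
    (hsmooth : ∀ η : ℝ → ℝ, ContDiff ℝ (⊤ : ℕ∞) η → ∫ s in 0..1, ω s * η s = 0 →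
      l * ∫ s in 0..1, ω s * η s ^ 2 ≤ ∫ s in 0..1, ω s * deriv η s ^ 2) : l ≤ μ := by
  have hmean : ∫ s in 0..1, ω s * φ s = 0 := by
    have := hφ.integral_eq_zero h
    simp only [mul_left_comm _ μ, intervalIntegral.integral_const_mul] at this
    exact (mul_eq_zero.1 this).resolve_left hμ.ne'
  refine le_of_mul_le_mul_right ?_ (h.integral_mul_sq_pos hφ.continuousOn hφ.2.2.2.2.1)
  rw [← hφ.integral_mul_deriv_sq h]
  exact h.mul_integral_mul_sq_le hsmooth hφ.1 hφ.2.1 hmean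

end NeumannSol

/-! ### The equation for the cross-sectional integrals -/

section WeakForm

lemma integral_mul_eq_neg_integral_mul_deriv {f η : ℝ → ℝ}
    (hf : ContinuousOn f (Ioo 0 1)) (hfi : IntervalIntegrable f volume 0 1)
    (hf0 : ∫ x in 0..1, f x = 0) (hη : ContDiff ℝ 1 η) :
    ∫ x in 0..1, f x * η x = -∫ x in 0..1, (∫ s in 0..x, f s) * deriv η x := by
  have h01 : (0 : ℝ) ≤ 1 := zero_le_one
  have hparts := intervalIntegral.integral_mul_deriv_eq_deriv_mul_of_hasDerivAt (a := 0) (b := 1)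
    (by rw [uIcc_of_le h01]; exact continuousOn_intervalIntegral_Icc hfi (left_mem_Icc.2 h01))
    hη.continuous.continuousOn
    (fun x hx => hasDerivAt_intervalIntegral_of_continuousOn_Ioo hf hfi (left_mem_Icc.2 h01)
      (by rwa [min_eq_left h01, max_eq_right h01] at hx))
    (fun x _ => (hη.differentiable one_ne_zero x).hasDerivAt) hfi
    ((hη.continuous_deriv le_rfl).intervalIntegrable _ _)
  rw [hparts, hf0, intervalIntegral.integral_same]
  ring

lemma integral_smul_add_mul_integral_eq_zero {f g ζ : ℝ → ℝ} {l : ℝ}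
    (hf : ContinuousOn f (Ioo 0 1)) (hfi : IntervalIntegrable f volume 0 1)
    (hf0 : ∫ x in 0..1, f x = 0) (hgi : IntervalIntegrable g volume 0 1)
    (hweak : ∀ η : ℝ → ℝ, ContDiff ℝ (⊤ : ℕ∞) η →
      ∫ x in 0..1, g x * deriv η x = l * ∫ x in 0..1, f x * η x)
    (hζ : ContDiff ℝ (⊤ : ℕ∞) ζ) :
    ∫ x in 0..1, ζ x • (g x + l * ∫ s in 0..x, f s) = 0 := by
  have hζderiv : deriv (fun x => ∫ s in (0 : ℝ)..x, ζ s) = ζ :=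
    funext fun x => hζ.continuous.deriv_integral ζ 0 x
  have hη := contDiff_intervalIntegral hζ 0
  have hparts := hweak _ hη
  rw [integral_mul_eq_neg_integral_mul_deriv hf hfi hf0 (hη.of_le (by exact_mod_cast le_top)),
    hζderiv] at hparts
  have hgζ := intervalIntegrable_mul_continuousOn zero_le_one hgi hζ.continuous.continuousOn
  have hFζ : IntervalIntegrable (fun x => (∫ s in 0..x, f s) * ζ x) volume 0 1 :=
    ((continuousOn_intervalIntegral_Icc hfi (left_mem_Icc.2 zero_le_one)).mul
      hζ.continuous.continuousOn).intervalIntegrable_of_Icc zero_le_one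
  calc ∫ x in 0..1, ζ x • (g x + l * ∫ s in 0..x, f s)
      = ∫ x in 0..1, (g x * ζ x + l * ((∫ s in 0..x, f s) * ζ x)) :=
        intervalIntegral.integral_congr fun x _ => by rw [smul_eq_mul]; ring
    _ = (∫ x in 0..1, g x * ζ x) + l * ∫ x in 0..1, (∫ s in 0..x, f s) * ζ x := by
        rw [intervalIntegral.integral_add hgζ (hFζ.const_mul l),
          intervalIntegral.integral_const_mul]
    _ = 0 := by rw [hparts]; ring

lemma eq_neg_mul_integral_of_forall_contDiff {f g : ℝ → ℝ} {l : ℝ}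
    (hf : ContinuousOn f (Ioo 0 1)) (hfi : IntervalIntegrable f volume 0 1)
    (hf0 : ∫ x in 0..1, f x = 0) (hg : ContinuousOn g (Ioo 0 1))
    (hgi : IntervalIntegrable g volume 0 1)
    (hweak : ∀ η : ℝ → ℝ, ContDiff ℝ (⊤ : ℕ∞) η →
      ∫ x in 0..1, g x * deriv η x = l * ∫ x in 0..1, f x * η x) :
    ∀ x ∈ Ioo (0 : ℝ) 1, g x = -(l * ∫ s in 0..x, f s) := by
  have hF := continuousOn_intervalIntegral_Icc hfi (left_mem_Icc.2 zero_le_one)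
  have hcont : ContinuousOn (fun x => g x + l * ∫ s in 0..x, f s) (Ioo 0 1) :=
    hg.add (continuousOn_const.mul (hF.mono Ioo_subset_Icc_self))
  have hae : ∀ᵐ x, x ∈ Ioo (0 : ℝ) 1 → g x + l * (∫ s in 0..x, f s) = 0 := by
    refine isOpen_Ioo.ae_eq_zero_of_integral_contDiff_smul_eq_zero
      (hcont.locallyIntegrableOn measurableSet_Ioo) fun ζ hζ _ hsupp => ?_
    rw [← setIntegral_eq_integral_of_forall_compl_eq_zero (s := Ioc 0 1) fun x hx => by
        rw [image_eq_zero_of_notMem_tsupport fun h => hx (Ioo_subset_Ioc_self (hsupp h)),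
          zero_smul],
      ← intervalIntegral.integral_of_le zero_le_one]
    exact integral_smul_add_mul_integral_eq_zero hf hfi hf0 hgi hweak hζ
  have hzero : EqOn (fun x => g x + l * ∫ s in 0..x, f s) 0 (Ioo 0 1) :=
    Measure.eqOn_open_of_ae_eq ((ae_restrict_iff' measurableSet_Ioo).2 hae) isOpen_Ioo hcont
      continuousOn_const
  exact fun x hx => eq_neg_of_add_eq_zero_left (hzero hx)

end WeakForm

section FirstEigenfunction

variable {m : ℕ} {ε lam : ℝ} {Ω : Set (EuclideanSpace ℝ (Fin (m + 1)))}
  {u : EuclideanSpace ℝ (Fin (m + 1)) → ℝ} {η : ℝ → ℝ}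

lemma gradient_comp_apply_zero {p : EuclideanSpace ℝ (Fin (m + 1))}
    (hη : DifferentiableAt ℝ η (p 0)) :
    gradient (fun q : EuclideanSpace ℝ (Fin (m + 1)) => η (q 0)) p
      = deriv η (p 0) • EuclideanSpace.single 0 1 := by
  refine HasGradientAt.gradient ?_
  rw [hasGradientAt_iff_hasFDerivAt]
  refine (hη.hasDerivAt.comp_hasFDerivAt p
    (EuclideanSpace.proj (𝕜 := ℝ) (0 : Fin (m + 1))).hasFDerivAt).congr_fderiv ?_
  ext v
  simp [EuclideanSpace.inner_single_left]

lemma contDiffOn_comp_apply_zero (hη : ContDiff ℝ (⊤ : ℕ∞) η)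
    (S : Set (EuclideanSpace ℝ (Fin (m + 1)))) :
    ContDiffOn ℝ (⊤ : ℕ∞) (fun p : EuclideanSpace ℝ (Fin (m + 1)) => η (p 0)) S :=
  (hη.comp (EuclideanSpace.proj (𝕜 := ℝ) (0 : Fin (m + 1))).contDiff).contDiffOn

namespace IsThinConvexDomain

lemma integral_mul_comp_apply_zero (hΩ : IsThinConvexDomain ε Ω)
    {f : EuclideanSpace ℝ (Fin (m + 1)) → ℝ} (hf : IsBoundedContinuousOn f Ω)
    (hη : Continuous η) :
    ∫ p in Ω, f p * η (p 0) = ∫ x in 0..1, sliceIntegral Ω f x * η x := by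
  rw [hΩ.integral_eq_integral_sliceIntegral
    (hf.mul (hΩ.isBoundedContinuousOn_comp_apply_zero hη))]
  simp only [sliceIntegral_mul_comp_apply_zero]

lemma integral_comp_apply_zero (hΩ : IsThinConvexDomain ε Ω) (hη : Continuous η) :
    ∫ p in Ω, η (p 0) = ∫ x in 0..1, ωvol Ω x * η x := by
  simpa only [one_mul, sliceIntegral_one] using hΩ.integral_mul_comp_apply_zero
    (f := fun _ => 1) ⟨continuousOn_const, ‖(1 : ℝ)‖, fun _ _ => le_rfl⟩ hη

lemma isBoundedContinuousOn (hΩ : IsThinConvexDomain ε Ω) (hu : ContDiffOn ℝ 1 u (closure Ω)) :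
    IsBoundedContinuousOn u Ω :=
  isBoundedContinuousOn_of_closure hΩ.isBounded hu.continuousOn

lemma isBoundedContinuousOn_gradient_zero (hΩ : IsThinConvexDomain ε Ω)
    (hu : ContDiffOn ℝ 1 u (closure Ω)) : IsBoundedContinuousOn (fun p => gradient u p 0) Ω := by
  obtain ⟨hcont, C, hC⟩ := isBoundedContinuousOn_gradient hΩ.isOpen hΩ.convex hΩ.isBounded hu
  exact ⟨(EuclideanSpace.proj (𝕜 := ℝ) (0 : Fin (m + 1))).continuous.comp_continuousOn hcont, C,
    fun p hp => (PiLp.norm_apply_le _ _).trans (hC p hp)⟩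

end IsThinConvexDomain

namespace IsFirstNeumannEigenfunction

lemma mul_integral_ωvol_mul_sq_le (hΩ : IsThinConvexDomain ε Ω)
    (h : IsFirstNeumannEigenfunction Ω lam u) (hη : ContDiff ℝ (⊤ : ℕ∞) η)
    (hmean : ∫ x in 0..1, ωvol Ω x * η x = 0) :
    lam * ∫ x in 0..1, ωvol Ω x * η x ^ 2 ≤ ∫ x in 0..1, ωvol Ω x * deriv η x ^ 2 := by
  rw [← hΩ.integral_comp_apply_zero hη.continuous] at hmean
  have hray := h.mul_integral_sq_le (contDiffOn_comp_apply_zero hη _) hmean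
  simp only [gradient_comp_apply_zero (hη.differentiable (by simp) _), norm_smul,
    PiLp.norm_single, norm_one, mul_one, Real.norm_eq_abs, sq_abs] at hray
  rwa [hΩ.integral_comp_apply_zero (η := fun x => η x ^ 2) (hη.continuous.pow 2),
    hΩ.integral_comp_apply_zero (η := fun x => deriv η x ^ 2)
      ((hη.continuous_deriv (by simp)).pow 2)] at hray

lemma integral_sliceIntegral_eq_zero (hΩ : IsThinConvexDomain ε Ω)
    (h : IsFirstNeumannEigenfunction Ω lam u) : ∫ x in 0..1, sliceIntegral Ω u x = 0 := by
  rw [← hΩ.integral_eq_integral_sliceIntegral (hΩ.isBoundedContinuousOn h.contDiffOn_one),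
    h.integral_eq_zero]

lemma integral_sliceIntegral_gradient_mul_deriv (hΩ : IsThinConvexDomain ε Ω)
    (h : IsFirstNeumannEigenfunction Ω lam u) (hη : ContDiff ℝ (⊤ : ℕ∞) η) :
    ∫ x in 0..1, sliceIntegral Ω (fun p => gradient u p 0) x * deriv η x
      = lam * ∫ x in 0..1, sliceIntegral Ω u x * η x := by
  have hu := hΩ.isBoundedContinuousOn h.contDiffOn_one
  have hη' := hΩ.isBoundedContinuousOn_comp_apply_zero hη.continuous
  have hvol : volume.real Ω ≠ 0 :=
    (ENNReal.toReal_pos (hΩ.isOpen.measure_pos volume hΩ.nonempty).ne' hΩ.volume_ne_top).ne'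
  have hmean : ∫ p in Ω, (η (p 0) - (∫ p in Ω, η (p 0)) / volume.real Ω) = 0 := by
    rw [integral_sub (hΩ.integrableOn hη') (integrableOn_const hΩ.volume_ne_top),
      setIntegral_const, smul_eq_mul, mul_div_cancel₀ _ hvol, sub_self]
  have hvar := h.integral_inner_gradient_eq_of_integral_eq_zero hΩ.isOpen hΩ.convex hΩ.isBounded
    (contDiffOn_comp_apply_zero (hη.sub contDiff_const) _) hmean
  rw [← hΩ.integral_mul_comp_apply_zero hu hη.continuous,
    ← hΩ.integral_mul_comp_apply_zero (hΩ.isBoundedContinuousOn_gradient_zero h.contDiffOn_one)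
      (hη.continuous_deriv (by simp))]
  simp only [mul_sub] at hvar
  rw [integral_sub (hΩ.integrableOn (hu.mul hη')) ((hΩ.integrableOn hu).mul_const _),
    integral_mul_const, h.integral_eq_zero, zero_mul, sub_zero] at hvar
  rw [← hvar]
  refine integral_congr_ae (Eventually.of_forall fun p => ?_)
  have hgrad := gradient_comp_apply_zero (p := p) (η := fun x => η x -
    (∫ p in Ω, η (p 0)) / volume.real Ω) ((hη.differentiable (by simp) _).sub_const _)
  simp only [hgrad, deriv_sub_const, inner_smul_right, EuclideanSpace.inner_single_right,
    conj_trivial, one_mul]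
  ring

lemma sliceIntegral_gradient_eq (hΩ : IsThinConvexDomain ε Ω)
    (h : IsFirstNeumannEigenfunction Ω lam u) {x : ℝ} (hx : x ∈ Ioo (0 : ℝ) 1) :
    sliceIntegral Ω (fun p => gradient u p 0) x = -(lam * ∫ s in 0..x, sliceIntegral Ω u s) := by
  have hint : ∀ {f}, IsBoundedContinuousOn f Ω →
      IntervalIntegrable (sliceIntegral Ω f) volume 0 1 := fun hf =>
    intervalIntegrable_of_continuousOn_Ioo_of_abs_le zero_le_one (hΩ.continuousOn_sliceIntegral hf)
      (hΩ.exists_abs_sliceIntegral_le hf).choose_spec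
  have hu := hΩ.isBoundedContinuousOn h.contDiffOn_one
  have hg := hΩ.isBoundedContinuousOn_gradient_zero h.contDiffOn_one
  exact eq_neg_mul_integral_of_forall_contDiff (hΩ.continuousOn_sliceIntegral hu) (hint hu)
    (h.integral_sliceIntegral_eq_zero hΩ) (hΩ.continuousOn_sliceIntegral hg) (hint hg)
    (fun _ => h.integral_sliceIntegral_gradient_mul_deriv hΩ) x hx

end IsFirstNeumannEigenfunction

end FirstEigenfunction

/-! ### Cross-sectional averages -/

section Averages

variable {α : Type*} [MeasurableSpace α] {μ : Measure α} {S A : Set α} {G : α → ℝ} {a B : ℝ}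

lemma abs_setIntegral_sub_mul_le (hS : μ S ≠ ⊤) (hG : IntegrableOn G S μ)
    (h : ∀ y ∈ S, |G y - a| ≤ B) : |∫ y in S, G y ∂μ - a * μ.real S| ≤ B * μ.real S := by
  have hnorm := norm_setIntegral_le_of_norm_le_const (μ := μ) (f := fun y => G y - a) hS.lt_top h
  rwa [integral_sub hG (integrableOn_const hS), setIntegral_const, smul_eq_mul,
    mul_comm (μ.real S)] at hnorm

lemma abs_setIntegral_sub_mul_le_of_subset (hA : MeasurableSet A) (hAS : A ⊆ S) (hS : μ S ≠ ⊤)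
    (hG : IntegrableOn G S μ) (h : ∀ y ∈ S, |G y - a| ≤ B)
    (ha : ∫ y in S, G y ∂μ = a * μ.real S) :
    |∫ y in A, G y ∂μ - a * μ.real A| ≤ B * (μ.real S - μ.real A) := by
  have hdiff := abs_setIntegral_sub_mul_le (measure_ne_top_of_subset sdiff_subset hS)
    (hG.mono_set sdiff_subset) fun y (hy : y ∈ S \ A) => h y hy.1
  rw [setIntegral_sdiff hA hG hAS, measureReal_sdiff hAS hA hS, ha] at hdiff
  rw [abs_sub_comm]
  convert hdiff using 2
  ring

end Averages

lemma abs_setIntegral_comp_homothety_sub_le {m : ℕ} {c : EuclideanSpace ℝ (Fin m)} {r a B : ℝ}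
    {S T : Set (EuclideanSpace ℝ (Fin m))} {G : EuclideanSpace ℝ (Fin m) → ℝ} (hr : 0 < r)
    (hT : MeasurableSet T) (hTS : MapsTo (AffineMap.homothety c r) T S) (hS : volume S ≠ ⊤)
    (hG : IntegrableOn G S) (h : ∀ y ∈ S, |G y - a| ≤ B)
    (ha : ∫ y in S, G y = a * volume.real S) :
    |(∫ z in T, G (AffineMap.homothety c r z)) - a * volume.real T|
      ≤ B * (volume.real S / r ^ m - volume.real T) := by
  have hrm : 0 < r ^ m := pow_pos hr m
  have himage : MeasurableSet (AffineMap.homothety c r '' T) :=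
    hT.image_of_continuousOn_injOn (AffineMap.homothety_continuous c r).continuousOn
      (injective_homothety c hr.ne').injOn
  have hsub := abs_setIntegral_sub_mul_le_of_subset himage hTS.image_subset hS hG h ha
  rw [setIntegral_image_homothety c T hr hT, Measure.real, Measure.real,
    toReal_volume_image_homothety c T hr.le] at hsub
  refine le_of_mul_le_mul_left ?_ hrm
  calc r ^ m * |(∫ z in T, G (AffineMap.homothety c r z)) - a * volume.real T|
      = |(r ^ m * ∫ z in T, G (AffineMap.homothety c r z)) - a * (r ^ m * volume.real T)| := by
        rw [mul_left_comm a, ← mul_sub, abs_mul, abs_of_pos hrm]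
    _ ≤ B * (volume.real S - r ^ m * volume.real T) := hsub
    _ = r ^ m * (B * (volume.real S / r ^ m - volume.real T)) := by
        field_simp

section ubarFn

variable {m : ℕ} {ε : ℝ} {Ω : Set (EuclideanSpace ℝ (Fin (m + 1)))}
  {f g : EuclideanSpace ℝ (Fin (m + 1)) → ℝ} {x c B : ℝ}

namespace IsThinConvexDomain

lemma abs_ubarFn_sub_le (hΩ : IsThinConvexDomain ε Ω) (hf : IsBoundedContinuousOn f Ω)
    (hx : x ∈ Ioo (0 : ℝ) 1) (h : ∀ y ∈ cross Ω x, |f (mkPt m x y) - c| ≤ B) :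
    |ubarFn Ω f x - c| ≤ B := by
  have hω := hΩ.ωvol_pos hx
  rw [ubarFn, div_sub' hω.ne', abs_div, abs_of_pos hω, div_le_iff₀ hω, mul_comm (ωvol Ω x)]
  exact abs_setIntegral_sub_mul_le (hΩ.volume_cross_ne_top x) (hΩ.integrableOn_cross hf x) h

lemma ubarFn_add_const_mul (hΩ : IsThinConvexDomain ε Ω) (hf : IsBoundedContinuousOn f Ω)
    (hg : IsBoundedContinuousOn g Ω) (t x : ℝ) :
    ubarFn Ω (fun p => f p + t * g p) x = ubarFn Ω f x + t * ubarFn Ω g x := by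
  simp only [ubarFn]
  rw [integral_add (hΩ.integrableOn_cross hf x) ((hΩ.integrableOn_cross hg x).const_mul t),
    integral_const_mul, add_div, mul_div_assoc]

lemma continuousOn_ubarFn (hΩ : IsThinConvexDomain ε Ω) (hf : IsBoundedContinuousOn f Ω) :
    ContinuousOn (ubarFn Ω f) (Ioo 0 1) :=
  (hΩ.continuousOn_sliceIntegral hf).div hΩ.continuousOn_ωvol fun _ hx => (hΩ.ωvol_pos hx).ne'

lemma norm_sub_le_of_mem_cross (hΩ : IsThinConvexDomain ε Ω) {x x' : ℝ}
    {w z : EuclideanSpace ℝ (Fin m)} (hw : w ∈ cross Ω x) (hz : z ∈ cross Ω x') :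
    ‖z - w‖ ≤ 2 * ε := by
  have hw' := mem_ball_zero_iff.1 (hΩ.cross_subset_ball x hw)
  have hz' := mem_ball_zero_iff.1 (hΩ.cross_subset_ball x' hz)
  linarith [norm_sub_le z w]

lemma eps_pos (hΩ : IsThinConvexDomain ε Ω) : 0 < ε :=
  let ⟨_, hy⟩ := hΩ.nonempty_cross (1 / 2) (by norm_num)
  Metric.pos_of_mem_ball (hΩ.cross_subset_ball _ hy)

end IsThinConvexDomain

end ubarFn

section MeanValue

variable {m : ℕ} {Ω : Set (EuclideanSpace ℝ (Fin (m + 1)))}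
  {u : EuclideanSpace ℝ (Fin (m + 1)) → ℝ}

lemma abs_inner_mkPt_sub_mul_le (g : EuclideanSpace ℝ (Fin (m + 1))) (x : ℝ)
    (y : EuclideanSpace ℝ (Fin m)) : |⟪g, mkPt m x y⟫ - x * g 0| ≤ ‖g‖ * ‖y‖ := by
  have hsplit : mkPt m x y = x • EuclideanSpace.single 0 1 + mkPt m 0 y := by
    ext i
    cases i using Fin.cases <;> simp [mkPt_apply_zero, mkPt_apply_succ]
  have hnorm : ‖mkPt m 0 y‖ ≤ ‖y‖ := by simpa using norm_mkPt_le 0 y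
  rw [hsplit, inner_add_right, inner_smul_right, EuclideanSpace.inner_single_right, one_mul,
    conj_trivial, add_sub_cancel_left]
  exact (abs_real_inner_le_norm _ _).trans (by gcongr)

lemma exists_mem_segment_abs_sub_sub_mul_le (hΩ : IsOpen Ω) (hconv : Convex ℝ Ω)
    (hu : ContDiffOn ℝ 1 u (closure Ω)) {x x' : ℝ} {w z : EuclideanSpace ℝ (Fin m)}
    (hw : w ∈ cross Ω x) (hz : z ∈ cross Ω x') :
    ∃ ξ ∈ segment ℝ (mkPt m x w) (mkPt m x' z), ξ ∈ Ω ∧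
      |u (mkPt m x' z) - u (mkPt m x w) - (x' - x) * gradient u ξ 0|
        ≤ ‖gradient u ξ‖ * ‖z - w‖ := by
  obtain ⟨ξ, hξ, heq⟩ := domain_mvt
    (fun p hp => (hasGradientAt_of_contDiffOn_closure hΩ hu hp).hasFDerivAt.hasFDerivWithinAt)
    hconv hw hz
  refine ⟨ξ, hξ, hconv.segment_subset hw hz hξ, ?_⟩
  rw [heq, mkPt_sub_mkPt, InnerProductSpace.toDual_apply_apply]
  exact abs_inner_mkPt_sub_mul_le _ _ _

lemma apply_zero_mem_segment {p q ξ : EuclideanSpace ℝ (Fin (m + 1))} (h : ξ ∈ segment ℝ p q) :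
    ξ 0 ∈ segment ℝ (p 0) (q 0) := by
  obtain ⟨a, b, ha, hb, hab, rfl⟩ := h
  exact ⟨a, b, ha, hb, hab, rfl⟩

end MeanValue

/-! ### The derivative of the average and the average of the derivative -/

section ConeVolumeRatio

variable {m : ℕ} {ω : ℝ → ℝ} {x h : ℝ}

/-- The contraction with ratio `r = (x/2) / (x/2 + h)` centred at a point of the cross-section over
`x/2` maps the cross-section over `x + h` into the one over `x`; this is a bound for
`ω(x) / (r^m ω(x+h))`, the factor by which the volume of the target exceeds that of the image. -/
def coneVolumeRatio (m : ℕ) (x h : ℝ) : ℝ :=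
  ((x / 2 + h) / (x / 2) * ((1 - x) / (1 - x - h))) ^ m

lemma coneVolumeRatio_zero (hx : x ∈ Ioo (0 : ℝ) 1) : coneVolumeRatio m x 0 = 1 := by
  have hx1 : 1 - x ≠ 0 := (sub_pos.2 hx.2).ne'
  simp [coneVolumeRatio, hx.1.ne', hx1]

lemma hasDerivAt_coneVolumeRatio_zero (hx : x ∈ Ioo (0 : ℝ) 1) :
    HasDerivAt (coneVolumeRatio m x) (m * (2 / x + 1 / (1 - x))) 0 := by
  have hx0 : x ≠ 0 := hx.1.ne'
  have hx1 : 1 - x ≠ 0 := (sub_pos.2 hx.2).ne'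
  have hleft : HasDerivAt (fun h : ℝ => (x / 2 + h) / (x / 2)) (1 / (x / 2)) 0 :=
    ((hasDerivAt_id 0).const_add (x / 2)).div_const (x / 2)
  have hright := (hasDerivAt_const (0 : ℝ) (1 - x)).div ((hasDerivAt_id 0).const_sub (1 - x))
    (by simpa using hx1)
  refine ((hleft.mul hright).pow m).congr_deriv ?_
  simp [hx0, hx1]
  field_simp
  simp

lemma IsConeWeight.div_pow_le_coneVolumeRatio_mul (hω : IsConeWeight m ω) (hx : 0 < x)
    (hh : 0 ≤ h) (hxh : x + h < 1) :
    ω x / (x / 2 / (x / 2 + h)) ^ m ≤ coneVolumeRatio m x h * ω (x + h) := by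
  have hcone := hω.mul_one_sub_pow_le x (x + h) hx (by linarith) hxh
  have hpos : 0 < 1 - x - h := by linarith
  rw [← sub_sub] at hcone
  rw [coneVolumeRatio, mul_pow, div_pow (1 - x), div_eq_mul_inv, ← inv_pow, inv_div, mul_assoc,
    mul_comm (ω x)]
  gcongr
  rwa [div_mul_eq_mul_div, le_div_iff₀ (pow_pos hpos m), mul_comm (_ ^ m) (ω (x + h))]

end ConeVolumeRatio

/-- `u` is `C¹` up to the boundary of `Ω`, and its gradient at `(x, y)` is bounded by `K` times the
distance from `x` to the ends of `(0,1)`, down to the scale `ε`. -/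
structure HasThinGradientBound {m : ℕ} (ε K : ℝ) (Ω : Set (EuclideanSpace ℝ (Fin (m + 1))))
    (u : EuclideanSpace ℝ (Fin (m + 1)) → ℝ) : Prop where
  contDiffOn : ContDiffOn ℝ 1 u (closure Ω)
  norm_gradient_le : ∀ p ∈ Ω, ‖gradient u p‖ ≤ K * max (min (p 0) (1 - p 0)) ε

namespace HasThinGradientBound

variable {m : ℕ} {ε K : ℝ} {Ω : Set (EuclideanSpace ℝ (Fin (m + 1)))}
  {u : EuclideanSpace ℝ (Fin (m + 1)) → ℝ}

lemma nonneg (hu : HasThinGradientBound ε K Ω u) (hΩ : IsThinConvexDomain ε Ω) : 0 ≤ K :=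
  let ⟨p, hp⟩ := hΩ.nonempty
  nonneg_of_mul_nonneg_left ((norm_nonneg _).trans (hu.norm_gradient_le p hp))
    (lt_max_of_lt_right hΩ.eps_pos)

lemma norm_gradient_le_const (hu : HasThinGradientBound ε K Ω u) (hΩ : IsThinConvexDomain ε Ω)
    (hε : ε ≤ 1) {p : EuclideanSpace ℝ (Fin (m + 1))} (hp : p ∈ Ω) : ‖gradient u p‖ ≤ K := by
  refine (hu.norm_gradient_le p hp).trans (mul_le_of_le_one_right (hu.nonneg hΩ) ?_)
  exact max_le ((min_le_left _ _).trans (hΩ.apply_zero_mem hp).2.le) hε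

lemma abs_gradient_zero_le (hu : HasThinGradientBound ε K Ω u) (hΩ : IsThinConvexDomain ε Ω)
    (hε : ε ≤ 1) {p : EuclideanSpace ℝ (Fin (m + 1))} (hp : p ∈ Ω) : |gradient u p 0| ≤ K :=
  (PiLp.norm_apply_le (gradient u p) 0).trans (hu.norm_gradient_le_const hΩ hε hp)

lemma abs_ubarFn_gradient_le (hu : HasThinGradientBound ε K Ω u) (hΩ : IsThinConvexDomain ε Ω)
    (hε : ε ≤ 1) {x : ℝ} (hx : x ∈ Ioo (0 : ℝ) 1) :
    |ubarFn Ω (fun p => gradient u p 0) x| ≤ K := by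
  rw [← sub_zero (ubarFn _ _ _)]
  refine hΩ.abs_ubarFn_sub_le (hΩ.isBoundedContinuousOn_gradient_zero hu.contDiffOn) hx
    fun y hy => ?_
  rw [sub_zero]
  exact hu.abs_gradient_zero_le hΩ hε hy

lemma abs_ubarFn_sub_ubarFn_le (hu : HasThinGradientBound ε K Ω u) (hΩ : IsThinConvexDomain ε Ω)
    (hε : ε ≤ 1) {x x' : ℝ} (hx : x ∈ Ioo (0 : ℝ) 1) (hx' : x' ∈ Ioo (0 : ℝ) 1)
    (hxx' : |x - x'| ≤ ε) : |ubarFn Ω u x - ubarFn Ω u x'| ≤ 3 * (K * ε) := by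
  have hbc := hΩ.isBoundedContinuousOn hu.contDiffOn
  have hK := hu.nonneg hΩ
  refine hΩ.abs_ubarFn_sub_le hbc hx fun y hy => ?_
  rw [abs_sub_comm]
  refine hΩ.abs_ubarFn_sub_le hbc hx' fun z hz => ?_
  obtain ⟨ξ, -, hξ, hmv⟩ :=
    exists_mem_segment_abs_sub_sub_mul_le hΩ.isOpen hΩ.convex hu.contDiffOn hy hz
  have hvert : ‖gradient u ξ‖ * ‖z - y‖ ≤ K * (2 * ε) := by
    gcongr
    exacts [hu.norm_gradient_le_const hΩ hε hξ, hΩ.norm_sub_le_of_mem_cross hy hz]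
  have hhor : |(x' - x) * gradient u ξ 0| ≤ ε * K := by
    rw [abs_mul, abs_sub_comm]
    gcongr
    exacts [hΩ.eps_pos.le, hu.abs_gradient_zero_le hΩ hε hξ]
  calc |u (mkPt m x' z) - u (mkPt m x y)|
      = |(u (mkPt m x' z) - u (mkPt m x y) - (x' - x) * gradient u ξ 0)
          + (x' - x) * gradient u ξ 0| := by rw [sub_add_cancel]
    _ ≤ K * (2 * ε) + ε * K := (abs_add_le _ _).trans (add_le_add (hmv.trans hvert) hhor)
    _ = 3 * (K * ε) := by ring

lemma abs_firstOrder_sub_firstOrder_le (hu : HasThinGradientBound ε K Ω u)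
    (hΩ : IsThinConvexDomain ε Ω) {x h : ℝ} (hx : x ∈ Icc ε (1 - ε)) (hh : 0 ≤ h)
    {w w' : EuclideanSpace ℝ (Fin m)} (hw : w ∈ cross Ω x) (hw' : w' ∈ cross Ω x) :
    |(u (mkPt m x w') + h * gradient u (mkPt m x w') 0)
      - (u (mkPt m x w) + h * gradient u (mkPt m x w) 0)|
      ≤ 2 * (K * ε) * min x (1 - x) + 2 * h * K := by
  obtain ⟨ξ, hseg, hξ, hmv⟩ :=
    exists_mem_segment_abs_sub_sub_mul_le hΩ.isOpen hΩ.convex hu.contDiffOn hw hw'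
  have hξ0 : ξ 0 = x := by simpa [mkPt_apply_zero] using apply_zero_mem_segment hseg
  have hgrad := hu.norm_gradient_le ξ hξ
  rw [hξ0, max_eq_left (le_min hx.1 (by linarith [hx.2]))] at hgrad
  have hvert : ‖gradient u ξ‖ * ‖w' - w‖ ≤ K * min x (1 - x) * (2 * ε) := by
    have hpos := (norm_nonneg _).trans hgrad
    gcongr
    exact hΩ.norm_sub_le_of_mem_cross hw hw'
  have hε1 : ε ≤ 1 := by linarith [hx.1, hx.2]
  have hhor : |h * (gradient u (mkPt m x w') 0 - gradient u (mkPt m x w) 0)| ≤ h * (K + K) := by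
    rw [abs_mul, abs_of_nonneg hh]
    gcongr
    exact (abs_sub _ _).trans
      (add_le_add (hu.abs_gradient_zero_le hΩ hε1 hw') (hu.abs_gradient_zero_le hΩ hε1 hw))
  rw [sub_self, zero_mul, sub_zero] at hmv
  calc |(u (mkPt m x w') + h * gradient u (mkPt m x w') 0)
        - (u (mkPt m x w) + h * gradient u (mkPt m x w) 0)|
      = |(u (mkPt m x w') - u (mkPt m x w))
          + h * (gradient u (mkPt m x w') 0 - gradient u (mkPt m x w) 0)| := by ring_nf
    _ ≤ K * min x (1 - x) * (2 * ε) + h * (K + K) :=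
        (abs_add_le _ _).trans (add_le_add (hmv.trans hvert) hhor)
    _ = 2 * (K * ε) * min x (1 - x) + 2 * h * K := by ring

lemma abs_sub_firstOrder_le (hu : HasThinGradientBound ε K Ω u) (hΩ : IsThinConvexDomain ε Ω)
    {x h η δ : ℝ} (hx : ε ≤ x) (hh : 0 < h) (hhx : h ≤ x)
    (hδ : ∀ p ∈ Ω, ∀ q ∈ Ω, ‖p - q‖ < δ → |gradient u p 0 - gradient u q 0| ≤ η)
    (hhδ : 5 * h < δ) {w z : EuclideanSpace ℝ (Fin m)} (hw : w ∈ cross Ω x)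
    (hz : z ∈ cross Ω (x + h)) (hzw : ‖z - w‖ ≤ 4 * ε * h / x) :
    |u (mkPt m (x + h) z) - (u (mkPt m x w) + h * gradient u (mkPt m x w) 0)|
      ≤ h * η + 8 * (K * ε) * h := by
  have hε := hΩ.eps_pos
  have hK := hu.nonneg hΩ
  have hx0 : 0 < x := hε.trans_le hx
  obtain ⟨ξ, hseg, hξ, hmv⟩ :=
    exists_mem_segment_abs_sub_sub_mul_le hΩ.isOpen hΩ.convex hu.contDiffOn hw hz
  rw [add_sub_cancel_left] at hmv
  have hzw4 : ‖z - w‖ ≤ 4 * h := by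
    refine hzw.trans ((div_le_iff₀ hx0).2 ?_)
    nlinarith
  have hclose : ‖ξ - mkPt m x w‖ < δ := by
    calc ‖ξ - mkPt m x w‖ ≤ ‖mkPt m (x + h) z - mkPt m x w‖ := norm_sub_le_of_mem_segment hseg
      _ ≤ |x + h - x| + ‖z - w‖ := by rw [mkPt_sub_mkPt]; exact norm_mkPt_le _ _
      _ ≤ h + 4 * h := by rw [add_sub_cancel_left, abs_of_pos hh]; gcongr
      _ < δ := by linarith
  have hξ0 : ξ 0 ∈ Icc x (x + h) := by
    rw [← segment_eq_Icc (by linarith)]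
    simpa only [mkPt_apply_zero] using apply_zero_mem_segment hseg
  have hgrad : ‖gradient u ξ‖ ≤ K * (2 * x) := by
    refine (hu.norm_gradient_le ξ hξ).trans (mul_le_mul_of_nonneg_left ?_ hK)
    exact max_le ((min_le_left _ _).trans (by linarith [hξ0.2])) (by linarith)
  have hvert : ‖gradient u ξ‖ * ‖z - w‖ ≤ 8 * (K * ε) * h := by
    calc ‖gradient u ξ‖ * ‖z - w‖ ≤ K * (2 * x) * (4 * ε * h / x) := by gcongr
      _ = 8 * (K * ε) * h := by field_simp; ring
  have hhor : |h * (gradient u ξ 0 - gradient u (mkPt m x w) 0)| ≤ h * η := by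
    rw [abs_mul, abs_of_pos hh]
    gcongr
    exact hδ ξ hξ _ hw hclose
  calc |u (mkPt m (x + h) z) - (u (mkPt m x w) + h * gradient u (mkPt m x w) 0)|
      = |h * (gradient u ξ 0 - gradient u (mkPt m x w) 0)
          + (u (mkPt m (x + h) z) - u (mkPt m x w) - h * gradient u ξ 0)| := by ring_nf
    _ ≤ h * η + 8 * (K * ε) * h :=
        (abs_add_le _ _).trans (add_le_add hhor (hmv.trans hvert))

end HasThinGradientBound

lemma abs_le_abs_add_mul_of_eventually_abs_sub_le {F : ℝ → ℝ} {a b E : ℝ}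
    (hF : ContinuousOn F (Icc a b))
    (h : ∀ x ∈ Ico a b, ∀ η > 0, ∀ᶠ t in 𝓝[>] x, |F t - F x| ≤ (E + η) * (t - x)) :
    ∀ x ∈ Icc a b, |F x| ≤ |F a| + E * (x - a) := by
  refine image_le_of_liminf_slope_right_le_deriv_boundary (B' := fun _ => E) hF.abs (by simp)
    (by fun_prop) (fun x _ => ?_) fun x hx r hr => Eventually.frequently ?_
  · simpa using ((((hasDerivAt_id x).sub_const a).const_mul E).const_add |F a|).hasDerivWithinAt
  · filter_upwards [h x hx ((r - E) / 2) (by linarith), self_mem_nhdsWithin] with t ht hxt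
    have hpos : 0 < t - x := sub_pos.2 hxt
    rw [slope_def_field, div_lt_iff₀ hpos]
    calc |F t| - |F x| ≤ (E + (r - E) / 2) * (t - x) := (abs_sub_abs_le_abs_sub _ _).trans ht
      _ < r * (t - x) := by gcongr; linarith

lemma IsThinConvexDomain.norm_sub_homothety_le {m : ℕ} {ε x x₀ x' h : ℝ}
    {Ω : Set (EuclideanSpace ℝ (Fin (m + 1)))} (hΩ : IsThinConvexDomain ε Ω) (hx : 0 < x)
    (hh : 0 ≤ h) {y₀ z : EuclideanSpace ℝ (Fin m)} (hy₀ : y₀ ∈ cross Ω x₀)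
    (hz : z ∈ cross Ω x') :
    ‖z - AffineMap.homothety y₀ (x / 2 / (x / 2 + h)) z‖ ≤ 4 * ε * h / x := by
  have hsub : z - AffineMap.homothety y₀ (x / 2 / (x / 2 + h)) z
      = (h / (x / 2 + h)) • (z - y₀) := by
    have hratio : x / 2 / (x / 2 + h) = 1 - h / (x / 2 + h) := by field_simp; ring
    rw [homothety_eq_smul_add_smul, hratio]
    module
  rw [hsub, norm_smul, Real.norm_of_nonneg (by positivity)]
  calc h / (x / 2 + h) * ‖z - y₀‖ ≤ h / (x / 2) * (2 * ε) := by
        gcongr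
        exacts [le_add_of_nonneg_right hh, hΩ.norm_sub_le_of_mem_cross hy₀ hz]
    _ = 4 * ε * h / x := by field_simp; ring

namespace HasThinGradientBound

variable {m : ℕ} {ε K : ℝ} {Ω : Set (EuclideanSpace ℝ (Fin (m + 1)))}
  {u : EuclideanSpace ℝ (Fin (m + 1)) → ℝ}

lemma isBoundedContinuousOn_firstOrder (hu : HasThinGradientBound ε K Ω u)
    (hΩ : IsThinConvexDomain ε Ω) (h : ℝ) :
    IsBoundedContinuousOn (fun p => u p + h * gradient u p 0) Ω :=
  (hΩ.isBoundedContinuousOn hu.contDiffOn).add_const_mul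
    (hΩ.isBoundedContinuousOn_gradient_zero hu.contDiffOn) h

lemma abs_setIntegral_comp_homothety_firstOrder_sub_le (hu : HasThinGradientBound ε K Ω u)
    (hΩ : IsThinConvexDomain ε Ω) {x h : ℝ} (hx : x ∈ Icc ε (1 - ε)) (hh : 0 ≤ h)
    (hxh : x + h < 1) {y₀ : EuclideanSpace ℝ (Fin m)}
    (hmaps : MapsTo (AffineMap.homothety y₀ (x / 2 / (x / 2 + h))) (cross Ω (x + h))
      (cross Ω x)) :
    |(∫ z in cross Ω (x + h),
        (fun p => u p + h * gradient u p 0)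
          (mkPt m x (AffineMap.homothety y₀ (x / 2 / (x / 2 + h)) z)))
      - ubarFn Ω (fun p => u p + h * gradient u p 0) x * ωvol Ω (x + h)|
      ≤ (2 * (K * ε) * min x (1 - x) + 2 * h * K) * (coneVolumeRatio m x h - 1)
          * ωvol Ω (x + h) := by
  have hε := hΩ.eps_pos
  have hx01 : x ∈ Ioo (0 : ℝ) 1 := ⟨hε.trans_le hx.1, by linarith [hx.2]⟩
  have hK := hu.nonneg hΩ
  have hmin : 0 ≤ min x (1 - x) := le_min hx01.1.le (sub_nonneg.2 hx01.2.le)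
  have hf := hu.isBoundedContinuousOn_firstOrder hΩ h
  have hosc : ∀ y ∈ cross Ω x,
      |(u (mkPt m x y) + h * gradient u (mkPt m x y) 0)
        - ubarFn Ω (fun p => u p + h * gradient u p 0) x|
        ≤ 2 * (K * ε) * min x (1 - x) + 2 * h * K := fun y hy => by
    rw [abs_sub_comm]
    exact hΩ.abs_ubarFn_sub_le hf hx01 fun w hw =>
      hu.abs_firstOrder_sub_firstOrder_le hΩ hx hh hy hw
  refine (abs_setIntegral_comp_homothety_sub_le (by have := hx01.1; positivity)
    (isOpen_cross hΩ.isOpen (x + h)).measurableSet hmaps (hΩ.volume_cross_ne_top x)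
    (hΩ.integrableOn_cross hf x) hosc
    (div_mul_cancel₀ _ (hΩ.ωvol_pos hx01).ne').symm).trans ?_
  rw [mul_assoc _ (_ - 1), sub_one_mul]
  gcongr
  exacts [hΩ.isConeWeight.div_pow_le_coneVolumeRatio_mul hx01.1 hh hxh, le_rfl]

lemma abs_ubarFn_add_sub_sub_mul_le (hu : HasThinGradientBound ε K Ω u)
    (hΩ : IsThinConvexDomain ε Ω) {x h η δ : ℝ} (hx : x ∈ Icc ε (1 - ε)) (hh : 0 < h)
    (hhx : h ≤ x) (hxh : x + h < 1)
    (hδ : ∀ p ∈ Ω, ∀ q ∈ Ω, ‖p - q‖ < δ → |gradient u p 0 - gradient u q 0| ≤ η)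
    (hhδ : 5 * h < δ) :
    |ubarFn Ω u (x + h) - ubarFn Ω u x - h * ubarFn Ω (fun p => gradient u p 0) x|
      ≤ h * η + 8 * (K * ε) * h
        + (2 * (K * ε) * min x (1 - x) + 2 * h * K) * (coneVolumeRatio m x h - 1) := by
  have hx0 : 0 < x := hΩ.eps_pos.trans_le hx.1
  have hxh' : x + h ∈ Ioo (0 : ℝ) 1 := ⟨by positivity, hxh⟩
  have hω := hΩ.ωvol_pos hxh'
  have hbc := hΩ.isBoundedContinuousOn hu.contDiffOn
  obtain ⟨y₀, hy₀⟩ := hΩ.nonempty_cross (x / 2) ⟨by positivity, by linarith⟩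
  have hmaps : MapsTo (AffineMap.homothety y₀ (x / 2 / (x / 2 + h))) (cross Ω (x + h))
      (cross Ω x) :=
    mapsTo_homothety_cross hΩ.convex hy₀
      ⟨by positivity, div_le_one_of_le₀ (by linarith) (by positivity)⟩ (by field_simp; ring)
  have hmain := hu.abs_setIntegral_comp_homothety_firstOrder_sub_le hΩ hx hh.le hxh hmaps
  have hint : IntegrableOn (fun z => (fun p => u p + h * gradient u p 0)
      (mkPt m x (AffineMap.homothety y₀ (x / 2 / (x / 2 + h)) z))) (cross Ω (x + h)) :=
    ((hu.isBoundedContinuousOn_firstOrder hΩ h).comp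
      (g := fun z => mkPt m x (AffineMap.homothety y₀ (x / 2 / (x / 2 + h)) z))
      ((continuous_mkPt_right x).comp (AffineMap.homothety_continuous _ _)).continuousOn
      hmaps).integrableOn (isOpen_cross hΩ.isOpen _) (hΩ.volume_cross_ne_top _)
  have htaylor := abs_setIntegral_sub_mul_le (a := 0) (hΩ.volume_cross_ne_top (x + h))
    ((hΩ.integrableOn_cross hbc (x + h)).sub hint) fun z hz => by
      rw [sub_zero]
      exact hu.abs_sub_firstOrder_le hΩ hx.1 hh hhx hδ hhδ (hmaps hz) hz
        (hΩ.norm_sub_homothety_le hx0 hh.le hy₀ hz)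
  rw [Pi.sub_def, integral_sub (hΩ.integrableOn_cross hbc (x + h)) hint, zero_mul, sub_zero]
    at htaylor
  rw [sub_sub, ← hΩ.ubarFn_add_const_mul hbc
    (hΩ.isBoundedContinuousOn_gradient_zero hu.contDiffOn), ubarFn, div_sub' hω.ne', abs_div,
    abs_of_pos hω, div_le_iff₀ hω, add_mul, mul_comm (ωvol Ω (x + h))]
  exact (_root_.abs_sub_le _ _ _).trans (add_le_add htaylor hmain)

lemma exists_pos_forall_abs_gradient_sub_le (hu : HasThinGradientBound ε K Ω u)
    (hΩ : IsThinConvexDomain ε Ω) {η : ℝ} (hη : 0 < η) :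
    ∃ δ > 0, ∀ p ∈ Ω, ∀ q ∈ Ω, ‖p - q‖ < δ → |gradient u p 0 - gradient u q 0| ≤ η := by
  obtain ⟨δ, hδ, hclose⟩ := Metric.uniformContinuousOn_iff.1
    (uniformContinuousOn_gradient hΩ.isOpen hΩ.convex hΩ.isBounded hu.contDiffOn) η hη
  refine ⟨δ, hδ, fun p hp q hq hpq => ?_⟩
  have hdist := hclose p hp q hq (by rwa [dist_eq_norm])
  rw [dist_eq_norm] at hdist
  exact (PiLp.norm_apply_le (gradient u p - gradient u q) 0).trans hdist.le

end HasThinGradientBound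

lemma min_one_sub_mul_two_div_add_one_div_le {x : ℝ} (hx : x ∈ Ioo (0 : ℝ) 1) :
    min x (1 - x) * (2 / x + 1 / (1 - x)) ≤ 3 := by
  have hx1 : 0 < 1 - x := sub_pos.2 hx.2
  calc min x (1 - x) * (2 / x + 1 / (1 - x))
      = min x (1 - x) * (2 / x) + min x (1 - x) * (1 / (1 - x)) := mul_add _ _ _
    _ ≤ x * (2 / x) + (1 - x) * (1 / (1 - x)) := by
        have := hx.1
        gcongr
        exacts [min_le_left _ _, min_le_right _ _]
    _ = 3 := by
        rw [mul_div_cancel₀ _ hx.1.ne', mul_div_cancel₀ _ hx1.ne']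
        norm_num

lemma eventually_nhdsGT_le_mul_of_hasDerivAt {f : ℝ → ℝ} {f' c : ℝ} (hf : HasDerivAt f f' 0)
    (hf0 : f 0 = 0) (hc : f' < c) : ∀ᶠ h in 𝓝[>] 0, f h ≤ c * h := by
  filter_upwards [hf.tendsto_slope_zero_right.eventually_lt_const hc, self_mem_nhdsWithin]
    with h hslope hh
  rw [zero_add, hf0, sub_zero, smul_eq_mul, inv_mul_eq_div, div_lt_iff₀ hh] at hslope
  exact hslope.le

lemma eventually_coneVolumeRatio_sub_one_le {m : ℕ} {x A B η : ℝ} (hx : x ∈ Ioo (0 : ℝ) 1)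
    (hA : 0 ≤ A) (hη : 0 < η) :
    ∀ᶠ h in 𝓝[>] (0 : ℝ),
      (A * min x (1 - x) + B * h) * (coneVolumeRatio m x h - 1) ≤ (3 * m * A + η) * h := by
  have hderiv := (((hasDerivAt_id (0 : ℝ)).const_mul B).const_add (A * min x (1 - x))).mul
    ((hasDerivAt_coneVolumeRatio_zero (m := m) hx).sub_const 1)
  refine eventually_nhdsGT_le_mul_of_hasDerivAt hderiv (by simp [coneVolumeRatio_zero hx]) ?_
  have hbound : A * m * (min x (1 - x) * (2 / x + 1 / (1 - x))) ≤ A * m * 3 := by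
    gcongr
    exact min_one_sub_mul_two_div_add_one_div_le hx
  simp only [coneVolumeRatio_zero hx, sub_self, mul_zero, id, add_zero, zero_add]
  linarith

namespace HasThinGradientBound

variable {m : ℕ} {ε K : ℝ} {Ω : Set (EuclideanSpace ℝ (Fin (m + 1)))}
  {u : EuclideanSpace ℝ (Fin (m + 1)) → ℝ}

lemma eventually_abs_ubarFn_add_sub_sub_mul_le (hu : HasThinGradientBound ε K Ω u)
    (hΩ : IsThinConvexDomain ε Ω) {x η : ℝ} (hx : x ∈ Ico ε (1 - ε)) (hη : 0 < η) :
    ∀ᶠ h in 𝓝[>] (0 : ℝ),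
      |ubarFn Ω u (x + h) - ubarFn Ω u x - h * ubarFn Ω (fun p => gradient u p 0) x|
        ≤ ((8 + 6 * m) * (K * ε) + η) * h := by
  have hε := hΩ.eps_pos
  have hx01 : x ∈ Ioo (0 : ℝ) 1 := ⟨hε.trans_le hx.1, by linarith [hx.2]⟩
  obtain ⟨δ, hδ, hgrad⟩ := hu.exists_pos_forall_abs_gradient_sub_le hΩ (half_pos hη)
  have hsmall : 0 < min (min x (1 - x)) (δ / 5) :=
    lt_min (lt_min hx01.1 (sub_pos.2 hx01.2)) (by positivity)
  filter_upwards [Ioo_mem_nhdsGT hsmall,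
    eventually_coneVolumeRatio_sub_one_le (m := m) (B := 2 * K) hx01
      (mul_nonneg zero_le_two (mul_nonneg (hu.nonneg hΩ) hε.le)) (half_pos hη)] with h hh hcone
  obtain ⟨⟨hhx, hhx1⟩, hhδ⟩ := (lt_min_iff.1 hh.2).imp_left lt_min_iff.1
  have hstep := hu.abs_ubarFn_add_sub_sub_mul_le hΩ ⟨hx.1, hx.2.le⟩ hh.1 hhx.le (by linarith)
    hgrad (by linarith)
  rw [mul_right_comm 2 h K] at hstep
  linarith

end HasThinGradientBound

/-- The function that the cross-sectional average `ū`, with boundary value `L` at `0`, would be if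
averaging over the cross-sections commuted with differentiation in `x`. -/
def averagedPrimitive {m : ℕ} (Ω : Set (EuclideanSpace ℝ (Fin (m + 1))))
    (u : EuclideanSpace ℝ (Fin (m + 1)) → ℝ) (L x : ℝ) : ℝ :=
  L + ∫ s in 0..x, ubarFn Ω (fun p => gradient u p 0) s

@[simp]
lemma averagedPrimitive_zero {m : ℕ} (Ω : Set (EuclideanSpace ℝ (Fin (m + 1))))
    (u : EuclideanSpace ℝ (Fin (m + 1)) → ℝ) (L : ℝ) : averagedPrimitive Ω u L 0 = L := by
  simp [averagedPrimitive]

namespace HasThinGradientBound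

variable {m : ℕ} {ε K L : ℝ} {Ω : Set (EuclideanSpace ℝ (Fin (m + 1)))}
  {u : EuclideanSpace ℝ (Fin (m + 1)) → ℝ}

lemma continuousOn_averagedPrimitive (hu : HasThinGradientBound ε K Ω u)
    (hΩ : IsThinConvexDomain ε Ω) (hε : ε ≤ 1) (L : ℝ) :
    ContinuousOn (averagedPrimitive Ω u L) (Icc 0 1) :=
  continuousOn_const.add <| continuousOn_intervalIntegral_Icc
    (intervalIntegrable_of_continuousOn_Ioo_of_abs_le zero_le_one
      (hΩ.continuousOn_ubarFn (hΩ.isBoundedContinuousOn_gradient_zero hu.contDiffOn))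
      fun _ hx => hu.abs_ubarFn_gradient_le hΩ hε hx) (left_mem_Icc.2 zero_le_one)

lemma hasDerivAt_averagedPrimitive (hu : HasThinGradientBound ε K Ω u)
    (hΩ : IsThinConvexDomain ε Ω) (hε : ε ≤ 1) (L : ℝ) {x : ℝ} (hx : x ∈ Ioo (0 : ℝ) 1) :
    HasDerivAt (averagedPrimitive Ω u L) (ubarFn Ω (fun p => gradient u p 0) x) x := by
  have hcont := hΩ.continuousOn_ubarFn (hΩ.isBoundedContinuousOn_gradient_zero hu.contDiffOn)
  refine (hasDerivAt_intervalIntegral_of_continuousOn_Ioo hcont ?_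
    (left_mem_Icc.2 zero_le_one) hx).const_add L
  exact intervalIntegrable_of_continuousOn_Ioo_of_abs_le zero_le_one hcont
    fun _ hx => hu.abs_ubarFn_gradient_le hΩ hε hx

lemma abs_averagedPrimitive_sub_le (hu : HasThinGradientBound ε K Ω u)
    (hΩ : IsThinConvexDomain ε Ω) (hε : ε ≤ 1) (L : ℝ) {s t : ℝ} (hs : s ∈ Icc (0 : ℝ) 1)
    (ht : t ∈ Icc (0 : ℝ) 1) (hst : s ≤ t) (hts : t - s ≤ ε) :
    |averagedPrimitive Ω u L t - averagedPrimitive Ω u L s| ≤ K * ε :=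
  (abs_sub_le_mul_of_abs_hasDerivAt_le (hu.continuousOn_averagedPrimitive hΩ hε L)
    (fun _ hx => hu.hasDerivAt_averagedPrimitive hΩ hε L hx)
    (fun _ hx => hu.abs_ubarFn_gradient_le hΩ hε hx) hs ht hst).trans
    (mul_le_mul_of_nonneg_left hts (hu.nonneg hΩ))

lemma abs_ubarFn_sub_averagedPrimitive_le_of_le (hu : HasThinGradientBound ε K Ω u)
    (hΩ : IsThinConvexDomain ε Ω) (hε : ε < 1) (hL : Tendsto (ubarFn Ω u) (𝓝[>] 0) (𝓝 L)) {x : ℝ}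
    (hx : x ∈ Ioc 0 ε) : |ubarFn Ω u x - averagedPrimitive Ω u L x| ≤ 4 * (K * ε) := by
  have hx01 : x ∈ Ioo (0 : ℝ) 1 := ⟨hx.1, hx.2.trans_lt hε⟩
  have hbar : |ubarFn Ω u x - L| ≤ 3 * (K * ε) := by
    refine le_of_tendsto (tendsto_const_nhds.sub hL).abs ?_
    filter_upwards [Ioo_mem_nhdsGT hx.1] with t ht
    refine hu.abs_ubarFn_sub_ubarFn_le hΩ hε.le hx01 ⟨ht.1, ht.2.trans hx01.2⟩ ?_
    rw [abs_of_pos (sub_pos.2 ht.2)]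
    linarith [ht.1, hx.2]
  have hv := hu.abs_averagedPrimitive_sub_le hΩ hε.le L (left_mem_Icc.2 zero_le_one)
    (Ioo_subset_Icc_self hx01) hx.1.le (by linarith [hx.2])
  rw [averagedPrimitive_zero, abs_sub_comm] at hv
  linarith [_root_.abs_sub_le (ubarFn Ω u x) L (averagedPrimitive Ω u L x)]

lemma abs_ubarFn_sub_averagedPrimitive_le_of_mem_Icc (hu : HasThinGradientBound ε K Ω u)
    (hΩ : IsThinConvexDomain ε Ω) (hε : ε < 1) (hL : Tendsto (ubarFn Ω u) (𝓝[>] 0) (𝓝 L)) {x : ℝ}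
    (hx : x ∈ Icc ε (1 - ε)) :
    |ubarFn Ω u x - averagedPrimitive Ω u L x| ≤ (12 + 6 * m) * (K * ε) := by
  have hpos := hΩ.eps_pos
  have hsub : Icc ε (1 - ε) ⊆ Ioo 0 1 := fun y hy => ⟨hpos.trans_le hy.1, by linarith [hy.2]⟩
  have hcont : ContinuousOn (fun y => ubarFn Ω u y - averagedPrimitive Ω u L y)
      (Icc ε (1 - ε)) :=
    ((hΩ.continuousOn_ubarFn (hΩ.isBoundedContinuousOn hu.contDiffOn)).mono hsub).sub
      ((hu.continuousOn_averagedPrimitive hΩ hε.le L).mono (hsub.trans Ioo_subset_Icc_self))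
  have hdini : ∀ y ∈ Ico ε (1 - ε), ∀ η > 0, ∀ᶠ t in 𝓝[>] y,
      |(ubarFn Ω u t - averagedPrimitive Ω u L t) - (ubarFn Ω u y - averagedPrimitive Ω u L y)|
        ≤ ((8 + 6 * m) * (K * ε) + η) * (t - y) := by
    intro y hy η hη
    have hv := (hasDerivAt_iff_isLittleO_nhds_zero.1 (hu.hasDerivAt_averagedPrimitive hΩ hε.le L
      (hsub (Ico_subset_Icc_self hy)))).def (half_pos hη)
    rw [← add_zero y, ← map_add_left_nhdsGT, eventually_map, add_zero]
    filter_upwards [hu.eventually_abs_ubarFn_add_sub_sub_mul_le hΩ hy (half_pos hη),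
      hv.filter_mono nhdsWithin_le_nhds, self_mem_nhdsWithin] with h hbar hprim hh
    rw [Real.norm_eq_abs, Real.norm_of_nonneg (le_of_lt hh), smul_eq_mul] at hprim
    rw [add_sub_cancel_left]
    rw [abs_le] at hbar hprim ⊢
    constructor <;> linarith [hbar.1, hbar.2, hprim.1, hprim.2]
  have hleft := hu.abs_ubarFn_sub_averagedPrimitive_le_of_le hΩ hε hL ⟨hpos, le_rfl⟩
  have hK : 0 ≤ (8 + 6 * m) * (K * ε) :=
    mul_nonneg (by positivity) (mul_nonneg (hu.nonneg hΩ) hpos.le)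
  calc |ubarFn Ω u x - averagedPrimitive Ω u L x|
      ≤ |ubarFn Ω u ε - averagedPrimitive Ω u L ε| + (8 + 6 * m) * (K * ε) * (x - ε) :=
        abs_le_abs_add_mul_of_eventually_abs_sub_le hcont hdini x hx
    _ ≤ 4 * (K * ε) + (8 + 6 * m) * (K * ε) * 1 := by
        gcongr
        linarith [hx.2]
    _ = (12 + 6 * m) * (K * ε) := by ring

lemma abs_ubarFn_sub_averagedPrimitive_le (hu : HasThinGradientBound ε K Ω u)
    (hΩ : IsThinConvexDomain ε Ω) (hε : ε ≤ 1 / 2) (hL : Tendsto (ubarFn Ω u) (𝓝[>] 0) (𝓝 L))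
    {x : ℝ} (hx : x ∈ Ioo (0 : ℝ) 1) :
    |ubarFn Ω u x - averagedPrimitive Ω u L x| ≤ (16 + 6 * m) * (K * ε) := by
  have hpos := hΩ.eps_pos
  have hε1 : ε < 1 := by linarith
  have hK : 0 ≤ K * ε := mul_nonneg (hu.nonneg hΩ) hpos.le
  have hmK : 0 ≤ m * (K * ε) := mul_nonneg m.cast_nonneg hK
  rcases le_total x ε with hxε | hxε
  · linarith [hu.abs_ubarFn_sub_averagedPrimitive_le_of_le hΩ hε1 hL ⟨hx.1, hxε⟩]
  rcases le_total x (1 - ε) with hxε' | hxε'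
  · linarith [hu.abs_ubarFn_sub_averagedPrimitive_le_of_mem_Icc hΩ hε1 hL ⟨hxε, hxε'⟩]
  have hmem : 1 - ε ∈ Ioo (0 : ℝ) 1 := ⟨by linarith, by linarith⟩
  have hmid := hu.abs_ubarFn_sub_averagedPrimitive_le_of_mem_Icc hΩ hε1 hL
    ⟨by linarith, le_refl (1 - ε)⟩
  have hbar := hu.abs_ubarFn_sub_ubarFn_le hΩ hε1.le hx hmem
    (by rw [abs_of_nonneg (sub_nonneg.2 hxε')]; linarith [hx.2])
  have hv := hu.abs_averagedPrimitive_sub_le hΩ hε1.le L (Ioo_subset_Icc_self hmem)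
    (Ioo_subset_Icc_self hx) hxε' (by linarith [hx.2])
  rw [abs_le] at hmid hbar hv ⊢
  constructor <;> linarith [hmid.1, hmid.2, hbar.1, hbar.2, hv.1, hv.2]

end HasThinGradientBound

/-! ### The averaged eigenfunction as an approximate solution -/

section Averaged

variable {m : ℕ} {a ε lam C K L L₀ L₁ M : ℝ} {Ω : Set (EuclideanSpace ℝ (Fin (m + 1)))}
  {u : EuclideanSpace ℝ (Fin (m + 1)) → ℝ}

lemma IsThinConvexDomain.ωvol_mul_ubarFn (hΩ : IsThinConvexDomain ε Ω)
    (f : EuclideanSpace ℝ (Fin (m + 1)) → ℝ) (x : ℝ) :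
    ωvol Ω x * ubarFn Ω f x = sliceIntegral Ω f x := by
  by_cases hx : x ∈ Ioo (0 : ℝ) 1
  · exact mul_div_cancel₀ _ (hΩ.ωvol_pos hx).ne'
  · simp only [ωvol, sliceIntegral, hΩ.cross_eq_empty hx, measure_empty, ENNReal.toReal_zero,
      zero_mul, setIntegral_empty]

lemma HasThinGradientBound.averagedPrimitive_one_le (hu : HasThinGradientBound ε K Ω u)
    (hΩ : IsThinConvexDomain ε Ω) (hε : ε ≤ 1 / 2) (hL₀ : Tendsto (ubarFn Ω u) (𝓝[>] 0) (𝓝 L₀))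
    (hL₁ : Tendsto (ubarFn Ω u) (𝓝[<] 1) (𝓝 L₁)) :
    averagedPrimitive Ω u L₀ 1 ≤ L₁ + (16 + 6 * m) * (K * ε) := by
  have hcont : Tendsto (averagedPrimitive Ω u L₀) (𝓝[<] 1) (𝓝 (averagedPrimitive Ω u L₀ 1)) := by
    rw [← nhdsWithin_Ioo_eq_nhdsLT (zero_lt_one' ℝ)]
    exact ((hu.continuousOn_averagedPrimitive hΩ (by linarith) L₀) 1
      (right_mem_Icc.2 zero_le_one)).mono Ioo_subset_Icc_self
  refine le_of_tendsto_of_tendsto hcont (hL₁.add_const _) ?_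
  filter_upwards [Ioo_mem_nhdsLT (zero_lt_one' ℝ)] with x hx
  linarith [(abs_le.1 (hu.abs_ubarFn_sub_averagedPrimitive_le hΩ hε hL₀ hx)).1]

namespace IsFirstNeumannEigenfunction

lemma ubarFn_gradient_eq (h : IsFirstNeumannEigenfunction Ω lam u)
    (hΩ : IsThinConvexDomain ε Ω) {x : ℝ} (hx : x ∈ Ioo (0 : ℝ) 1) :
    ubarFn Ω (fun p => gradient u p 0) x
      = -weightedPrimitive (ωvol Ω) (fun s => lam * ubarFn Ω u s) x := by
  rw [weightedPrimitive_const_mul, weightedPrimitive]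
  simp only [hΩ.ωvol_mul_ubarFn]
  rw [← mul_div_assoc, ← neg_div, ← h.sliceIntegral_gradient_eq hΩ hx]
  rfl

lemma isFluxSolution_averagedPrimitive (h : IsFirstNeumannEigenfunction Ω lam u)
    (hΩ : IsThinConvexDomain ε Ω) (hu : HasThinGradientBound ε K Ω u) (hε : ε ≤ 1) (L : ℝ) :
    IsFluxSolution (ωvol Ω) 1 (averagedPrimitive Ω u L) (fun x => lam * ubarFn Ω u x) where
  continuousOn := hu.continuousOn_averagedPrimitive hΩ hε L
  continuousOn_rhs := continuousOn_const.mul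
    (hΩ.continuousOn_ubarFn (hΩ.isBoundedContinuousOn hu.contDiffOn))
  intervalIntegrable := by
    have hf := hΩ.isBoundedContinuousOn hu.contDiffOn
    simpa only [mul_left_comm _ lam, hΩ.ωvol_mul_ubarFn] using
      (intervalIntegrable_of_continuousOn_Ioo_of_abs_le zero_le_one
        (hΩ.continuousOn_sliceIntegral hf)
        (hΩ.exists_abs_sliceIntegral_le hf).choose_spec).const_mul lam
  hasDerivAt x hx := by
    rw [← h.ubarFn_gradient_eq hΩ hx]
    exact hu.hasDerivAt_averagedPrimitive hΩ hε L hx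

lemma isApproxNeumannSol (h : IsFirstNeumannEigenfunction Ω lam u)
    (hΩ : IsThinConvexDomain ε Ω) (hε : ε ≤ 1 / 2) (hM : 0 < M) (hbdd : ∀ p ∈ Ω, |u p| ≤ M)
    (hu : HasThinGradientBound ε (C * M) Ω u) (hL₀ : Tendsto (ubarFn Ω u) (𝓝[>] 0) (𝓝 L₀))
    (hL₁ : Tendsto (ubarFn Ω u) (𝓝[<] 1) (𝓝 L₁)) (ha₀ : a * M ≤ L₀) (ha₁ : L₁ ≤ -(2 * a * M))
    (ha : (16 + 6 * m) * C * ε ≤ a) :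
    IsApproxNeumannSol m a C ((16 + 6 * m) * C * ε) lam (ωvol Ω) (fun x => M⁻¹ * ubarFn Ω u x)
      (fun x => M⁻¹ * averagedPrimitive Ω u L₀ x) where
  weight := hΩ.isConeWeight
  pos := h.pos
  abs_le_one x hx := by
    have hx := hΩ.abs_ubarFn_sub_le (c := 0) (hΩ.isBoundedContinuousOn hu.contDiffOn) hx
      fun y hy => by simpa only [sub_zero] using hbdd _ hy
    rw [sub_zero] at hx
    rwa [abs_mul, abs_of_pos (inv_pos.2 hM), inv_mul_le_iff₀ hM, mul_one]
  integral_eq_zero := by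
    simp only [mul_left_comm _ M⁻¹, hΩ.ωvol_mul_ubarFn, intervalIntegral.integral_const_mul,
      h.integral_sliceIntegral_eq_zero hΩ, mul_zero]
  isFluxSolution := by
    simpa only [mul_left_comm lam] using
      (h.isFluxSolution_averagedPrimitive hΩ hu (by linarith) L₀).const_mul M⁻¹
  abs_deriv_le x hx := by
    have hx' := hu.abs_ubarFn_gradient_le hΩ (by linarith) hx
    rw [h.ubarFn_gradient_eq hΩ hx, abs_neg] at hx'
    simp only [mul_left_comm lam M⁻¹]
    rwa [weightedPrimitive_const_mul, abs_mul, abs_of_pos (inv_pos.2 hM), inv_mul_le_iff₀' hM]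
  abs_sub_le x hx := by
    rw [← mul_sub, abs_mul, abs_of_pos (inv_pos.2 hM), inv_mul_le_iff₀ hM]
    linarith [hu.abs_ubarFn_sub_averagedPrimitive_le hΩ hε hL₀ hx]
  le_left := by rwa [averagedPrimitive_zero, le_inv_mul_iff₀' hM]
  right_le := by
    rw [inv_mul_le_iff₀ hM]
    linarith [hu.averagedPrimitive_one_le hΩ hε hL₀ hL₁, mul_le_mul_of_nonneg_right ha hM.le]

end IsFirstNeumannEigenfunction

end Averaged

section SupInf

variable {X : Type*} {f : X → ℝ} {s : Set X} {C : ℝ}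

lemma abs_le_sSup_abs_image (hs : Bornology.IsBounded (f '' s)) {p : X} (hp : p ∈ s) :
    |f p| ≤ sSup ((fun q => |f q|) '' s) := by
  obtain ⟨B, hB⟩ := hs.exists_norm_le
  exact le_csSup ⟨B, forall_mem_image.2 fun q hq => hB _ (mem_image_of_mem f hq)⟩
    (mem_image_of_mem _ hp)

lemma sSup_image_nonneg_of_neg_sInf_le (hs : Bornology.IsBounded (f '' s)) (hC : 0 ≤ C)
    (h : -sInf (f '' s) ≤ C * sSup (f '' s)) : 0 ≤ sSup (f '' s) :=
  nonneg_of_mul_nonneg_right (a := 1 + C)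
    (by linarith [Real.sInf_le_sSup _ hs.bddBelow hs.bddAbove]) (by linarith)

lemma sSup_abs_image_le_of_neg_sInf_le (hs : Bornology.IsBounded (f '' s)) (hne : s.Nonempty)
    (hC : 0 ≤ C) (h : -sInf (f '' s) ≤ C * sSup (f '' s)) :
    sSup ((fun q => |f q|) '' s) ≤ max 1 C * sSup (f '' s) := by
  have hS := sSup_image_nonneg_of_neg_sInf_le hs hC h
  refine csSup_le (hne.image _) (forall_mem_image.2 fun p hp => abs_le'.2 ⟨?_, ?_⟩)
  · exact (le_csSup hs.bddAbove (mem_image_of_mem f hp)).trans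
      (le_mul_of_one_le_left hS (le_max_left _ _))
  · exact ((neg_le_neg (csInf_le hs.bddBelow (mem_image_of_mem f hp))).trans h).trans
      (mul_le_mul_of_nonneg_right (le_max_right _ _) hS)

end SupInf

lemma endpoint_bounds_of_le_sup_inf {c C S s M ε L₀ L₁ : ℝ} (hc : 0 ≤ c) (hS : 0 ≤ S)
    (hs : c * S ≤ -s) (hM : M ≤ max 1 C * S) (hε : C * ε ≤ 1 / 2) (hL₀ : (1 - C * ε) * S ≤ L₀)
    (hL₁ : L₁ ≤ (1 - C * ε) * s) :
    min 1 c / (4 * max 1 C) * M ≤ L₀ ∧ L₁ ≤ -(2 * (min 1 c / (4 * max 1 C)) * M) := by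
  have ha : min 1 c / (4 * max 1 C) * M ≤ min 1 c / 4 * S := by
    calc min 1 c / (4 * max 1 C) * M ≤ min 1 c / (4 * max 1 C) * (max 1 C * S) := by gcongr
      _ = min 1 c / 4 * S := by field_simp
  have h1 := mul_le_mul_of_nonneg_right (min_le_left 1 c) hS
  have h2 := mul_le_mul_of_nonneg_right (min_le_right 1 c) hS
  have hs0 : s ≤ 0 := by linarith [mul_nonneg hc hS]
  constructor
  · linarith [mul_le_mul_of_nonneg_right hε hS]
  · linarith [mul_le_mul_of_nonpos_right hε hs0]

theorem crosssection_average_close_to_ode_eigenfunction_general (m : ℕ) {c₀ C₀ : ℝ}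
    (hc₀ : 0 < c₀) (hC₀ : 0 < C₀) :
    ∃ C > (0 : ℝ), ∃ ε₀ > (0 : ℝ),
    ∀ {ε : ℝ} {Ω : Set (EuclideanSpace ℝ (Fin (m + 1)))} {u : EuclideanSpace ℝ (Fin (m + 1)) → ℝ}
      {lam μ L₀ L₁ : ℝ} {φ φd : ℝ → ℝ}, ε < ε₀ → IsThinConvexDomain ε Ω →
      IsFirstNeumannEigenfunction Ω lam u →
      HasThinGradientBound ε (C₀ * sSup ((fun q => |u q|) '' Ω)) Ω u →
      c₀ * sSup (u '' Ω) ≤ -sInf (u '' Ω) →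
      -sInf (u '' Ω) ≤ C₀ * sSup (u '' Ω) →
      Tendsto (ubarFn Ω u) (𝓝[>] 0) (𝓝 L₀) →
      (1 - C₀ * ε) * sSup (u '' Ω) ≤ L₀ →
      Tendsto (ubarFn Ω u) (𝓝[<] 1) (𝓝 L₁) →
      L₁ ≤ (1 - C₀ * ε) * sInf (u '' Ω) →
      NeumannSol (ωvol Ω) μ φ φd → 0 < μ →
      (∀ μ', 0 < μ' → IsNeumannEigenvalue (ωvol Ω) μ' → μ ≤ μ') →
      φ 0 = L₀ →
      ∀ x ∈ Ioo (0 : ℝ) 1,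
        |ubarFn Ω u x - φ x| ≤ C * ε * sSup ((fun q => |u q|) '' Ω) := by
  have ha : 0 < min 1 c₀ / (4 * max 1 C₀) := by positivity
  obtain ⟨C, hC, η₀, hη₀, hstab⟩ := exists_abs_sub_neumannSol_le m ha hC₀
  have hD : 0 < (16 + 6 * m) * C₀ := by positivity
  refine ⟨C * ((16 + 6 * m) * C₀), by positivity, min (min (1 / 2) ((1 / 2) / C₀))
    (min (min 1 c₀ / (4 * max 1 C₀) / ((16 + 6 * m) * C₀)) (η₀ / ((16 + 6 * m) * C₀))),
    by positivity, ?_⟩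
  intro ε Ω u lam μ L₀ L₁ φ φd hε hΩ h hu hinf hsup hL₀ hSL₀ hL₁ hL₁s hφ hμ hmin hφ0 x hx
  simp only [lt_min_iff, lt_div_iff₀' hC₀, lt_div_iff₀' hD] at hε
  obtain ⟨⟨hε2, hεC⟩, hεa, hεη⟩ := hε
  have hbdd := (hΩ.isBoundedContinuousOn hu.contDiffOn).isBounded_image
  obtain ⟨p, hp, hup⟩ := h.exists_ne_zero
  have hM := (abs_pos.2 hup).trans_le (abs_le_sSup_abs_image hbdd hp)
  obtain ⟨ha₀, ha₁⟩ := endpoint_bounds_of_le_sup_inf hc₀.le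
    (sSup_image_nonneg_of_neg_sInf_le hbdd hC₀.le hsup) hinf
    (sSup_abs_image_le_of_neg_sInf_le hbdd hΩ.nonempty hC₀.le hsup) hεC.le hSL₀ hL₁s
  have happrox := h.isApproxNeumannSol hΩ hε2.le hM (fun _ => abs_le_sSup_abs_image hbdd) hu
    hL₀ hL₁ ha₀ ha₁ hεa.le
  have hclose := hstab happrox hεη
    (hφ.le_of_forall_contDiff hΩ.isConeWeight hμ fun _ => h.mul_integral_ωvol_mul_sq_le hΩ)
    (hφ.const_mul (inv_ne_zero hM.ne')) hmin (by rw [hφ0, averagedPrimitive_zero]) x hx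
  rw [← mul_sub, abs_mul, abs_of_pos (inv_pos.2 hM), inv_mul_le_iff₀ hM] at hclose
  linarith

/-- The cross-sectional average `ū` of the first Neumann eigenfunction is
within `Cε·sup|u|` of the first eigenfunction `φ` of the ODE `-(ωφ')' = μωφ`, normalized so
that `φ(0) = lim_{x→0+} ū(x)`. -/
theorem crosssection_average_close_to_ode_eigenfunction
    (m : ℕ) (hm : 1 ≤ m) (c₀ C₀ : ℝ) (hc₀ : 0 < c₀) (hC₀ : 0 < C₀) :
    ∃ C > (0:ℝ), ∃ ε₀ > (0:ℝ),
    ∀ (ε : ℝ) (Ω : Set (EuclideanSpace ℝ (Fin (m+1))))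
      (u : EuclideanSpace ℝ (Fin (m+1)) → ℝ) (lam μ L0 L1 : ℝ) (φ φd : ℝ → ℝ),
      0 < ε → ε < ε₀ →
      IsOpen Ω → Convex ℝ Ω → Bornology.IsBounded Ω →
      -- smooth boundary
      (∃ F : EuclideanSpace ℝ (Fin (m+1)) → ℝ, ContDiff ℝ (⊤:ℕ∞) F ∧
        Ω = {p | F p < 0} ∧ frontier Ω = {p | F p = 0} ∧
        ∀ p ∈ frontier Ω, gradient F p ≠ 0) →
      -- Ω ⊆ (0,1) × B^{n-1}(ε)
      (∀ x y, mkPt m x y ∈ Ω →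
        x ∈ Ioo (0:ℝ) 1 ∧ y ∈ Metric.ball (0 : EuclideanSpace ℝ (Fin m)) ε) →
      -- nonempty cross-sections
      (∀ s ∈ Ioo (0:ℝ) 1, (cross Ω s).Nonempty) →
      -- u is a nonzero mean-zero smooth Neumann eigenfunction with eigenvalue lam
      ContDiffOn ℝ (⊤:ℕ∞) u (closure Ω) →
      (∃ p ∈ Ω, u p ≠ 0) →
      (∫ p in Ω, u p) = 0 →
      (∀ p ∈ Ω, lap u p = -(lam * u p)) →
      (∀ p ∈ frontier Ω, ∀ v, (∀ z ∈ Ω, ⟪v, z - p⟫ ≤ 0) → ⟪gradient u p, v⟫ = 0) →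
      0 < lam →
      -- lam is the smallest nonzero Neumann eigenvalue (variational
      -- characterization), attained at u
      lam = sInf {r | ∃ w : EuclideanSpace ℝ (Fin (m+1)) → ℝ,
        ContDiffOn ℝ (⊤:ℕ∞) w (closure Ω) ∧ (∃ p ∈ Ω, w p ≠ 0) ∧ (∫ p in Ω, w p) = 0 ∧
        r = (∫ p in Ω, ‖gradient w p‖ ^ 2) / (∫ p in Ω, (w p) ^ 2)} →
      lam = (∫ p in Ω, ‖gradient u p‖ ^ 2) / (∫ p in Ω, (u p) ^ 2) →
      -- facts from [CJK2009], assumed as hypotheses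
      (∀ p ∈ Ω, ‖gradient u p‖ ≤
        C₀ * max (min (p 0) (1 - p 0)) ε * sSup ((fun q => |u q|) '' Ω)) →
      c₀ * sSup (u '' Ω) ≤ -sInf (u '' Ω) →
      -sInf (u '' Ω) ≤ C₀ * sSup (u '' Ω) →
      Tendsto (ubarFn Ω u) (𝓝[>] 0) (𝓝 L0) →
      (1 - C₀ * ε) * sSup (u '' Ω) ≤ L0 →
      Tendsto (ubarFn Ω u) (𝓝[<] 1) (𝓝 L1) →
      L1 ≤ (1 - C₀ * ε) * sInf (u '' Ω) →
      -- φ is a first Neumann eigenfunction of the ODE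
      NeumannSol (ωvol Ω) μ φ φd →
      0 < μ →
      (∀ μ', 0 < μ' → IsNeumannEigenvalue (ωvol Ω) μ' → μ ≤ μ') →
      -- normalization φ(0) = lim_{x→0+} ū(x)
      φ 0 = L0 →
      ∀ x ∈ Ioo (0:ℝ) 1,
        |ubarFn Ω u x - φ x| ≤ C * ε * sSup ((fun q => |u q|) '' Ω) := by
  obtain ⟨C, hC, ε₀, hε₀, hclose⟩ :=
    crosssection_average_close_to_ode_eigenfunction_general m hc₀ hC₀
  refine ⟨C, hC, ε₀, hε₀, fun ε Ω u lam μ L0 L1 φ φd _ hε hopen hconv hbdd _ hmem hne hu _ hmean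
    _ _ hlam hinf hray hgrad hcS hCS hL0 hSL0 hL1 hL1s hφ hμ hmin hφ0 => ?_⟩
  exact hclose hε ⟨hopen, hconv, hbdd, hmem, hne⟩ ⟨hu, hmean, hlam, hinf, hray⟩
    ⟨hu.of_le (by exact_mod_cast le_top), fun p hp => (hgrad p hp).trans_eq (by ring)⟩
    hcS hCS hL0 hSL0 hL1 hL1s hφ hμ hmin hφ0
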